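/- Let d ≥ 2 be an integer, α ∈ (0,1), β > (2α−1)/(d−1), and set δ_* := min{1−α, (d−1)β+1−2α} > 0. Let b_L : (0,∞) → (0,∞) and b_N : (0,∞) → ℝ be bounded and differentiable with, as r → 0⁺: b_L(r)/r^{2α} → 1, b_N(r)/r^{2α} → β, b_L'(r)/r^{2α−1} → 2α, and b_N'(r)/r^{2α−1} → 2αβ. Then for every δ ∈ (0,δ_*) and every ε̄ > 0 there exist ε ∈ (0,ε̄), l > 0 and C > 0 with the following property. Let κ ∈ (0,1/2) and let f : (0,∞) × [0,∞) → ℝ be bounded and continuous, differentiable in its first (time) variable on (0,∞) × (0,∞), such that for every t > 0 the map r ↦ f(t,r) is twice continuously differentiable on [0,∞) with ∂_r f(t,0) = 0, and such that for all t > 0, r > 0: ∂_t f(t,r) = (1−κ) b_L(r) ∂_r² f(t,r) + (1−κ) ((d−1)/r) b_N(r) ∂_r f(t,r) + 2κ ( ∂_r² f(t,r) + ((d−1)/r) ∂_r f(t,r) ). Then for every t > 0: ∫₀^t ( sup_{0<r<l} |f(s,r) − f(s,0)| / r^{2−2α−δ} )^{1−ε} ds ≤ C (1+t) ( sup_{s>0,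 r≥0} |f(s,r)| )^{1−ε}. -/

import Mathlib

open MeasureTheory Set Filter
open scoped ENNReal


/-- Continuity of parametric interval integrals on sets. -/
theorem aux_parcont {X : Type*} [TopologicalSpace X] (S : Set X) (a b : ℝ) (hab : a ≤ b)
    (G : X → ℝ → ℝ)
    (hG : ContinuousOn (fun p : X × ℝ => G p.1 p.2) (S ×ˢ Icc a b)) :
    ContinuousOn (fun x => ∫ s in a..b, G x s) S := by
  rw [continuousOn_iff_continuous_domRestrict]
  have h1 : Continuous (Function.uncurry
      (fun (x : S) (s : ℝ) => G x.1 ((projIcc a b hab s : Icc a b) : ℝ))) := by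
    have : Continuous (fun q : S × ℝ => ((q.1.1, ((projIcc a b hab q.2 : Icc a b) : ℝ)) : X × ℝ)) := by
      fun_prop
    exact hG.comp_continuous this (fun q => ⟨q.1.2, (projIcc a b hab q.2).2⟩)
  have h2 := intervalIntegral.continuous_parametric_intervalIntegral_of_continuous'
    (μ := volume) h1 a b
  convert h2 using 2 with x
  simp only [domRestrict_apply]
  apply intervalIntegral.integral_congr
  intro s hs
  rw [uIcc_of_le hab] at hs
  simp [projIcc_of_mem hab hs]

theorem aux_slice_r {H : ℝ → ℝ → ℝ} {S T : Set ℝ}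
    (hH : ContinuousOn (fun p : ℝ × ℝ => H p.1 p.2) (S ×ˢ T)) {t : ℝ} (ht : t ∈ S) :
    ContinuousOn (H t) T := by
  have : ContinuousOn (fun r : ℝ => ((t, r) : ℝ × ℝ)) T := by fun_prop
  exact hH.comp this (fun r hr => ⟨ht, hr⟩)

theorem aux_slice_t {H : ℝ → ℝ → ℝ} {S T : Set ℝ}
    (hH : ContinuousOn (fun p : ℝ × ℝ => H p.1 p.2) (S ×ˢ T)) {r : ℝ} (hr : r ∈ T) :
    ContinuousOn (fun t => H t r) S := by
  have : ContinuousOn (fun t : ℝ => ((t, r) : ℝ × ℝ)) S := by fun_prop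
  exact hH.comp this (fun t ht => ⟨ht, hr⟩)

theorem aux_cont_swap {H : ℝ → ℝ → ℝ} {S T : Set ℝ}
    (hH : ContinuousOn (fun p : ℝ × ℝ => H p.1 p.2) (S ×ˢ T)) :
    ContinuousOn (fun p : ℝ × ℝ => H p.2 p.1) (T ×ˢ S) := by
  have : ContinuousOn (fun p : ℝ × ℝ => ((p.2, p.1) : ℝ × ℝ)) (T ×ˢ S) := by fun_prop
  exact hH.comp this (fun p hp => ⟨hp.2, hp.1⟩)

theorem aux_swap {a b c d : ℝ} (hab : a ≤ b) (hcd : c ≤ d) (H : ℝ → ℝ → ℝ)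
    (hH : ContinuousOn (fun p : ℝ × ℝ => H p.1 p.2) (Icc a b ×ˢ Icc c d)) :
    ∫ t in a..b, ∫ r in c..d, H t r = ∫ r in c..d, ∫ t in a..b, H t r := by
  simp only [intervalIntegral.integral_of_le hab, intervalIntegral.integral_of_le hcd]
  apply MeasureTheory.integral_integral_swap
  rw [Measure.prod_restrict]
  have h1 : IntegrableOn (fun p : ℝ × ℝ => H p.1 p.2) (Icc a b ×ˢ Icc c d)
      ((volume : Measure ℝ).prod volume) :=
    hH.integrableOn_compact (isCompact_Icc.prod isCompact_Icc)
  exact h1.mono_set (prod_mono Ioc_subset_Icc_self Ioc_subset_Icc_self)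

theorem aux_inner_cont {a b c d : ℝ} (hcd : c ≤ d) (H : ℝ → ℝ → ℝ)
    (hH : ContinuousOn (fun p : ℝ × ℝ => H p.1 p.2) (Icc a b ×ˢ Icc c d)) :
    ContinuousOn (fun t => ∫ r in c..d, H t r) (Icc a b) :=
  aux_parcont (Icc a b) c d hcd H hH

theorem aux_dbl_mono {a b c d : ℝ} (hab : a ≤ b) (hcd : c ≤ d) (H G : ℝ → ℝ → ℝ)
    (hH : ContinuousOn (fun p : ℝ × ℝ => H p.1 p.2) (Icc a b ×ˢ Icc c d))
    (hG : ContinuousOn (fun p : ℝ × ℝ => G p.1 p.2) (Icc a b ×ˢ Icc c d))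
    (hle : ∀ t ∈ Icc a b, ∀ r ∈ Icc c d, H t r ≤ G t r) :
    ∫ t in a..b, ∫ r in c..d, H t r ≤ ∫ t in a..b, ∫ r in c..d, G t r := by
  apply intervalIntegral.integral_mono_on hab
  · exact (aux_inner_cont hcd H hH).intervalIntegrable_of_Icc hab
  · exact (aux_inner_cont hcd G hG).intervalIntegrable_of_Icc hab
  · intro t ht
    apply intervalIntegral.integral_mono_on hcd
    · exact (aux_slice_r hH ht).intervalIntegrable_of_Icc hcd
    · exact (aux_slice_r hG ht).intervalIntegrable_of_Icc hcd
    · exact hle t ht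

theorem aux_dbl_add {a b c d : ℝ} (hab : a ≤ b) (hcd : c ≤ d) (H G : ℝ → ℝ → ℝ)
    (hH : ContinuousOn (fun p : ℝ × ℝ => H p.1 p.2) (Icc a b ×ˢ Icc c d))
    (hG : ContinuousOn (fun p : ℝ × ℝ => G p.1 p.2) (Icc a b ×ˢ Icc c d)) :
    ∫ t in a..b, ∫ r in c..d, (H t r + G t r) =
      (∫ t in a..b, ∫ r in c..d, H t r) + ∫ t in a..b, ∫ r in c..d, G t r := by
  rw [← intervalIntegral.integral_add]
  · apply intervalIntegral.integral_congr
    intro t ht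
    rw [uIcc_of_le hab] at ht
    apply intervalIntegral.integral_add
    · exact (aux_slice_r hH ht).intervalIntegrable_of_Icc hcd
    · exact (aux_slice_r hG ht).intervalIntegrable_of_Icc hcd
  · exact (aux_inner_cont hcd H hH).intervalIntegrable_of_Icc hab
  · exact (aux_inner_cont hcd G hG).intervalIntegrable_of_Icc hab

theorem aux_dbl_smul {a b c d : ℝ} (k : ℝ) (H : ℝ → ℝ → ℝ) :
    ∫ t in a..b, ∫ r in c..d, (k * H t r) = k * ∫ t in a..b, ∫ r in c..d, H t r := by
  simp

/-- Space-time Green inequality. -/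
theorem aux_green {σ L : ℝ} (hσL : σ ≤ L) (H Ht E Q Q' : ℝ → ℝ → ℝ) (b : ℝ)
    (hH : ∀ t ∈ Icc (0:ℝ) 1, ∀ r ∈ Icc σ L, HasDerivAt (fun τ => H τ r) (Ht t r) t)
    (hQ : ∀ t ∈ Icc (0:ℝ) 1, ∀ r ∈ Icc σ L, HasDerivAt (Q t) (Q' t r) r)
    (hle : ∀ t ∈ Icc (0:ℝ) 1, ∀ r ∈ Icc σ L, Ht t r + E t r ≤ Q' t r)
    (hHt : ContinuousOn (fun p : ℝ × ℝ => Ht p.1 p.2) (Icc 0 1 ×ˢ Icc σ L))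
    (hE : ContinuousOn (fun p : ℝ × ℝ => E p.1 p.2) (Icc 0 1 ×ˢ Icc σ L))
    (hb : ∀ t ∈ Icc (0:ℝ) 1, Q t L - Q t σ ≤ b) :
    ∫ t in (0:ℝ)..1, ∫ r in σ..L, E t r ≤ b + ∫ r in σ..L, (H 0 r - H 1 r) := by
  have h01 : (0:ℝ) ≤ 1 := zero_le_one
  have hsum := aux_dbl_add h01 hσL Ht E hHt hE
  have h1 : ∫ t in (0:ℝ)..1, ∫ r in σ..L, (Ht t r + E t r) ≤ ∫ t in (0:ℝ)..1, b := by
    apply intervalIntegral.integral_mono_on h01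
    · exact (aux_inner_cont hσL (fun t r => Ht t r + E t r)
        (hHt.add hE)).intervalIntegrable_of_Icc h01
    · simp
    · intro t ht
      refine le_trans ?_ (hb t ht)
      apply intervalIntegral.integral_le_sub_of_hasDeriv_right_of_le hσL (g' := Q' t)
      · intro r hr
        exact (hQ t ht r hr).continuousAt.continuousWithinAt
      · intro r hr
        exact (hQ t ht r (Ioo_subset_Icc_self hr)).hasDerivWithinAt
      · exact (aux_slice_r (H := fun t r => Ht t r + E t r)
          (hHt.add hE) ht).integrableOn_compact isCompact_Icc
      · intro r hr
        exact hle t ht r (Ioo_subset_Icc_self hr)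
  have h2 : ∫ t in (0:ℝ)..1, ∫ r in σ..L, Ht t r = ∫ r in σ..L, (H 1 r - H 0 r) := by
    rw [aux_swap h01 hσL Ht hHt]
    apply intervalIntegral.integral_congr
    intro r hr
    rw [uIcc_of_le hσL] at hr
    apply intervalIntegral.integral_eq_sub_of_hasDerivAt (f := fun t => H t r)
    · intro t ht
      rw [uIcc_of_le h01] at ht
      exact hH t ht r hr
    · exact (aux_slice_t hHt hr).intervalIntegrable_of_Icc h01
  have h3 : ∫ r in σ..L, (H 0 r - H 1 r) = - ∫ r in σ..L, (H 1 r - H 0 r) := by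
    rw [← intervalIntegral.integral_neg]
    congr 1
    ext r
    ring
  simp at h1
  linarith


noncomputable def wm (α κ r : ℝ) : ℝ := r ^ (2*α-2) + κ * r ^ (-2:ℝ)
noncomputable def wm1 (α κ r : ℝ) : ℝ := (2*α-2) * r ^ (2*α-2-1) + κ * ((-2) * r ^ ((-2:ℝ)-1))
noncomputable def wm2 (α κ r : ℝ) : ℝ :=
  (2*α-2) * ((2*α-2-1) * r ^ (2*α-2-1-1)) + κ * ((-2) * (((-2:ℝ)-1) * r ^ ((-2:ℝ)-1-1)))

theorem wm_pos {α κ r : ℝ} (hκ : 0 < κ) (hr : 0 < r) : 0 < wm α κ r := by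
  unfold wm; positivity

theorem wm_deriv {α κ r : ℝ} (hr : 0 < r) : HasDerivAt (wm α κ) (wm1 α κ r) r := by
  unfold wm wm1
  exact (Real.hasDerivAt_rpow_const (Or.inl hr.ne')).add
    ((Real.hasDerivAt_rpow_const (Or.inl hr.ne')).const_mul κ)

theorem wm1_deriv {α κ r : ℝ} (hr : 0 < r) : HasDerivAt (wm1 α κ) (wm2 α κ r) r := by
  unfold wm1 wm2
  exact ((Real.hasDerivAt_rpow_const (Or.inl hr.ne')).const_mul _).add
    (((Real.hasDerivAt_rpow_const (Or.inl hr.ne')).const_mul _).const_mul κ)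

theorem wm_sq {α κ r : ℝ} (hr : 0 < r) : r^2 * wm α κ r = r ^ (2*α) + κ := by
  unfold wm
  rw [Real.rpow_sub hr, Real.rpow_neg hr.le, Real.rpow_two]
  field_simp

theorem wm_le {α κ r : ℝ} (hα : α ∈ Ioo (0:ℝ) 1) (hκ : κ ∈ Ioo (0:ℝ) (1/2)) (hr : 0 < r)
    (hr1 : r ≤ 1) : r^2 * wm α κ r ≤ 2 := by
  rw [wm_sq hr]
  have : r ^ (2*α) ≤ 1 := Real.rpow_le_one hr.le hr1 (by linarith [hα.1])
  linarith [hκ.2]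

theorem wm1_bd {α κ r : ℝ} (hα : α ∈ Ioo (0:ℝ) 1) (hκ : κ ∈ Ioo (0:ℝ) (1/2)) (hr : 0 < r) :
    |r * wm1 α κ r| ≤ 2 * wm α κ r := by
  have h1 : r * wm1 α κ r = (2*α-2) * r ^ (2*α-2) - 2 * (κ * r ^ (-2:ℝ)) := by
    unfold wm1
    rw [Real.rpow_sub hr (2*α-2) 1, Real.rpow_sub hr (-2) 1, Real.rpow_one]
    field_simp
    ring
  rw [h1]
  unfold wm
  have h2 : 0 < r ^ (2*α-2) := by positivity
  have h3 : 0 < κ * r ^ (-2:ℝ) := by have := hκ.1; positivity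
  rw [abs_le]
  constructor
  · nlinarith [mul_pos hα.1 h2]
  · nlinarith [mul_pos (sub_pos.2 hα.2) h2]

theorem wm2_bd {α κ r : ℝ} (hα : α ∈ Ioo (0:ℝ) 1) (hκ : κ ∈ Ioo (0:ℝ) (1/2)) (hr : 0 < r) :
    |r^2 * wm2 α κ r| ≤ 6 * wm α κ r := by
  have h1 : r^2 * wm2 α κ r = (2*α-2) * (2*α-3) * r ^ (2*α-2) + 6 * (κ * r ^ (-2:ℝ)) := by
    unfold wm2
    rw [Real.rpow_sub hr (2*α-2-1) 1, Real.rpow_sub hr (2*α-2) 1, Real.rpow_sub hr (-2-1) 1,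
      Real.rpow_sub hr (-2) 1, Real.rpow_one]
    field_simp
    ring
  rw [h1]
  unfold wm
  have h2 : 0 < r ^ (2*α-2) := by positivity
  have h3 : 0 < κ * r ^ (-2:ℝ) := by have := hκ.1; positivity
  have h4 : (2*α-2) * (2*α-3) ≤ 6 := by nlinarith [hα.1, hα.2]
  have h5 : 0 ≤ (2*α-2) * (2*α-3) := by nlinarith [hα.1, hα.2]
  rw [abs_of_nonneg (by positivity)]
  nlinarith [mul_le_mul_of_nonneg_right h4 h2.le]

theorem wm_cont (α κ : ℝ) : ContinuousOn (wm α κ) (Ioi 0) :=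
  fun _ hr => (wm_deriv hr).continuousAt.continuousWithinAt
theorem wm1_cont (α κ : ℝ) : ContinuousOn (wm1 α κ) (Ioi 0) :=
  fun _ hr => (wm1_deriv hr).continuousAt.continuousWithinAt

noncomputable def wN (α κ t r : ℝ) : ℝ := wm α κ r / (1 + t * wm α κ r)
noncomputable def wN1 (α κ t r : ℝ) : ℝ := wm1 α κ r / (1 + t * wm α κ r)^2
noncomputable def wN2 (α κ t r : ℝ) : ℝ :=
  wm2 α κ r / (1 + t * wm α κ r)^2 - 2 * t * (wm1 α κ r)^2 / (1 + t * wm α κ r)^3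

theorem wz_pos {α κ t r : ℝ} (hκ : 0 < κ) (ht : 0 ≤ t) (hr : 0 < r) : 0 < 1 + t * wm α κ r := by
  have := wm_pos (α := α) hκ hr; positivity

theorem wN_pos {α κ t r : ℝ} (hκ : 0 < κ) (ht : 0 ≤ t) (hr : 0 < r) : 0 < wN α κ t r :=
  div_pos (wm_pos hκ hr) (wz_pos hκ ht hr)

theorem wN_le {α κ t r : ℝ} (hκ : 0 < κ) (ht : 0 ≤ t) (hr : 0 < r) : wN α κ t r ≤ wm α κ r :=
  div_le_self (wm_pos hκ hr).le (by have := wm_pos (α := α) hκ hr; nlinarith [mul_nonneg ht this.le])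

theorem wN_deriv_r {α κ t r : ℝ} (hκ : 0 < κ) (ht : 0 ≤ t) (hr : 0 < r) :
    HasDerivAt (wN α κ t) (wN1 α κ t r) r := by
  have h0 := (wz_pos (α := α) hκ ht hr).ne'
  have := (wm_deriv (α := α) (κ := κ) hr).fun_div
    (((wm_deriv (α := α) (κ := κ) hr).const_mul t).const_add 1) h0
  refine HasDerivAt.congr_deriv (f := wN α κ t) this ?_
  unfold wN1
  congr 1
  ring

theorem wN1_deriv_r {α κ t r : ℝ} (hκ : 0 < κ) (ht : 0 ≤ t) (hr : 0 < r) :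
    HasDerivAt (wN1 α κ t) (wN2 α κ t r) r := by
  have h0 := (wz_pos (α := α) hκ ht hr).ne'
  have := (wm1_deriv (α := α) (κ := κ) hr).fun_div
    ((((wm_deriv (α := α) (κ := κ) hr).const_mul t).const_add 1).fun_pow 2) (pow_ne_zero 2 h0)
  refine HasDerivAt.congr_deriv (f := wN1 α κ t) this ?_
  unfold wN2
  field_simp
  push_cast
  ring

theorem wN_deriv_t {α κ t r : ℝ} (hκ : 0 < κ) (ht : 0 ≤ t) (hr : 0 < r) :
    HasDerivAt (fun τ => wN α κ τ r) (-(wN α κ t r)^2) t := by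
  have h0 := (wz_pos (α := α) hκ ht hr).ne'
  have := (hasDerivAt_const t (wm α κ r)).fun_div
    (((hasDerivAt_id t).mul_const (wm α κ r)).const_add 1) h0
  refine HasDerivAt.congr_deriv (f := fun τ => wN α κ τ r) this ?_
  unfold wN
  simp only [id]
  field_simp
  ring

theorem wN1_bd {α κ t r : ℝ} (hα : α ∈ Ioo (0:ℝ) 1) (hκ : κ ∈ Ioo (0:ℝ) (1/2)) (ht : 0 ≤ t)
    (hr : 0 < r) : |r * wN1 α κ t r| ≤ 2 * wN α κ t r / (1 + t * wm α κ r) := by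
  have h0 := wz_pos (α := α) hκ.1 ht hr
  have h1 := wm1_bd hα hκ hr
  unfold wN1 wN
  rw [mul_div_assoc', abs_div, abs_of_pos (pow_pos h0 2), mul_div_assoc', div_div, ← sq]
  gcongr

theorem wN2_bd {α κ t r : ℝ} (hα : α ∈ Ioo (0:ℝ) 1) (hκ : κ ∈ Ioo (0:ℝ) (1/2)) (ht : 0 ≤ t)
    (hr : 0 < r) : |r^2 * wN2 α κ t r| ≤ 14 * wN α κ t r / (1 + t * wm α κ r) := by
  have h0 := wz_pos (α := α) hκ.1 ht hr
  have h1 := wm1_bd hα hκ hr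
  have h2 := wm2_bd hα hκ hr
  have hm := wm_pos (α := α) hκ.1 hr
  have e1 : r^2 * wN2 α κ t r = (r^2 * wm2 α κ r) / (1 + t * wm α κ r)^2
      - 2 * t * (r * wm1 α κ r)^2 / (1 + t * wm α κ r)^3 := by
    unfold wN2; ring
  rw [e1]
  have h3 : (r * wm1 α κ r)^2 ≤ (2 * wm α κ r)^2 := by
    rw [← sq_abs]; gcongr
  have e2 : 14 * wN α κ t r / (1 + t * wm α κ r) = 14 * wm α κ r / (1 + t * wm α κ r)^2 := by
    unfold wN; field_simp
  rw [e2]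
  refine (abs_sub _ _).trans ?_
  rw [abs_div, abs_of_pos (pow_pos h0 2), abs_div, abs_of_pos (pow_pos h0 3),
    abs_of_nonneg (by positivity : 0 ≤ 2 * t * (r * wm1 α κ r)^2)]
  have h4 : 2 * t * (r * wm1 α κ r)^2 / (1 + t * wm α κ r)^3 ≤ 8 * wm α κ r / (1 + t * wm α κ r)^2 := by
    rw [div_le_div_iff₀ (pow_pos h0 3) (pow_pos h0 2)]
    have : 2 * t * (r * wm1 α κ r)^2 ≤ 8 * wm α κ r * (1 + t * wm α κ r) := by
      nlinarith [mul_le_mul_of_nonneg_left h3 ht]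
    calc _ ≤ 8 * wm α κ r * (1 + t * wm α κ r) * (1 + t * wm α κ r)^2 := by gcongr
      _ = _ := by ring
  have h5 : |r^2 * wm2 α κ r| / (1 + t * wm α κ r)^2 ≤ 6 * wm α κ r / (1 + t * wm α κ r)^2 := by
    gcongr
  calc _ ≤ 6 * wm α κ r / (1 + t * wm α κ r)^2 + 8 * wm α κ r / (1 + t * wm α κ r)^2 := by gcongr
    _ = _ := by ring

theorem wm_cont2 (α κ : ℝ) : ContinuousOn (fun p : ℝ × ℝ => wm α κ p.2) (Ici 0 ×ˢ Ioi 0) :=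
  (wm_cont α κ).comp continuousOn_snd (fun _ hp => hp.2)
theorem wm1_cont2 (α κ : ℝ) : ContinuousOn (fun p : ℝ × ℝ => wm1 α κ p.2) (Ici 0 ×ˢ Ioi 0) :=
  (wm1_cont α κ).comp continuousOn_snd (fun _ hp => hp.2)

theorem wN_cont2 {α κ : ℝ} (hκ : 0 < κ) :
    ContinuousOn (fun p : ℝ × ℝ => wN α κ p.1 p.2) (Ici 0 ×ˢ Ioi 0) := by
  unfold wN
  refine (wm_cont2 α κ).div (continuousOn_const.add (continuousOn_fst.mul (wm_cont2 α κ))) ?_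
  intro p hp
  exact (wz_pos hκ hp.1 hp.2).ne'

theorem rpow_cont2 (s : ℝ) : ContinuousOn (fun p : ℝ × ℝ => p.2 ^ s) (Ici (0:ℝ) ×ˢ Ioi 0) :=
  continuousOn_snd.rpow_const (fun _ hp => Or.inl (ne_of_gt hp.2))


structure SmoothSol (a c : ℝ → ℝ) (u g gr gt ut : ℝ → ℝ → ℝ) (B K R : ℝ) : Prop where
  u_t : ∀ t, 0 ≤ t → ∀ r, 0 < r → HasDerivAt (fun τ => u τ r) (ut t r) t
  u_r : ∀ t, 0 ≤ t → ∀ r, 0 < r → HasDerivAt (u t) (g t r) r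
  g_r : ∀ t, 0 ≤ t → ∀ r, 0 < r → HasDerivAt (g t) (gr t r) r
  g_t : ∀ t, 0 ≤ t → ∀ r, 0 < r → HasDerivAt (fun τ => g τ r) (gt t r) t
  ut_r : ∀ t, 0 ≤ t → ∀ r, 0 < r → HasDerivAt (ut t) (gt t r) r
  eqn : ∀ t, 0 ≤ t → ∀ r, 0 < r → ut t r = a r * gr t r + c r * g t r
  cu : ContinuousOn (fun p : ℝ × ℝ => u p.1 p.2) (Ici 0 ×ˢ Ioi 0)
  cg : ContinuousOn (fun p : ℝ × ℝ => g p.1 p.2) (Ici 0 ×ˢ Ioi 0)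
  cgt : ContinuousOn (fun p : ℝ × ℝ => gt p.1 p.2) (Ici 0 ×ˢ Ioi 0)
  cut : ContinuousOn (fun p : ℝ × ℝ => ut p.1 p.2) (Ici 0 ×ˢ Ioi 0)
  bu : ∀ t, 0 ≤ t → ∀ r, 0 < r → |u t r| ≤ B
  but : ∀ t, 0 ≤ t → ∀ r, 0 < r → |ut t r| ≤ K
  bg : ∀ t, 0 ≤ t → ∀ r, 0 < r → r ≤ R → |g t r| ≤ K * r

structure Coef (α κ C0 c0 δ L : ℝ) (a a' c : ℝ → ℝ) : Prop where
  a_r : ∀ r, 0 < r → HasDerivAt a (a' r) r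
  a_pos : ∀ r, 0 < r → 0 < a r
  cc : ContinuousOn c (Ioi 0)
  a_lo : ∀ r, 0 < r → r ≤ L → r ^ (2*α) + κ ≤ C0 * a r
  a_hi : ∀ r, 0 < r → r ≤ L → a r ≤ C0 * (r ^ (2*α) + κ)
  a'_bd : ∀ r, 0 < r → r ≤ L → |r * a' r| ≤ C0 * (r ^ (2*α) + κ)
  c_bd : ∀ r, 0 < r → r ≤ L → |r * c r| ≤ C0 * (r ^ (2*α) + κ)
  good : ∀ r, 0 < r → r ≤ L → (δ - 1) * a r + r * a' r - r * c r ≤ -c0 * (r ^ (2*α) + κ)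

theorem energy_alg (k r P u g B C0 e1 ca : ℝ) (hk : 0 ≤ k) (hk1 : k ≤ 1) (hr : 0 < r)
    (hr1 : r ≤ 1) (hP : 0 ≤ P) (hu : |u| ≤ B) (he1 : |e1| ≤ 4 * r * P)
    (hca : |r * ca| ≤ C0^2) :
    k^2 * (r^2 * P) * ca * u * g ≤ (-2*k*(r^2*P) + k^2 * e1) * u * g
      + 1/2 * (k^2 * (r^2 * P)) * g^2 + (36 + C0^4) * B^2 * P := by
  have hB : u^2 ≤ B^2 := by rw [← sq_abs]; gcongr
  have h1 : k^2 * (r^2 * P) * ca * u * g ≤ C0^2 * (k * r * P) * (|u| * |g|) := by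
    have : k^2 * (r^2 * P) * ca * u * g = (k * (k * r * P)) * ((r * ca) * (u * g)) := by ring
    rw [this]
    have h2 : (r * ca) * (u * g) ≤ C0^2 * (|u| * |g|) := by
      refine (le_abs_self _).trans ?_
      rw [abs_mul, abs_mul u g]; gcongr
    have h3 : 0 ≤ C0^2 * (|u| * |g|) := by positivity
    have h4 : 0 ≤ k * r * P := by positivity
    calc _ ≤ (k * (k * r * P)) * (C0^2 * (|u| * |g|)) := by gcongr
      _ ≤ (1 * (k * r * P)) * (C0^2 * (|u| * |g|)) := by gcongr
      _ = _ := by ring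
  have h2 : -((-2*k*(r^2*P) + k^2 * e1) * u * g) ≤ 6 * (k * r * P) * (|u| * |g|) := by
    have : -((-2*k*(r^2*P) + k^2 * e1) * u * g) = (2*k*(r^2*P) - k^2 * e1) * (u * g) := by ring
    rw [this]
    refine (le_abs_self _).trans ?_
    rw [abs_mul, abs_mul u g]
    gcongr
    refine (abs_sub _ _).trans ?_
    rw [abs_of_nonneg (by positivity : 0 ≤ 2*k*(r^2*P)), abs_mul, abs_of_nonneg (sq_nonneg k)]
    have h3 : k^2 * |e1| ≤ k * 1 * (4 * r * P) := by
      rw [sq]; gcongr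
    have h4 : 2*k*(r^2*P) ≤ 2*k*(r*1*P) := by
      rw [sq]; gcongr
    nlinarith
  have h3 : C0^2 * (k * r * P) * (|u| * |g|) ≤ P * (1/4 * (k*r*|g|)^2 + C0^4 * |u|^2) := by
    have : C0^2 * (k * r * P) * (|u| * |g|) = P * ((k*r*|g|) * (C0^2*|u|)) := by ring
    rw [this]
    gcongr
    nlinarith [sq_nonneg (1/2 * (k*r*|g|) - C0^2*|u|)]
  have h4 : 6 * (k * r * P) * (|u| * |g|) ≤ P * (1/4 * (k*r*|g|)^2 + 36 * |u|^2) := by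
    have : 6 * (k * r * P) * (|u| * |g|) = P * ((k*r*|g|) * (6*|u|)) := by ring
    rw [this]
    gcongr
    nlinarith [sq_nonneg (1/2 * (k*r*|g|) - 6*|u|)]
  have h5 : (36 + C0^4) * u^2 * P ≤ (36 + C0^4) * B^2 * P := by gcongr
  simp only [mul_pow, sq_abs] at h3 h4
  nlinarith

theorem aux_energy {α κ C0 c0 δ L : ℝ} {a a' c : ℝ → ℝ} {u g gr gt ut : ℝ → ℝ → ℝ} {B K : ℝ}
    (hα : α ∈ Ioo (0:ℝ) 1) (hκ : κ ∈ Ioo (0:ℝ) (1/2)) (hδ : δ ∈ Ioo (0:ℝ) 1)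
    (hL1 : L ≤ 1) (hC0 : 1 ≤ C0) (hB : 0 ≤ B) (hK : 0 ≤ K)
    (hc : Coef α κ C0 c0 δ L a a' c) (hs : SmoothSol a c u g gr gt ut B K L)
    {σ : ℝ} (hσ : 0 < σ) (hσL : σ < L) :
    ∫ t in (0:ℝ)..1, ∫ r in σ..L, (1/2 * ((L-r)^2 * (r^2 * (r^(δ-1) * wN α κ t r))) * (g t r)^2
        - (36 + C0^4) * B^2 * (r^(δ-1) * wN α κ t r))
      ≤ 2 * B * K * σ^δ + ∫ r in σ..L, C0 * B^2 * r^(δ-1) := by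
  have sub : (Icc (0:ℝ) 1 ×ˢ Icc σ L) ⊆ (Ici (0:ℝ) ×ˢ Ioi (0:ℝ)) := by
    rintro ⟨t, r⟩ ⟨h1, h2⟩
    exact ⟨h1.1, lt_of_lt_of_le hσ h2.1⟩
  have ca : ContinuousOn a (Ioi 0) := fun r hr => (hc.a_r r hr).continuousAt.continuousWithinAt
  have ca2 : ContinuousOn (fun p : ℝ × ℝ => a p.2) (Ici 0 ×ˢ Ioi 0) :=
    ca.comp continuousOn_snd (fun _ hp => hp.2)
  have cN := wN_cont2 (α := α) hκ.1
  have cP := rpow_cont2 (δ-1)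
  have cL : ContinuousOn (fun p : ℝ × ℝ => L - p.2) (Ici (0:ℝ) ×ˢ Ioi 0) := by fun_prop
  have cr : ContinuousOn (fun p : ℝ × ℝ => p.2) (Ici (0:ℝ) ×ˢ Ioi 0) := by fun_prop
  let W : ℝ → ℝ → ℝ := fun t r => (L-r)^2 * (r^2 * (r^(δ-1) * wN α κ t r))
  let Wt : ℝ → ℝ → ℝ := fun t r => (L-r)^2 * (r^2 * (r^(δ-1) * (-(wN α κ t r)^2)))
  have cW : ContinuousOn (fun p : ℝ × ℝ => W p.1 p.2) (Ici 0 ×ˢ Ioi 0) :=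
    (cL.pow 2).mul ((cr.pow 2).mul (cP.mul cN))
  have cWt : ContinuousOn (fun p : ℝ × ℝ => Wt p.1 p.2) (Ici 0 ×ˢ Ioi 0) :=
    (cL.pow 2).mul ((cr.pow 2).mul (cP.mul ((cN.pow 2).neg)))
  let e1 : ℝ → ℝ → ℝ := fun t r => (2 * r * r^(δ-1) + r^2 * ((δ-1) * r^(δ-1-1))) * wN α κ t r
      + (r^2 * r^(δ-1)) * wN1 α κ t r
  have hWr : ∀ t, 0 ≤ t → ∀ r, 0 < r → HasDerivAt (W t)
      (-2*(L-r)*(r^2 * (r^(δ-1) * wN α κ t r)) + (L-r)^2 * e1 t r) r := by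
    intro t ht r hr
    have d1 : HasDerivAt (fun r : ℝ => (L-r)^2) (-2*(L-r)) r := by
      refine (((hasDerivAt_id r).const_sub L).fun_pow 2).congr_deriv ?_
      simp only [id]; push_cast; ring
    have d2 : HasDerivAt (fun r : ℝ => r^2 * (r^(δ-1) * wN α κ t r)) (e1 t r) r := by
      refine ((((hasDerivAt_id r).fun_pow 2).fun_mul
        ((Real.hasDerivAt_rpow_const (p := δ-1) (Or.inl hr.ne')).fun_mul
          (wN_deriv_r (α := α) hκ.1 ht hr)))).congr_deriv ?_
      simp only [id, e1]; push_cast; ring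
    refine (d1.fun_mul d2).congr_deriv ?_
    ring
  have key := aux_green hσL.le
    (H := fun t r => 1/2 * (W t r / a r) * (u t r)^2)
    (Ht := fun t r => 1/2 * (Wt t r / a r) * (u t r)^2 + (W t r / a r) * (u t r * ut t r))
    (E := fun t r => 1/2 * W t r * (g t r)^2 - (36 + C0^4) * B^2 * (r^(δ-1) * wN α κ t r))
    (Q := fun t r => W t r * u t r * g t r)
    (Q' := fun t r => (-2*(L-r)*(r^2 * (r^(δ-1) * wN α κ t r)) + (L-r)^2 * e1 t r) * u t r * g t r
        + W t r * g t r * g t r + W t r * u t r * gr t r)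
    (b := 2 * B * K * σ^δ)
    ?_ ?_ ?_ ?_ ?_ ?_
  · refine key.trans ?_
    gcongr
    apply intervalIntegral.integral_mono_on hσL.le
    · apply ContinuousOn.intervalIntegrable_of_Icc hσL.le
      have hW0 : ∀ t : ℝ, 0 ≤ t → ContinuousOn
          (fun r => 1/2 * (W t r / a r) * (u t r)^2) (Icc σ L) := by
        intro t ht
        have s1 : Icc σ L ⊆ Ioi 0 := fun r hr => lt_of_lt_of_le hσ hr.1
        have := (aux_slice_r cW (t := t) ht).mono s1
        exact (continuousOn_const.mul (this.div (ca.mono s1)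
          (fun r hr => (hc.a_pos r (s1 hr)).ne'))).mul (((aux_slice_r hs.cu (t := t) ht).mono s1).pow 2)
      exact (hW0 0 le_rfl).sub (hW0 1 zero_le_one)
    · apply ContinuousOn.intervalIntegrable_of_Icc hσL.le
      exact continuousOn_const.mul (continuousOn_id.rpow_const
        (fun r hr => Or.inl (ne_of_gt (lt_of_lt_of_le hσ hr.1))))
    · intro r hr
      have hr0 : 0 < r := lt_of_lt_of_le hσ hr.1
      have ha := hc.a_pos r hr0
      have hN1 := wN_pos (α := α) hκ.1 zero_le_one hr0
      have hP : 0 < r^(δ-1) := by positivity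
      have h1 : 0 ≤ 1/2 * (W 1 r / a r) * (u 1 r)^2 := by
        simp only [W]; positivity
      have h2 : W 0 r / a r ≤ C0 * r^(δ-1) := by
        rw [div_le_iff₀ ha]
        simp only [W]
        have e : wN α κ 0 r = wm α κ r := by simp [wN]
        rw [e]
        have h3 := hc.a_lo r hr0 hr.2
        rw [← wm_sq hr0] at h3
        have h4 : (L-r)^2 ≤ 1 := by
          have := hr.2
          nlinarith
        calc (L-r)^2 * (r^2 * (r^(δ-1) * wm α κ r)) ≤ 1 * (r^2 * (r^(δ-1) * wm α κ r)) := by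
              have := wm_pos (α := α) hκ.1 hr0
              gcongr
          _ = r^(δ-1) * (r^2 * wm α κ r) := by ring
          _ ≤ r^(δ-1) * (C0 * a r) := by gcongr
          _ = _ := by ring
      have h3 : (u 0 r)^2 ≤ B^2 := by
        rw [← sq_abs]
        have := hs.bu 0 le_rfl r hr0
        gcongr
      have h4 : 1/2 * (W 0 r / a r) * (u 0 r)^2 ≤ 1 * (C0 * r^(δ-1)) * B^2 := by
        have hN0 := wN_pos (α := α) hκ.1 (le_refl (0:ℝ)) hr0
        have hW0' : 0 ≤ W 0 r / a r := by simp only [W]; positivity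
        have h5 : (0:ℝ) ≤ (u 0 r)^2 := sq_nonneg _
        calc 1/2 * (W 0 r / a r) * (u 0 r)^2 ≤ 1 * (W 0 r / a r) * (u 0 r)^2 := by
              apply mul_le_mul_of_nonneg_right _ h5
              apply mul_le_mul_of_nonneg_right _ hW0'
              norm_num
          _ ≤ 1 * (C0 * r^(δ-1)) * B^2 := by gcongr
      linarith
  · intro t ht r hr
    have hr0 : 0 < r := lt_of_lt_of_le hσ hr.1
    have d1 : HasDerivAt (fun τ => W τ r) (Wt t r) t :=
      (((wN_deriv_t (α := α) hκ.1 ht.1 hr0).const_mul _).const_mul _).const_mul _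
    have d2 := (hs.u_t t ht.1 r hr0).fun_pow 2
    refine (((d1.div_const (a r)).const_mul (1/2)).fun_mul d2).congr_deriv ?_
    push_cast; ring
  · intro t ht r hr
    have hr0 : 0 < r := lt_of_lt_of_le hσ hr.1
    refine (((hWr t ht.1 r hr0).fun_mul (hs.u_r t ht.1 r hr0)).fun_mul
      (hs.g_r t ht.1 r hr0)).congr_deriv ?_
    ring
  · intro t ht r hr
    have hr0 : 0 < r := lt_of_lt_of_le hσ hr.1
    have hr1 : r ≤ 1 := hr.2.trans hL1
    have ha := hc.a_pos r hr0
    have hN := wN_pos (α := α) hκ.1 ht.1 hr0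
    have hP : 0 < r^(δ-1) := by positivity
    have h1 : 1/2 * (Wt t r / a r) * (u t r)^2 ≤ 0 := by
      have : 0 ≤ -(1/2 * (Wt t r / a r) * (u t r)^2) := by
        have e : -(1/2 * (Wt t r / a r) * (u t r)^2) =
          1/2 * (((L-r)^2 * (r^2 * (r^(δ-1) * ((wN α κ t r)^2)))) / a r) * (u t r)^2 := by
          simp only [Wt]; ring
        rw [e]; positivity
      linarith
    have he1 : |e1 t r| ≤ 4 * r * (r^(δ-1) * wN α κ t r) := by
      have hb1 := wN1_bd hα hκ ht.1 hr0
      have hz : (1:ℝ) ≤ 1 + t * wm α κ r := by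
        have := wm_pos (α := α) hκ.1 hr0
        nlinarith [mul_nonneg ht.1 this.le]
      have hb2 : |r * wN1 α κ t r| ≤ 2 * wN α κ t r :=
        hb1.trans (div_le_self (by positivity) hz)
      have e : e1 t r = r * r^(δ-1) * ((1+δ) * wN α κ t r + r * wN1 α κ t r) := by
        simp only [e1]
        rw [Real.rpow_sub hr0 (δ-1) 1, Real.rpow_one]
        field_simp
        ring
      rw [e, abs_mul, abs_of_pos (by positivity : 0 < r * r^(δ-1))]
      have : |(1+δ) * wN α κ t r + r * wN1 α κ t r| ≤ 4 * wN α κ t r := by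
        refine (abs_add_le _ _).trans ?_
        rw [abs_of_pos (by have := hδ.1; positivity : 0 < (1+δ) * wN α κ t r)]
        nlinarith [mul_le_mul_of_nonneg_right hδ.2.le hN.le]
      calc _ ≤ r * r^(δ-1) * (4 * wN α κ t r) := by gcongr
        _ = _ := by ring
    have hca : |r * (c r / a r)| ≤ C0^2 := by
      rw [mul_div_assoc', abs_div, abs_of_pos ha, div_le_iff₀ ha]
      refine (hc.c_bd r hr0 hr.2).trans ?_
      calc _ ≤ C0 * (C0 * a r) := by
            have := hc.a_lo r hr0 hr.2
            gcongr
        _ = _ := by ring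
    have hL0 : 0 ≤ L - r := by linarith [hr.2]
    have hL2 : L - r ≤ 1 := by linarith
    have alg := energy_alg (L-r) r (r^(δ-1) * wN α κ t r) (u t r) (g t r) B C0 (e1 t r) (c r / a r)
      hL0 hL2 hr0 hr1 (by positivity) (hs.bu t ht.1 r hr0) he1 hca
    have e2 : (W t r / a r) * (u t r * ut t r) = W t r * u t r * gr t r
        + (L-r)^2 * (r^2 * (r^(δ-1) * wN α κ t r)) * (c r / a r) * u t r * g t r := by
      rw [hs.eqn t ht.1 r hr0]
      simp only [W]
      field_simp
    have e3 : W t r = (L-r)^2 * (r^2 * (r^(δ-1) * wN α κ t r)) := rfl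
    simp only [e2]
    rw [← e3] at alg ⊢
    nlinarith
  · have cd : ∀ X : ℝ → ℝ → ℝ, ContinuousOn (fun p : ℝ × ℝ => X p.1 p.2) (Ici 0 ×ˢ Ioi 0) →
        ContinuousOn (fun p : ℝ × ℝ => X p.1 p.2 / a p.2) (Ici 0 ×ˢ Ioi 0) :=
      fun X hX => hX.div ca2 (fun p hp => (hc.a_pos p.2 hp.2).ne')
    exact (((continuousOn_const.mul (cd Wt cWt)).mul (hs.cu.pow 2)).add
      ((cd W cW).mul (hs.cu.mul hs.cut))).mono sub
  · exact (((continuousOn_const.mul cW).mul (hs.cg.pow 2)).sub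
      (continuousOn_const.mul (cP.mul cN))).mono sub
  · intro t ht
    have hg := hs.bg t ht.1 σ hσ hσL.le
    have hu := hs.bu t ht.1 σ hσ
    have hN := wN_pos (α := α) hκ.1 ht.1 hσ
    have hNm := wN_le (α := α) hκ.1 ht.1 hσ
    have hP : 0 < σ^(δ-1) := by positivity
    have h1 : 0 ≤ W t σ := by simp only [W]; positivity
    have h2 : W t σ ≤ 2 * σ^(δ-1) := by
      simp only [W]
      have h4 : (L-σ)^2 ≤ 1 := by nlinarith
      have h5 := wm_le hα hκ hσ (hσL.le.trans hL1)
      calc (L-σ)^2 * (σ^2 * (σ^(δ-1) * wN α κ t σ)) ≤ 1 * (σ^2 * (σ^(δ-1) * wm α κ σ)) := by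
            gcongr
        _ = σ^(δ-1) * (σ^2 * wm α κ σ) := by ring
        _ ≤ σ^(δ-1) * 2 := by gcongr
        _ = _ := by ring
    have h3 : W t L = 0 := by simp [W]
    simp only [h3]
    have h4 : |W t σ * u t σ * g t σ| ≤ (2 * σ^(δ-1)) * B * (K * σ) := by
      rw [abs_mul, abs_mul, abs_of_nonneg h1]; gcongr
    have h5 : (2 * σ^(δ-1)) * B * (K * σ) = 2 * B * K * σ^δ := by
      rw [Real.rpow_sub hσ, Real.rpow_one]; field_simp
    rw [h5] at h4
    linarith [neg_abs_le (W t σ * u t σ * g t σ)]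


theorem l1_alg1 {A a ra rc c0 C0 δ l r s Y rY rrY ς t w : ℝ} (hA : 0 < A) (hδ : δ ∈ Ioo (0:ℝ) 1)
    (hc0 : 0 < c0) (hC0 : 1 ≤ C0) (hl : 0 < l) (hl2 : 2 * l ≤ 1) (hr : 0 < r) (hrl : r ≤ l)
    (ha0 : 0 < a)
    (ha : a ≤ C0 * A) (hra : |ra| ≤ C0 * A) (hrc : |rc| ≤ C0 * A)
    (good : (δ-1)*a + ra - rc ≤ -c0 * A)
    (hw : 0 < w) (hrw : r^2 * w ≤ 2) (ht : 0 ≤ t) (ht1 : t ≤ 1)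
    (hs : s = 1/(1+t*w))
    (hY : Y = (l-r)^2 * (1-s)) (hrY : |rY| ≤ 2*r + 2*s) (hrrY : |rrY| ≤ 2*r+22*s)
    (hς : 0 < ς) (hς2 : (c0 + 30*C0) * ς ≤ δ*c0*l^2/2) :
    δ * ((δ-1)*a + ra - rc) * Y + (2*δ*a + ra - rc) * rY + a * rrY ≤
      A * (-(δ*c0*l^2/2) + (c0+30*C0)*(2+2/ς^2) * s) := by
  have hz : 0 ≤ t * w := by positivity
  have hs0 : 0 < s := by rw [hs]; positivity
  have hs1 : s ≤ 1 := by rw [hs, div_le_one (by positivity)]; linarith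
  have hδ0 := hδ.1
  have hY0 : 0 ≤ Y := by rw [hY]; exact mul_nonneg (sq_nonneg _) (by linarith)
  have hYlo : l^2 - r - s ≤ Y := by
    have h1 : (l-r)^2 ≤ 1 := by nlinarith
    have h2 : l^2 - r ≤ (l-r)^2 := by nlinarith
    rw [hY]
    nlinarith [mul_le_mul_of_nonneg_right h1 hs0.le]
  have t1 : δ * ((δ-1)*a + ra - rc) * Y ≤ δ * (-c0 * A) * (l^2 - r - s) := by
    have : δ * ((δ-1)*a + ra - rc) * Y ≤ δ * (-c0 * A) * Y := by gcongr
    have h2 : 0 ≤ δ * c0 * A := by positivity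
    nlinarith [mul_le_mul_of_nonneg_left hYlo h2]
  have t2 : (2*δ*a + ra - rc) * rY ≤ (4*C0*A) * (2*r+2*s) := by
    refine (le_abs_self _).trans ?_
    rw [abs_mul]
    have : |2*δ*a + ra - rc| ≤ 4*C0*A := by
      rw [abs_le] at hra hrc ⊢
      have h3 : δ * a ≤ 1 * (C0 * A) := by have := hδ.2.le; gcongr
      have h4 : 0 ≤ δ * a := by positivity
      constructor <;> linarith
    gcongr
  have t3 : a * rrY ≤ (C0*A) * (2*r+22*s) := by
    refine (le_abs_self _).trans ?_
    rw [abs_mul, abs_of_pos ha0]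
    gcongr
  have hr2 : r ≤ ς + (1+2/ς^2) * s := by
    have hpos : 0 < 1 + 2/ς^2 := by positivity
    rcases le_total r ς with h | h
    · have : 0 ≤ (1+2/ς^2) * s := by positivity
      linarith
    · have h1 : t * w ≤ 2/ς^2 := by
        rw [le_div_iff₀ (by positivity)]
        have : ς^2 ≤ r^2 := by gcongr
        calc t * w * ς^2 ≤ 1 * w * r^2 := by gcongr
          _ ≤ 2 := by linarith
      have h2 : 1 ≤ (1+2/ς^2) * s := by
        rw [hs, mul_one_div, le_div_iff₀ (by positivity)]; linarith
      linarith
  have h5 : δ * c0 ≤ c0 := mul_le_of_le_one_left hc0.le hδ.2.le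
  have h6 : δ * (-c0 * A) * (l^2 - r - s) + (4*C0*A) * (2*r+2*s) + (C0*A) * (2*r+22*s)
      ≤ A * (-(δ*c0*l^2) + (c0+30*C0) * (r+s)) := by
    have : 0 ≤ A * ((c0 - δ*c0) * (r+s) + C0 * 20 * r) := by
      have : 0 ≤ c0 - δ * c0 := by linarith
      positivity
    linarith
  have h7 : (c0+30*C0) * (r+s) ≤ δ*c0*l^2/2 + (c0+30*C0)*(2+2/ς^2) * s := by
    have hC : 0 < c0 + 30*C0 := by positivity
    have := mul_le_mul_of_nonneg_left hr2 hC.le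
    linarith
  have h8 : A * (-(δ*c0*l^2) + (c0+30*C0) * (r+s)) ≤
      A * (-(δ*c0*l^2/2) + (c0+30*C0)*(2+2/ς^2) * s) := by
    gcongr A * ?_
    linarith
  linarith

theorem l1_alg2 {a c g gr e j φ : ℝ} (ha : 0 < a) (he : 0 < e) (hj : j^2 = g^2 + e^2) (hj0 : 0 < j)
    (hφ : 0 ≤ φ) : -(φ * (e^2/j^3) * (a * gr^2 + c * g * gr)) ≤ φ * (c^2/a) * e := by
  have hej : e ≤ j := by nlinarith
  have hgj : g^2 ≤ j^2 := by nlinarith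
  have h1 : -(a * gr^2 + c * g * gr) ≤ c^2/a * g^2 := by
    rw [div_mul_eq_mul_div, le_div_iff₀ ha]
    nlinarith [sq_nonneg (a * gr + c * g), sq_nonneg (a*gr), sq_nonneg (c*g), sq_nonneg (2*a * gr + c * g)]
  have h2 : e^2/j^3 * g^2 ≤ e := by
    rw [div_mul_eq_mul_div, div_le_iff₀ (by positivity)]
    calc e^2 * g^2 ≤ (e * j) * j^2 := by rw [sq e]; gcongr
      _ = _ := by ring
  calc -(φ * (e^2/j^3) * (a * gr^2 + c * g * gr)) = φ * (e^2/j^3) * (-(a * gr^2 + c * g * gr)) := by ring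
    _ ≤ φ * (e^2/j^3) * (c^2/a * g^2) := by gcongr
    _ = φ * (c^2/a) * (e^2/j^3 * g^2) := by ring
    _ ≤ φ * (c^2/a) * e := by gcongr

set_option maxHeartbeats 2000000 in
theorem aux_l1 {α κ C0 c0 δ L l ς : ℝ} {a a' c : ℝ → ℝ} {u g gr gt ut : ℝ → ℝ → ℝ} {B K : ℝ}
    (hα : α ∈ Ioo (0:ℝ) 1) (hκ : κ ∈ Ioo (0:ℝ) (1/2)) (hδ : δ ∈ Ioo (0:ℝ) 1)
    (hl : 0 < l) (hl2 : 2 * l ≤ 1) (hlL : l ≤ L) (hC0 : 1 ≤ C0) (hc0 : 0 < c0)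
    (hK : 0 ≤ K)
    (hς : 0 < ς) (hς2 : (c0 + 30*C0) * ς ≤ δ*c0*l^2/2)
    (hc : Coef α κ C0 c0 δ L a a' c) (hs : SmoothSol a c u g gr gt ut B K L)
    {σ : ℝ} (hσ : 0 < σ) (hσL : σ < l) {e : ℝ} (he : 0 < e) :
    ∫ t in (0:ℝ)..1, ∫ r in σ..l, ((δ*c0*l^2/2) * (r^δ * wm α κ r * |g t r|)
        - (1 + (c0+30*C0)*(2+2/ς^2)) * (r^δ * wN α κ t r * |g t r|)
        - (1 + (c0+30*C0)*(2+2/ς^2) + 5 * C0 + C0^3) * e * (r^δ * wm α κ r))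
      ≤ σ^δ * K * (1 + 10 * C0) + 10 * C0 * σ^(δ-1) * e := by
  have sub : (Icc (0:ℝ) 1 ×ˢ Icc σ l) ⊆ (Ici (0:ℝ) ×ˢ Ioi (0:ℝ)) := by
    rintro ⟨t, r⟩ ⟨h1, h2⟩
    exact ⟨h1.1, lt_of_lt_of_le hσ h2.1⟩
  have cN := wN_cont2 (α := α) hκ.1
  have cP := rpow_cont2 δ
  have cm := wm_cont2 α κ
  have cL : ContinuousOn (fun p : ℝ × ℝ => l - p.2) (Ici (0:ℝ) ×ˢ Ioi 0) := by fun_prop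
  have ct : ContinuousOn (fun p : ℝ × ℝ => p.1) (Ici (0:ℝ) ×ˢ Ioi 0) := by fun_prop
  set C2 := 1 + (c0+30*C0)*(2+2/ς^2) with hC2
  set c2 := δ*c0*l^2/2 with hc2
  have hC2p : 0 < C2 := by positivity
  have hc2p : 0 < c2 := by have := hδ.1; positivity
  let j : ℝ → ℝ → ℝ := fun t r => √((g t r)^2 + e^2)
  have hj2 : ∀ t r, (j t r)^2 = (g t r)^2 + e^2 := fun t r => Real.sq_sqrt (by positivity)
  have hj0 : ∀ t r, 0 < j t r := fun t r => Real.sqrt_pos.2 (by positivity)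
  have cj : ContinuousOn (fun p : ℝ × ℝ => j p.1 p.2) (Ici 0 ×ˢ Ioi 0) :=
    ((hs.cg.pow 2).add continuousOn_const).sqrt
  have jt : ∀ t, 0 ≤ t → ∀ r, 0 < r →
      HasDerivAt (fun τ => j τ r) (g t r / j t r * gt t r) t := by
    intro t ht r hr
    have h1 := (((hs.g_t t ht r hr).fun_pow 2).add_const (e^2)).sqrt (by positivity)
    refine h1.congr_deriv ?_
    have := (hj0 t r).ne'
    change _ / (2 * j t r) = _
    field_simp
    push_cast; ring
  have jr : ∀ t, 0 ≤ t → ∀ r, 0 < r →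
      HasDerivAt (j t) (g t r / j t r * gr t r) r := by
    intro t ht r hr
    have h1 := (((hs.g_r t ht r hr).fun_pow 2).add_const (e^2)).sqrt (by positivity)
    refine h1.congr_deriv ?_
    have := (hj0 t r).ne'
    change _ / (2 * j t r) = _
    field_simp
    push_cast; ring
  -- Y and derivatives
  let Y : ℝ → ℝ → ℝ := fun t r => (l-r)^2 * (t * wN α κ t r)
  let Y1 : ℝ → ℝ → ℝ := fun t r => -2*(l-r) * (t * wN α κ t r) + (l-r)^2 * (t * wN1 α κ t r)
  let Y2 : ℝ → ℝ → ℝ := fun t r => 2 * (t * wN α κ t r) - 4*(l-r) * (t * wN1 α κ t r)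
      + (l-r)^2 * (t * wN2 α κ t r)
  have dl : ∀ r : ℝ, HasDerivAt (fun r : ℝ => (l-r)^2) (-2*(l-r)) r := by
    intro r
    refine (((hasDerivAt_id r).const_sub l).fun_pow 2).congr_deriv ?_
    simp only [id]; push_cast; ring
  have dl1 : ∀ r : ℝ, HasDerivAt (fun r : ℝ => -2*(l-r)) 2 r := by
    intro r
    refine (((hasDerivAt_id r).const_sub l).const_mul (-2)).congr_deriv ?_
    ring
  have hY1 : ∀ t, 0 ≤ t → ∀ r, 0 < r → HasDerivAt (Y t) (Y1 t r) r := by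
    intro t ht r hr
    exact (dl r).fun_mul ((wN_deriv_r (α := α) hκ.1 ht hr).const_mul t)
  have hY2 : ∀ t, 0 ≤ t → ∀ r, 0 < r → HasDerivAt (Y1 t) (Y2 t r) r := by
    intro t ht r hr
    refine (((dl1 r).fun_mul ((wN_deriv_r (α := α) hκ.1 ht hr).const_mul t)).fun_add
      ((dl r).fun_mul ((wN1_deriv_r (α := α) hκ.1 ht hr).const_mul t))).congr_deriv ?_
    simp only [Y2]; ring
  let φ : ℝ → ℝ → ℝ := fun t r => r^δ * Y t r
  let φ1 : ℝ → ℝ → ℝ := fun t r => δ * r^(δ-1) * Y t r + r^δ * Y1 t r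
  let φ2 : ℝ → ℝ → ℝ := fun t r => δ * ((δ-1) * r^(δ-1-1)) * Y t r + δ * r^(δ-1) * Y1 t r +
    (δ * r^(δ-1) * Y1 t r + r^δ * Y2 t r)
  let φt : ℝ → ℝ → ℝ := fun t r => r^δ * ((l-r)^2 * (wN α κ t r + t * (-(wN α κ t r)^2)))
  have hφ1 : ∀ t, 0 ≤ t → ∀ r, 0 < r → HasDerivAt (φ t) (φ1 t r) r := by
    intro t ht r hr
    exact (Real.hasDerivAt_rpow_const (p := δ) (Or.inl hr.ne')).fun_mul (hY1 t ht r hr)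
  have hφ2 : ∀ t, 0 ≤ t → ∀ r, 0 < r → HasDerivAt (φ1 t) (φ2 t r) r := by
    intro t ht r hr
    exact (((Real.hasDerivAt_rpow_const (p := δ-1) (Or.inl hr.ne')).const_mul δ).fun_mul
      (hY1 t ht r hr)).fun_add
      ((Real.hasDerivAt_rpow_const (p := δ) (Or.inl hr.ne')).fun_mul (hY2 t ht r hr))
  have hφt : ∀ t, 0 ≤ t → ∀ r, 0 < r → HasDerivAt (fun τ => φ τ r) (φt t r) t := by
    intro t ht r hr
    refine ((((hasDerivAt_id t).fun_mul (wN_deriv_t (α := α) hκ.1 ht hr)).const_mul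
      ((l-r)^2)).const_mul (r^δ)).congr_deriv ?_
    simp only [id, φt]; ring
  have cφ : ContinuousOn (fun p : ℝ × ℝ => φ p.1 p.2) (Ici 0 ×ˢ Ioi 0) :=
    cP.mul ((cL.pow 2).mul (ct.mul cN))
  have cφt : ContinuousOn (fun p : ℝ × ℝ => φt p.1 p.2) (Ici 0 ×ˢ Ioi 0) :=
    cP.mul ((cL.pow 2).mul (cN.add (ct.mul ((cN.pow 2).neg))))
  -- bounds
  have bds : ∀ t ∈ Icc (0:ℝ) 1, ∀ r, 0 < r → r ≤ l →
      (0 ≤ Y t r ∧ Y t r ≤ 1) ∧ Y t r = (l-r)^2 * (1 - 1/(1+t*wm α κ r)) ∧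
      |r * Y1 t r| ≤ 2*r + 2*(1/(1+t*wm α κ r)) ∧
      |r^2 * Y2 t r| ≤ 2*r + 22*(1/(1+t*wm α κ r)) := by
    intro t ht r hr hrl
    have hm := wm_pos (α := α) hκ.1 hr
    have hz := wz_pos (α := α) hκ.1 ht.1 hr
    have hN := wN_pos (α := α) hκ.1 ht.1 hr
    have ht0 := ht.1
    have e1 : t * wN α κ t r = 1 - 1/(1+t*wm α κ r) := by
      unfold wN; field_simp; ring
    have hs0 : 0 < 1/(1+t*wm α κ r) := by positivity
    have hy0 : 0 ≤ t * wN α κ t r := by positivity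
    have hy1 : t * wN α κ t r ≤ 1 := by rw [e1]; linarith
    have b1 : |r * (t * wN1 α κ t r)| ≤ 2 * (1/(1+t*wm α κ r)) := by
      have := wN1_bd hα hκ ht.1 hr
      rw [show r * (t * wN1 α κ t r) = t * (r * wN1 α κ t r) by ring, abs_mul, abs_of_nonneg ht0]
      calc _ ≤ t * (2 * wN α κ t r / (1 + t * wm α κ r)) := by gcongr
        _ = 2 * (t * wN α κ t r) * (1/(1+t*wm α κ r)) := by ring
        _ ≤ 2 * 1 * (1/(1+t*wm α κ r)) := by gcongr
        _ = _ := by ring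
    have b2 : |r^2 * (t * wN2 α κ t r)| ≤ 14 * (1/(1+t*wm α κ r)) := by
      have := wN2_bd hα hκ ht.1 hr
      rw [show r^2 * (t * wN2 α κ t r) = t * (r^2 * wN2 α κ t r) by ring, abs_mul, abs_of_nonneg ht0]
      calc _ ≤ t * (14 * wN α κ t r / (1 + t * wm α κ r)) := by gcongr
        _ = 14 * (t * wN α κ t r) * (1/(1+t*wm α κ r)) := by ring
        _ ≤ 14 * 1 * (1/(1+t*wm α κ r)) := by gcongr
        _ = _ := by ring
    have hk0 : 0 ≤ l - r := by linarith
    have hk1 : l - r ≤ 1 := by linarith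
    have hk2 : (l-r)^2 ≤ 1 := pow_le_one₀ hk0 hk1
    refine ⟨⟨by simp only [Y]; positivity, ?_⟩, ?_, ?_, ?_⟩
    · simp only [Y]
      calc _ ≤ 1 * (1:ℝ) := by gcongr
        _ = 1 := by norm_num
    · simp only [Y, e1]
    · have : r * Y1 t r = -(2 * r * (l-r) * (t * wN α κ t r)) + (l-r)^2 * (r * (t * wN1 α κ t r)) := by
        simp only [Y1]; ring
      rw [this]
      refine (abs_add_le _ _).trans ?_
      rw [abs_neg, abs_of_nonneg (by positivity), abs_mul, abs_of_nonneg (sq_nonneg (l-r))]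
      calc _ ≤ 2 * r * 1 * 1 + 1 * (2 * (1/(1+t*wm α κ r))) := by gcongr
        _ = _ := by ring
    · have : r^2 * Y2 t r = (2 * r^2 * (t * wN α κ t r) - 4 * (l-r) * r * (r * (t * wN1 α κ t r)))
          + (l-r)^2 * (r^2 * (t * wN2 α κ t r)) := by
        simp only [Y2]; ring
      rw [this]
      refine (abs_add_le _ _).trans ((add_le_add_left (abs_sub _ _) _).trans ?_)
      rw [abs_of_nonneg (by positivity : 0 ≤ 2 * r^2 * (t * wN α κ t r)), abs_mul (4 * (l-r) * r),
        abs_of_nonneg (by positivity : 0 ≤ 4 * (l-r) * r), abs_mul ((l-r)^2),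
        abs_of_nonneg (sq_nonneg (l-r))]
      have hr1 : r ≤ 1 := by linarith
      calc _ ≤ 2 * (r * 1) * 1 + 4 * 1 * 1 * (2 * (1/(1+t*wm α κ r))) + 1 * (14 * (1/(1+t*wm α κ r))) := by
            have hrr : r^2 ≤ r * 1 := by rw [sq]; gcongr
            gcongr
        _ = _ := by ring
  have bφ1 : ∀ t ∈ Icc (0:ℝ) 1, ∀ r, 0 < r → r ≤ l → |φ1 t r| ≤ 5 * r^(δ-1) := by
    intro t ht r hr hrl
    obtain ⟨⟨h1, h2⟩, -, h3, -⟩ := bds t ht r hr hrl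
    have hm := wm_pos (α := α) hκ.1 hr
    have hz : 1/(1+t*wm α κ r) ≤ 1 := by
      rw [div_le_one (wz_pos hκ.1 ht.1 hr)]; linarith [mul_nonneg ht.1 hm.le]
    have : φ1 t r = r^(δ-1) * (δ * Y t r + r * Y1 t r) := by
      simp only [φ1]
      rw [Real.rpow_sub hr δ 1, Real.rpow_one]; field_simp
    rw [this, abs_mul, abs_of_pos (by positivity : 0 < r^(δ-1)), mul_comm]
    have : |δ * Y t r + r * Y1 t r| ≤ 5 := by
      refine (abs_add_le _ _).trans ?_
      have hd0 := hδ.1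
      rw [abs_of_nonneg (by positivity)]
      have : δ * Y t r ≤ 1 * 1 := by have := hδ.2.le; gcongr
      linarith
    gcongr
  have key := aux_green hσL.le
    (H := fun t r => φ t r * j t r)
    (Ht := fun t r => φt t r * j t r + φ t r * (g t r / j t r * gt t r))
    (E := fun t r => c2 * (r^δ * wm α κ r * |g t r|) - C2 * (r^δ * wN α κ t r * |g t r|)
        - (C2 + 5 * C0 + C0^3) * e * (r^δ * wm α κ r))
    (Q := fun t r => φ t r * (g t r / j t r) * ut t r - a r * φ1 t r * j t r)
    (Q' := fun t r => (φ1 t r * (g t r / j t r)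
        + φ t r * ((gr t r * j t r - g t r * (g t r / j t r * gr t r)) / (j t r)^2)) * ut t r
        + φ t r * (g t r / j t r) * gt t r
        - ((a' r * φ1 t r + a r * φ2 t r) * j t r + a r * φ1 t r * (g t r / j t r * gr t r)))
    (b := σ^δ * K * (1 + 10 * C0) + 10 * C0 * σ^(δ-1) * e)
    ?_ ?_ ?_ ?_ ?_ ?_
  · refine key.trans ?_
    have : ∫ r in σ..l, (φ 0 r * j 0 r - φ 1 r * j 1 r) ≤ ∫ r in σ..l, (0:ℝ) := by
      apply intervalIntegral.integral_mono_on hσL.le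
      · apply ContinuousOn.intervalIntegrable_of_Icc hσL.le
        have s1 : Icc σ l ⊆ Ioi 0 := fun r hr => lt_of_lt_of_le hσ hr.1
        have h1 : ∀ t : ℝ, 0 ≤ t → ContinuousOn (fun r => φ t r * j t r) (Icc σ l) := fun t ht =>
          ((aux_slice_r cφ (t := t) ht).mono s1).mul ((aux_slice_r cj (t := t) ht).mono s1)
        exact (h1 0 le_rfl).sub (h1 1 zero_le_one)
      · simp
      · intro r hr
        have hr0 : 0 < r := lt_of_lt_of_le hσ hr.1
        obtain ⟨⟨h1, h2⟩, -⟩ := bds 1 ⟨zero_le_one, le_rfl⟩ r hr0 hr.2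
        have h3 : φ 0 r = 0 := by simp [φ, Y]
        have h4 : 0 ≤ φ 1 r * j 1 r := by
          have := hj0 1 r
          simp only [φ]; positivity
        rw [h3]; linarith
    simp only [intervalIntegral.integral_zero] at this
    linarith
  · intro t ht r hr
    have hr0 : 0 < r := lt_of_lt_of_le hσ hr.1
    exact (hφt t ht.1 r hr0).fun_mul (jt t ht.1 r hr0)
  · intro t ht r hr
    have hr0 : 0 < r := lt_of_lt_of_le hσ hr.1
    have d1 := (hs.g_r t ht.1 r hr0).fun_div (jr t ht.1 r hr0) (hj0 t r).ne'
    exact ((((hφ1 t ht.1 r hr0).fun_mul d1).fun_mul (hs.ut_r t ht.1 r hr0))).fun_sub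
      (((hc.a_r r hr0).fun_mul (hφ2 t ht.1 r hr0)).fun_mul (jr t ht.1 r hr0))
  · intro t ht r hr
    have hr0 : 0 < r := lt_of_lt_of_le hσ hr.1
    have hrL := hr.2.trans hlL
    have ha := hc.a_pos r hr0
    have hm := wm_pos (α := α) hκ.1 hr0
    have hN := wN_pos (α := α) hκ.1 ht.1 hr0
    have hz := wz_pos (α := α) hκ.1 ht.1 hr0
    have hJ := hj0 t r
    have hJ2 := hj2 t r
    obtain ⟨⟨b1, b2⟩, b3, b4, b5⟩ := bds t ht r hr0 hr.2
    have bf := bφ1 t ht r hr0 hr.2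
    have hA : r^(2*α) + κ = r^2 * wm α κ r := (wm_sq hr0).symm
    have c1 := hc.a_lo r hr0 hrL
    have c2' := hc.a_hi r hr0 hrL
    have c3 := hc.a'_bd r hr0 hrL
    have c4 := hc.c_bd r hr0 hrL
    have c5 := hc.good r hr0 hrL
    rw [hA] at c1 c2' c3 c4 c5
    have hAp : 0 < r^2 * wm α κ r := by positivity
    have alg := l1_alg1 (A := r^2 * wm α κ r) hAp hδ hc0 hC0 hl hl2 hr0 hr.2 ha c2' c3 c4 c5 hm
      (wm_le hα hκ hr0 (by linarith [hr.2])) ht.1 ht.2 rfl b3 b4 b5 hς hς2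
    rw [← hc2] at alg
    set s := 1/(1+t*wm α κ r) with hs_def
    have hs0 : 0 < s := by positivity
    have hs1 : s ≤ 1 := by
      rw [hs_def, div_le_one hz]; linarith [mul_nonneg ht.1 hm.le]
    have hNs : wN α κ t r = wm α κ r * s := by rw [hs_def]; unfold wN; ring
    have hP : 0 < r^(δ-2) := by positivity
    have p1 : r^δ = r^2 * r^(δ-2) := by
      rw [Real.rpow_sub hr0 δ 2, Real.rpow_two]; field_simp
    have p2 : r^(δ-1) = r * r^(δ-2) := by
      rw [Real.rpow_sub hr0 δ 2, Real.rpow_sub hr0 δ 1, Real.rpow_two, Real.rpow_one]; field_simp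
    have p3 : r^(δ-1-1) = r^(δ-2) := by congr 1; ring
    have hφt' : φt t r ≤ r^δ * wm α κ r * s := by
      have e1 : wN α κ t r + t * (-(wN α κ t r)^2) = wm α κ r * s * s := by
        have : t * wN α κ t r = 1 - s := by rw [hs_def]; unfold wN; field_simp; ring
        calc _ = wN α κ t r * (1 - t * wN α κ t r) := by ring
          _ = _ := by rw [this, hNs]; ring
      simp only [φt, e1]
      have hk2 : (l-r)^2 ≤ 1 := pow_le_one₀ (by linarith [hr.2]) (by linarith)
      calc _ ≤ r^δ * (1 * (wm α κ r * s * 1)) := by gcongr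
        _ = _ := by ring
    have hG : φt t r + (a' r * φ1 t r + a r * φ2 t r) - c r * φ1 t r ≤
        r^δ * wm α κ r * (-c2 + C2 * s) := by
      have e1 : (a' r * φ1 t r + a r * φ2 t r) - c r * φ1 t r = r^(δ-2) *
          (δ * ((δ-1)*a r + r * a' r - r * c r) * Y t r + (2*δ*a r + r * a' r - r * c r) * (r * Y1 t r)
            + a r * (r^2 * Y2 t r)) := by
        simp only [φ1, φ2]
        rw [p1, p2, p3]; ring
      have e2 := mul_le_mul_of_nonneg_left alg hP.le
      rw [← e1] at e2
      rw [p1] at hφt' ⊢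
      rw [hC2]
      linarith
    set P := r^δ * wm α κ r with hPdef
    have hPp : 0 < P := by positivity
    have hjle : j t r ≤ |g t r| + e := by
      apply Real.sqrt_le_iff.2
      refine ⟨by positivity, ?_⟩
      rw [← sq_abs (g t r)]
      have := mul_nonneg (abs_nonneg (g t r)) he.le
      linarith [add_sq |g t r| e]
    have hgj : |g t r| ≤ j t r := Real.abs_le_sqrt (le_add_of_nonneg_right (sq_nonneg e))
    have hej : e ≤ j t r := Real.le_sqrt_of_sq_le (le_add_of_nonneg_left (sq_nonneg _))
    have hφ0 : 0 ≤ φ t r := by simp only [φ]; positivity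
    have m1 : j t r * (φt t r + (a' r * φ1 t r + a r * φ2 t r) - c r * φ1 t r) ≤
        -c2 * (P * |g t r|) + C2 * (P * s * |g t r|) + C2 * e * P := by
      calc _ ≤ j t r * (P * (-c2 + C2 * s)) := by gcongr
        _ = -c2 * (P * j t r) + C2 * (P * s) * j t r := by ring
        _ ≤ -c2 * (P * |g t r|) + C2 * (P * s) * (|g t r| + e) := by
            have : P * |g t r| ≤ P * j t r := by gcongr
            have h2 : C2 * (P * s) * j t r ≤ C2 * (P * s) * (|g t r| + e) := by gcongr
            have h3 := mul_le_mul_of_nonneg_left this hc2p.le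
            linarith
        _ = -c2 * (P * |g t r|) + C2 * (P * s * |g t r|) + C2 * e * (P * s) := by ring
        _ ≤ -c2 * (P * |g t r|) + C2 * (P * s * |g t r|) + C2 * e * (P * 1) := by gcongr
        _ = _ := by ring
    have m2 : c r * φ1 t r * (e^2 / j t r) ≤ 5 * C0 * e * P := by
      have h1 : e^2 / j t r ≤ e := by
        rw [div_le_iff₀ hJ, sq]; gcongr
      have h2 : |c r * φ1 t r| ≤ 5 * C0 * P := by
        have : |r * c r| * |φ1 t r| ≤ (C0 * (r^2 * wm α κ r)) * (5 * r^(δ-1)) := by gcongr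
        rw [p2] at this
        rw [hPdef, p1]
        rw [abs_mul, abs_of_pos hr0] at this
        rw [abs_mul]
        have h3 : r * (|c r| * |φ1 t r|) ≤ r * (5 * C0 * (r^2 * r^(δ-2) * wm α κ r)) := by
          linarith
        exact le_of_mul_le_mul_left h3 hr0
      calc _ ≤ |c r * φ1 t r| * (e^2 / j t r) := by gcongr; exact le_abs_self _
        _ ≤ (5 * C0 * P) * e := by gcongr
        _ = _ := by ring
    have m3 : -(φ t r * (e^2/(j t r)^3) * (a r * (gr t r)^2 + c r * g t r * gr t r)) ≤
        C0^3 * e * P := by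
      refine (l1_alg2 ha he hJ2 hJ hφ0).trans ?_
      have h1 : φ t r * (c r ^ 2 / a r) ≤ C0^3 * P := by
        rw [mul_div_assoc', div_le_iff₀ ha]
        have h2 : (r * c r)^2 ≤ (C0 * (r^2 * wm α κ r))^2 := by
          rw [← sq_abs]; gcongr
        have h3 : φ t r = r^(δ-2) * Y t r * r^2 := by simp only [φ, p1]; ring
        calc φ t r * c r ^ 2 = r^(δ-2) * Y t r * (r * c r)^2 := by rw [h3]; ring
          _ ≤ r^(δ-2) * 1 * (C0 * (r^2 * wm α κ r))^2 := by gcongr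
          _ = C0^2 * (r^2 * r^(δ-2) * wm α κ r) * (r^2 * wm α κ r) := by ring
          _ ≤ C0^2 * (r^2 * r^(δ-2) * wm α κ r) * (C0 * a r) := by gcongr
          _ = _ := by rw [hPdef, p1]; ring
      have h5 := mul_le_mul_of_nonneg_right h1 he.le
      linarith
    have e4 : (φt t r * j t r + φ t r * (g t r / j t r * gt t r)) -
        ((φ1 t r * (g t r / j t r)
        + φ t r * ((gr t r * j t r - g t r * (g t r / j t r * gr t r)) / (j t r)^2)) * ut t r
        + φ t r * (g t r / j t r) * gt t r
        - ((a' r * φ1 t r + a r * φ2 t r) * j t r + a r * φ1 t r * (g t r / j t r * gr t r))) =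
        j t r * (φt t r + (a' r * φ1 t r + a r * φ2 t r) - c r * φ1 t r)
        + c r * φ1 t r * (e^2 / j t r)
        + -(φ t r * (e^2/(j t r)^3) * (a r * (gr t r)^2 + c r * g t r * gr t r)) := by
      have q1 : (gr t r * j t r - g t r * (g t r / j t r * gr t r)) / (j t r)^2
          = e^2/(j t r)^3 * gr t r := by
        have : e^2 = (j t r)^2 - (g t r)^2 := by linarith
        rw [this]; field_simp
      have q2 : e^2 / j t r = j t r - g t r^2 / j t r := by
        have : e^2 = (j t r)^2 - (g t r)^2 := by linarith
        rw [this]; field_simp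
      rw [q1, hs.eqn t ht.1 r hr0, q2]
      ring
    have e5 : r^δ * wN α κ t r * |g t r| = P * s * |g t r| := by rw [hNs, hPdef]; ring
    simp only [e5]
    linarith
  · refine ContinuousOn.mono ?_ sub
    exact (cφt.mul cj).add (cφ.mul ((hs.cg.div cj (fun p _ => (hj0 p.1 p.2).ne')).mul hs.cgt))
  · refine ContinuousOn.mono ?_ sub
    exact ((continuousOn_const.mul ((cP.mul cm).mul hs.cg.abs)).sub
      (continuousOn_const.mul ((cP.mul cN).mul hs.cg.abs))).sub
      (continuousOn_const.mul (cP.mul cm))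
  · intro t ht
    have q1 : φ t l = 0 := by simp [φ, Y]
    have q2 : φ1 t l = 0 := by simp [φ1, Y, Y1]
    obtain ⟨⟨b1, b2⟩, -⟩ := bds t ht σ hσ hσL.le
    have bf := bφ1 t ht σ hσ hσL.le
    have hJ := hj0 t σ
    have hg := hs.bg t ht.1 σ hσ (hσL.le.trans hlL)
    have hut := hs.but t ht.1 σ hσ
    have hgj : |g t σ| ≤ j t σ := Real.abs_le_sqrt (le_add_of_nonneg_right (sq_nonneg e))
    have hjle : j t σ ≤ |g t σ| + e := by
      apply Real.sqrt_le_iff.2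
      refine ⟨by positivity, ?_⟩
      rw [← sq_abs (g t σ)]
      have := mul_nonneg (abs_nonneg (g t σ)) he.le
      linarith [add_sq |g t σ| e]
    have hJK : j t σ ≤ K * σ + e := by linarith
    have ha := hc.a_pos σ hσ
    have ha2 : a σ ≤ C0 * 2 := by
      have h1 := hc.a_hi σ hσ (hσL.le.trans hlL)
      rw [← wm_sq hσ] at h1
      have h2 := wm_le hα hκ hσ (by linarith : σ ≤ 1)
      calc _ ≤ _ := h1
        _ ≤ _ := by gcongr
    have hP : 0 < σ^δ := by positivity
    have hφσ : |φ t σ| ≤ σ^δ := by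
      simp only [φ]
      rw [abs_mul, abs_of_pos hP, abs_of_nonneg b1]
      exact mul_le_of_le_one_right hP.le b2
    have r1 : |φ t σ * (g t σ / j t σ) * ut t σ| ≤ σ^δ * 1 * K := by
      rw [abs_mul, abs_mul]
      have : |g t σ / j t σ| ≤ 1 := by
        rw [abs_div, abs_of_pos hJ, div_le_one hJ]; exact hgj
      gcongr
    have r2 : |a σ * φ1 t σ * j t σ| ≤ (C0 * 2) * (5 * σ^(δ-1)) * (K * σ + e) := by
      rw [abs_mul, abs_mul, abs_of_pos ha, abs_of_pos hJ]
      gcongr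
    have r3 : (C0 * 2) * (5 * σ^(δ-1)) * (K * σ + e) = 10 * C0 * K * σ^δ + 10 * C0 * σ^(δ-1) * e := by
      rw [Real.rpow_sub hσ, Real.rpow_one]; field_simp; ring
    rw [r3] at r2
    simp only [q1, q2]
    have := neg_abs_le (φ t σ * (g t σ / j t σ) * ut t σ)
    have := le_abs_self (a σ * φ1 t σ * j t σ)
    linarith


theorem int_rpow_le {p σ L : ℝ} (hp : 0 < p) (hσ : 0 < σ) (hσL : σ ≤ L) (hL : L ≤ 1) :
    ∫ r in σ..L, r^(p-1) ≤ 1/p := by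
  rw [integral_rpow (Or.inl (by linarith))]
  rw [sub_add_cancel]
  have h1 : L^p ≤ 1 := Real.rpow_le_one (hσ.le.trans hσL) hL hp.le
  have h2 : 0 < σ^p := by positivity
  gcongr
  linarith

theorem aux_J {α κ δ L σ : ℝ} (hα : α ∈ Ioo (0:ℝ) 1) (hκ : κ ∈ Ioo (0:ℝ) (1/2))
    (hδ : δ ∈ Ioo (0:ℝ) 1) (hL1 : L ≤ 1) (hσ : 0 < σ) (hσL : σ ≤ L) :
    ∫ t in (0:ℝ)..1, ∫ r in σ..L, r^(δ-1) * wN α κ t r ≤ 24/δ^2 := by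
  have sub : (Icc (0:ℝ) 1 ×ˢ Icc σ L) ⊆ (Ici (0:ℝ) ×ˢ Ioi (0:ℝ)) := by
    rintro ⟨t, r⟩ ⟨h1, h2⟩
    exact ⟨h1.1, lt_of_lt_of_le hσ h2.1⟩
  have cH : ContinuousOn (fun p : ℝ × ℝ => p.2^(δ-1) * wN α κ p.1 p.2) (Icc 0 1 ×ˢ Icc σ L) :=
    ((rpow_cont2 (δ-1)).mul (wN_cont2 hκ.1)).mono sub
  have hδ0 := hδ.1
  rw [aux_swap zero_le_one hσL (fun t r => r^(δ-1) * wN α κ t r) cH]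
  have h1 : ∫ r in σ..L, ∫ t in (0:ℝ)..1, r^(δ-1) * wN α κ t r ≤
      ∫ r in σ..L, (12/δ) * r^(δ/2-1) := by
    apply intervalIntegral.integral_mono_on hσL
    · exact (aux_inner_cont zero_le_one (fun r t => r^(δ-1) * wN α κ t r)
        (aux_cont_swap (H := fun t r => r^(δ-1) * wN α κ t r) cH)).intervalIntegrable_of_Icc hσL
    · apply ContinuousOn.intervalIntegrable_of_Icc hσL
      exact continuousOn_const.mul (continuousOn_id.rpow_const
        (fun r hr => Or.inl (ne_of_gt (lt_of_lt_of_le hσ hr.1))))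
    · intro r hr
      have hr0 : 0 < r := lt_of_lt_of_le hσ hr.1
      have hr1 : r ≤ 1 := hr.2.trans hL1
      have hm := wm_pos (α := α) hκ.1 hr0
      have e1 : ∫ t in (0:ℝ)..1, wN α κ t r = Real.log (1 + wm α κ r) := by
        have := intervalIntegral.integral_eq_sub_of_hasDerivAt (a := 0) (b := 1)
          (f := fun t => Real.log (1 + t * wm α κ r)) (f' := fun t => wN α κ t r) ?_ ?_
        · rw [this]; simp
        · intro t ht
          rw [uIcc_of_le zero_le_one] at ht
          have hz := wz_pos (α := α) hκ.1 ht.1 hr0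
          refine ((((hasDerivAt_id t).mul_const (wm α κ r)).const_add 1).log hz.ne').congr_deriv ?_
          simp [wN]
        · apply ContinuousOn.intervalIntegrable_of_Icc zero_le_one
          exact (aux_slice_t (wN_cont2 (α := α) hκ.1) (r := r) hr0).mono (fun t ht => ht.1)
      rw [intervalIntegral.integral_const_mul, e1]
      have h2 : Real.log (1 + wm α κ r) ≤ (1 + wm α κ r)^(δ/4) / (δ/4) :=
        Real.log_le_rpow_div (by positivity) (by positivity)
      have h3 : 1 + wm α κ r ≤ 3 * r^(-2:ℝ) := by
        have h4 := wm_le hα hκ hr0 hr1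
        rw [Real.rpow_neg hr0.le, Real.rpow_two, ← div_eq_mul_inv, le_div_iff₀ (by positivity)]
        have : r^2 ≤ 1 := pow_le_one₀ hr0.le hr1
        linarith
      have h4 : (1 + wm α κ r)^(δ/4) ≤ 3 * r^(-(δ/2)) := by
        calc (1 + wm α κ r)^(δ/4) ≤ (3 * r^(-2:ℝ))^(δ/4) := by
              apply Real.rpow_le_rpow _ h3; positivity; positivity
          _ = 3^(δ/4) * r^(-(δ/2)) := by
              rw [Real.mul_rpow (by norm_num) (by positivity), ← Real.rpow_mul hr0.le]
              congr 2; ring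
          _ ≤ 3^(1:ℝ) * r^(-(δ/2)) := by
              gcongr
              · norm_num
              · linarith [hδ.2]
          _ = _ := by rw [Real.rpow_one]
      calc r^(δ-1) * Real.log (1 + wm α κ r) ≤ r^(δ-1) * ((3 * r^(-(δ/2))) / (δ/4)) := by
            gcongr
            exact h2.trans (by gcongr)
        _ = (12/δ) * (r^(δ-1) * r^(-(δ/2))) := by field_simp; norm_num
        _ = _ := by
            rw [← Real.rpow_add hr0]; congr 2; ring
  refine h1.trans ?_
  rw [intervalIntegral.integral_const_mul]
  have := int_rpow_le (p := δ/2) (by positivity) hσ hσL hL1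
  calc _ ≤ 12/δ * (1/(δ/2)) := by gcongr
    _ = _ := by field_simp; norm_num

theorem aux_core {α δ l c0 C0 : ℝ} (hα : α ∈ Ioo (0:ℝ) 1) (hδ : δ ∈ Ioo (0:ℝ) 1)
    (hl : 0 < l) (hl2 : 2 * l ≤ 1) (hc0 : 0 < c0) (hC0 : 1 ≤ C0) :
    ∃ C : ℝ, 0 < C ∧ ∀ κ ∈ Ioo (0:ℝ) (1/2), ∀ (a a' c : ℝ → ℝ) (u g gr gt ut : ℝ → ℝ → ℝ) (B K : ℝ),
      0 < B → 0 ≤ K → Coef α κ C0 c0 δ (2*l) a a' c → SmoothSol a c u g gr gt ut B K (2*l) →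
      ∀ σ, 0 < σ → σ < l →
        ∫ t in (0:ℝ)..1, ∫ r in σ..l, r^(-(2-2*α-δ)) * |g t r| ≤ C * (B + K * σ^δ) := by
  have hδ0 := hδ.1
  set ς := (δ*c0*l^2/2) / (c0 + 30*C0) with hςd
  have hς : 0 < ς := by positivity
  have hς2 : (c0 + 30*C0) * ς ≤ δ*c0*l^2/2 := by
    rw [hςd]; apply le_of_eq; field_simp
  set c2 := δ*c0*l^2/2 with hc2
  set C2 := 1 + (c0+30*C0)*(2+2/ς^2) with hC2
  have hc2p : 0 < c2 := by positivity
  have hC2p : 0 < C2 := by positivity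
  set CJ := 24/δ^2 with hCJ
  have hCJp : 0 < CJ := by positivity
  refine ⟨(C2 * ((36 + C0^4) * CJ + C0/δ + CJ/(2*l^2)) + 2 * C2 + 1 + 10 * C0) / c2,
    by positivity, ?_⟩
  intro κ hκ a a' c u g gr gt ut B K hB hK hc hs σ hσ hσl
  have hL : σ < 2*l := by linarith
  have sub : (Icc (0:ℝ) 1 ×ˢ Icc σ l) ⊆ (Ici (0:ℝ) ×ˢ Ioi (0:ℝ)) := by
    rintro ⟨t, r⟩ ⟨h1, h2⟩
    exact ⟨h1.1, lt_of_lt_of_le hσ h2.1⟩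
  have subL : (Icc (0:ℝ) 1 ×ˢ Icc σ (2*l)) ⊆ (Ici (0:ℝ) ×ˢ Ioi (0:ℝ)) := by
    rintro ⟨t, r⟩ ⟨h1, h2⟩
    exact ⟨h1.1, lt_of_lt_of_le hσ h2.1⟩
  have cN := wN_cont2 (α := α) hκ.1
  have cP := rpow_cont2 δ
  have cP1 := rpow_cont2 (δ-1)
  have cm := wm_cont2 α κ
  have cL : ContinuousOn (fun p : ℝ × ℝ => 2*l - p.2) (Ici (0:ℝ) ×ˢ Ioi 0) := by fun_prop
  have cr : ContinuousOn (fun p : ℝ × ℝ => p.2) (Ici (0:ℝ) ×ˢ Ioi 0) := by fun_prop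
  let W : ℝ → ℝ → ℝ := fun t r => ((2*l-r)^2 * (r^2 * (r^(δ-1) * wN α κ t r))) * (g t r)^2
  have cW : ContinuousOn (fun p : ℝ × ℝ => W p.1 p.2) (Ici 0 ×ˢ Ioi 0) :=
    ((cL.pow 2).mul ((cr.pow 2).mul (cP1.mul cN))).mul (hs.cg.pow 2)
  let P1 : ℝ → ℝ → ℝ := fun t r => r^δ * wm α κ r * |g t r|
  let P2 : ℝ → ℝ → ℝ := fun t r => r^δ * wN α κ t r * |g t r|
  let P3 : ℝ → ℝ → ℝ := fun t r => r^δ * wm α κ r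
  let P4 : ℝ → ℝ → ℝ := fun t r => r^(δ-1) * wN α κ t r
  have c1' : ContinuousOn (fun p : ℝ × ℝ => P1 p.1 p.2) (Ici 0 ×ˢ Ioi 0) :=
    (cP.mul cm).mul hs.cg.abs
  have c2' : ContinuousOn (fun p : ℝ × ℝ => P2 p.1 p.2) (Ici 0 ×ˢ Ioi 0) :=
    (cP.mul cN).mul hs.cg.abs
  have c3' : ContinuousOn (fun p : ℝ × ℝ => P3 p.1 p.2) (Ici 0 ×ˢ Ioi 0) := cP.mul cm
  have c4' : ContinuousOn (fun p : ℝ × ℝ => P4 p.1 p.2) (Ici 0 ×ˢ Ioi 0) := cP1.mul cN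
  -- energy
  have hen := aux_energy hα hκ hδ hl2 hC0 hB.le hK hc hs hσ hL
  have hJL := aux_J hα hκ hδ hl2 hσ hL.le
  have hJl := aux_J hα hκ hδ (by linarith : l ≤ 1) hσ hσl.le
  have hX : ∫ t in (0:ℝ)..1, ∫ r in σ..2*l, W t r ≤
      2 * ((36 + C0^4) * B^2 * CJ + 2 * B * K * σ^δ + C0 * B^2 * (1/δ)) := by
    have e1 := aux_dbl_add zero_le_one hL.le (fun t r => 1/2 * W t r)
      (fun t r => (-((36 + C0^4) * B^2)) * P4 t r)
      (continuousOn_const.mul (cW.mono subL)) (continuousOn_const.mul (c4'.mono subL))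
    rw [aux_dbl_smul, aux_dbl_smul] at e1
    have e2 : ∫ t in (0:ℝ)..1, ∫ r in σ..2*l, (1/2 * ((2*l-r)^2 * (r^2 * (r^(δ-1) * wN α κ t r))) * (g t r)^2
        - (36 + C0^4) * B^2 * (r^(δ-1) * wN α κ t r)) = ∫ t in (0:ℝ)..1, ∫ r in σ..2*l,
        (1/2 * W t r + (-((36 + C0^4) * B^2)) * P4 t r) := by
      congr 1; funext t; congr 1; funext r
      simp only [W, P4]; ring
    rw [e2, e1, intervalIntegral.integral_const_mul] at hen
    have h2 := int_rpow_le hδ0 hσ hL.le hl2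
    have h3 : (36 + C0^4) * B^2 * (∫ t in (0:ℝ)..1, ∫ r in σ..2*l, P4 t r) ≤ (36 + C0^4) * B^2 * CJ := by
      gcongr
    have h4 : C0 * B^2 * (∫ r in σ..2*l, r^(δ-1)) ≤ C0 * B^2 * (1/δ) := by gcongr
    linarith
  have hX2 : ∫ t in (0:ℝ)..1, ∫ r in σ..l, W t r ≤ ∫ t in (0:ℝ)..1, ∫ r in σ..2*l, W t r := by
    apply intervalIntegral.integral_mono_on zero_le_one
    · exact (aux_inner_cont hσl.le W (cW.mono sub)).intervalIntegrable_of_Icc zero_le_one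
    · exact (aux_inner_cont hL.le W (cW.mono subL)).intervalIntegrable_of_Icc zero_le_one
    · intro t ht
      apply intervalIntegral.integral_mono_interval le_rfl hσl.le (by linarith)
      · rw [Filter.EventuallyLE, ae_restrict_iff' measurableSet_Ioc]
        refine Filter.Eventually.of_forall (fun r hr => ?_)
        have := wN_pos (α := α) hκ.1 ht.1 (hσ.trans hr.1)
        have h0 := hσ.trans hr.1
        simp only [W, Pi.zero_apply]; positivity
      · exact ((aux_slice_r (cW.mono subL) ht)).intervalIntegrable_of_Icc hL.le
  -- L1
  have hl1 : c2 * (∫ t in (0:ℝ)..1, ∫ r in σ..l, P1 t r) ≤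
      C2 * (∫ t in (0:ℝ)..1, ∫ r in σ..l, P2 t r) + σ^δ * K * (1 + 10 * C0) := by
    set C3 := C2 + 5 * C0 + C0^3 with hC3
    have hall : ∀ e : ℝ, 0 < e → c2 * (∫ t in (0:ℝ)..1, ∫ r in σ..l, P1 t r) -
      C2 * (∫ t in (0:ℝ)..1, ∫ r in σ..l, P2 t r) ≤ σ^δ * K * (1 + 10 * C0) +
        e * (10 * C0 * σ^(δ-1) + C3 * (∫ t in (0:ℝ)..1, ∫ r in σ..l, P3 t r)) := by
      intro e he
      have h1 := aux_l1 hα hκ hδ hl hl2 (by linarith : l ≤ 2*l) hC0 hc0 hK hς hς2 hc hs hσ hσl he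
      rw [← hC2, ← hC3] at h1
      have e1 := aux_dbl_add zero_le_one hσl.le (fun t r => c2 * P1 t r)
        (fun t r => (-C2) * P2 t r)
        (continuousOn_const.mul (c1'.mono sub)) (continuousOn_const.mul (c2'.mono sub))
      have e2 := aux_dbl_add zero_le_one hσl.le (fun t r => c2 * P1 t r + (-C2) * P2 t r)
        (fun t r => (-(C3 * e)) * P3 t r)
        ((continuousOn_const.mul (c1'.mono sub)).add (continuousOn_const.mul (c2'.mono sub)))
        (continuousOn_const.mul (c3'.mono sub))
      rw [e1, aux_dbl_smul, aux_dbl_smul, aux_dbl_smul] at e2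
      have e3 : ∫ t in (0:ℝ)..1, ∫ r in σ..l, (c2 * (r^δ * wm α κ r * |g t r|)
        - C2 * (r^δ * wN α κ t r * |g t r|) - C3 * e * (r^δ * wm α κ r)) =
        ∫ t in (0:ℝ)..1, ∫ r in σ..l, (c2 * P1 t r + (-C2) * P2 t r + (-(C3 * e)) * P3 t r) := by
        congr 1; funext t; congr 1; funext r
        simp only [P1, P2, P3]; ring
      rw [e3, e2] at h1
      linarith
    have hlim : Tendsto (fun e : ℝ => σ^δ * K * (1 + 10 * C0) +
        e * (10 * C0 * σ^(δ-1) + C3 * (∫ t in (0:ℝ)..1, ∫ r in σ..l, P3 t r)))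
        (nhdsWithin 0 (Ioi 0)) (nhds (σ^δ * K * (1 + 10 * C0) +
        0 * (10 * C0 * σ^(δ-1) + C3 * (∫ t in (0:ℝ)..1, ∫ r in σ..l, P3 t r)))) := by
      apply Tendsto.mono_left _ nhdsWithin_le_nhds
      apply Continuous.tendsto
      fun_prop
    have := ge_of_tendsto hlim (eventually_nhdsWithin_of_forall hall)
    linarith
  have hamgm : ∫ t in (0:ℝ)..1, ∫ r in σ..l, P2 t r ≤
      ∫ t in (0:ℝ)..1, ∫ r in σ..l, ((1/(2*B)) * W t r + (B/(2*l^2)) * P4 t r) := by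
    apply aux_dbl_mono zero_le_one hσl.le _ _ (c2'.mono sub)
      ((continuousOn_const.mul (cW.mono sub)).add (continuousOn_const.mul (c4'.mono sub)))
    intro t ht r hr
    have hr0 : 0 < r := lt_of_lt_of_le hσ hr.1
    have hN := wN_pos (α := α) hκ.1 ht.1 hr0
    have p2 : r^δ = r * r^(δ-1) := by
      rw [Real.rpow_sub hr0 δ 1, Real.rpow_one]; field_simp
    simp only [P2, W, P4]
    rw [p2]
    have hq : 0 < r^(δ-1) * wN α κ t r := by positivity
    have hll : l^2 ≤ (2*l-r)^2 := by
      have := hr.2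
      apply pow_le_pow_left₀ hl.le; linarith
    have am : r * |g t r| ≤ (1/(2*B)) * (l^2 * r^2 * (g t r)^2) + B/(2*l^2) := by
      have h1 : 0 ≤ (l * (r * |g t r|) - B / l)^2 / (2 * B) := by positivity
      have h2 : (l * (r * |g t r|) - B / l)^2 / (2 * B) =
        (1/(2*B)) * (l^2 * r^2 * |g t r|^2) + B/(2*l^2) - r * |g t r| := by
        field_simp; ring
      rw [sq_abs] at h2
      linarith
    calc r * r^(δ-1) * wN α κ t r * |g t r| = (r^(δ-1) * wN α κ t r) * (r * |g t r|) := by ring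
      _ ≤ (r^(δ-1) * wN α κ t r) * ((1/(2*B)) * (l^2 * r^2 * (g t r)^2) + B/(2*l^2)) := by gcongr
      _ ≤ (r^(δ-1) * wN α κ t r) * ((1/(2*B)) * ((2*l-r)^2 * r^2 * (g t r)^2) + B/(2*l^2)) := by gcongr
      _ = _ := by ring
  rw [aux_dbl_add zero_le_one hσl.le (fun t r => (1/(2*B)) * W t r) (fun t r => (B/(2*l^2)) * P4 t r)
    (continuousOn_const.mul (cW.mono sub)) (continuousOn_const.mul (c4'.mono sub)),
    aux_dbl_smul, aux_dbl_smul] at hamgm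
  have hP2 : ∫ t in (0:ℝ)..1, ∫ r in σ..l, P2 t r ≤
      (36 + C0^4) * B * CJ + 2 * K * σ^δ + C0 * B / δ + (B/(2*l^2)) * CJ := by
    refine hamgm.trans ?_
    have h1 : (1/(2*B)) * (∫ t in (0:ℝ)..1, ∫ r in σ..l, W t r) ≤ (1/(2*B)) *
      (2 * ((36 + C0^4) * B^2 * CJ + 2 * B * K * σ^δ + C0 * B^2 * (1/δ))) := by
      gcongr
      exact hX2.trans hX
    have h2 : (1/(2*B)) *
      (2 * ((36 + C0^4) * B^2 * CJ + 2 * B * K * σ^δ + C0 * B^2 * (1/δ))) =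
      (36 + C0^4) * B * CJ + 2 * K * σ^δ + C0 * B / δ := by field_simp
    have h3 : (B/(2*l^2)) * (∫ t in (0:ℝ)..1, ∫ r in σ..l, P4 t r) ≤ (B/(2*l^2)) * CJ := by gcongr
    linarith
  have hfin : ∫ t in (0:ℝ)..1, ∫ r in σ..l, r^(-(2-2*α-δ)) * |g t r| ≤
      ∫ t in (0:ℝ)..1, ∫ r in σ..l, P1 t r := by
    apply aux_dbl_mono zero_le_one hσl.le _ _ (((rpow_cont2 _).mul hs.cg.abs).mono sub) (c1'.mono sub)
    intro t ht r hr
    have hr0 : 0 < r := lt_of_lt_of_le hσ hr.1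
    simp only [P1]
    gcongr
    unfold wm
    rw [mul_add, ← Real.rpow_add hr0]
    have : r^(-(2-2*α-δ)) = r^(δ + (2*α-2)) := by congr 1; ring
    rw [this]
    have := hκ.1
    have : 0 ≤ r^δ * (κ * r^(-2:ℝ)) := by positivity
    linarith
  refine hfin.trans ?_
  rw [div_mul_eq_mul_div, le_div_iff₀ hc2p]
  have hS : 0 < σ^δ := by positivity
  have h1 := mul_le_mul_of_nonneg_left hP2 hC2p.le
  have h2 : 0 ≤ (2 * C2 + 1 + 10 * C0) * B := by positivity
  have h3 : 0 ≤ C2 * ((36 + C0^4) * CJ + C0/δ + CJ/(2*l^2)) * (K * σ^δ) := by positivity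
  have h4 : C2 * (C0 * B / δ) = C2 * (C0 / δ) * B := by ring
  have h5 : C2 * (B / (2*l^2) * CJ) = C2 * (CJ/(2*l^2)) * B := by ring
  linarith


theorem int_hasDeriv {h : ℝ → ℝ} (hh : ContinuousOn h (Ioi 0)) {x r : ℝ} (hx : 0 < x) (hr : 0 < r) :
    HasDerivAt (fun r => ∫ s in x..r, h s) (h r) r := by
  have hsub : uIcc x r ⊆ Ioi 0 := by
    intro y hy
    exact lt_of_lt_of_le (lt_min hx hr) hy.1
  have h1 : IntervalIntegrable h volume x r := (hh.mono hsub).intervalIntegrable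
  exact intervalIntegral.integral_hasDerivAt_right h1
    (hh.stronglyMeasurableAtFilter isOpen_Ioi r hr) (hh.continuousAt (Ioi_mem_nhds hr))

/-- integrating factor -/
noncomputable def oP (a c : ℝ → ℝ) (x r : ℝ) : ℝ := Real.exp (∫ s in x..r, c s / a s)

theorem oP_pos (a c : ℝ → ℝ) (x r : ℝ) : 0 < oP a c x r := Real.exp_pos _

theorem oP_deriv {a c : ℝ → ℝ} (ha : ContinuousOn a (Ioi 0)) (hc : ContinuousOn c (Ioi 0))
    (hap : ∀ r, 0 < r → 0 < a r) {x r : ℝ} (hx : 0 < x) (hr : 0 < r) :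
    HasDerivAt (oP a c x) (oP a c x r * (c r / a r)) r :=
  (int_hasDeriv (hc.div ha (fun r hr => (hap r hr).ne')) hx hr).exp

theorem oP_cont {a c : ℝ → ℝ} (ha : ContinuousOn a (Ioi 0)) (hc : ContinuousOn c (Ioi 0))
    (hap : ∀ r, 0 < r → 0 < a r) {x : ℝ} (hx : 0 < x) : ContinuousOn (oP a c x) (Ioi 0) :=
  fun _ hr => (oP_deriv ha hc hap hx hr).continuousAt.continuousWithinAt

/-- derivative of the solution of the ODE with initial slope s -/
noncomputable def oS1 (a c : ℝ → ℝ) (N : ℝ → ℝ) (x s r : ℝ) : ℝ :=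
  (s + ∫ y in x..r, oP a c x y / a y * N y) / oP a c x r

noncomputable def oS (a c : ℝ → ℝ) (N : ℝ → ℝ) (x A s r : ℝ) : ℝ :=
  A + ∫ y in x..r, oS1 a c N x s y

theorem oS1_deriv {a c N : ℝ → ℝ} (ha : ContinuousOn a (Ioi 0)) (hc : ContinuousOn c (Ioi 0))
    (hap : ∀ r, 0 < r → 0 < a r) (hN : ContinuousOn N (Ioi 0)) {x s r : ℝ} (hx : 0 < x) (hr : 0 < r) :
    HasDerivAt (oS1 a c N x s) ((N r - c r * oS1 a c N x s r) / a r) r := by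
  have hp := oP_pos a c x r
  have cp := oP_cont ha hc hap hx
  have d1 := (int_hasDeriv ((cp.div ha (fun r hr => (hap r hr).ne')).mul hN) hx hr).const_add s
  refine (d1.fun_div (oP_deriv ha hc hap hx hr) hp.ne').congr_deriv ?_
  have ha' := hap r hr
  unfold oS1
  simp only [Pi.mul_apply, Pi.div_apply]
  field_simp

theorem oS1_cont {a c N : ℝ → ℝ} (ha : ContinuousOn a (Ioi 0)) (hc : ContinuousOn c (Ioi 0))
    (hap : ∀ r, 0 < r → 0 < a r) (hN : ContinuousOn N (Ioi 0)) {x s : ℝ} (hx : 0 < x) :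
    ContinuousOn (oS1 a c N x s) (Ioi 0) :=
  fun _ hr => (oS1_deriv ha hc hap hN hx hr).continuousAt.continuousWithinAt

theorem oS_deriv {a c N : ℝ → ℝ} (ha : ContinuousOn a (Ioi 0)) (hc : ContinuousOn c (Ioi 0))
    (hap : ∀ r, 0 < r → 0 < a r) (hN : ContinuousOn N (Ioi 0)) {x A s r : ℝ} (hx : 0 < x) (hr : 0 < r) :
    HasDerivAt (oS a c N x A s) (oS1 a c N x s r) r :=
  (int_hasDeriv (oS1_cont ha hc hap hN hx) hx hr).const_add A

noncomputable def oV (a c : ℝ → ℝ) (x r : ℝ) : ℝ := ∫ y in x..r, 1 / oP a c x y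

theorem oV_pos {a c : ℝ → ℝ} (ha : ContinuousOn a (Ioi 0)) (hc : ContinuousOn c (Ioi 0))
    (hap : ∀ r, 0 < r → 0 < a r) {x y : ℝ} (hx : 0 < x) (hxy : x < y) : 0 < oV a c x y := by
  apply intervalIntegral.intervalIntegral_pos_of_pos_on _ _ hxy
  · apply ContinuousOn.intervalIntegrable_of_Icc hxy.le
    exact (continuousOn_const.div (oP_cont ha hc hap hx) (fun r _ => (oP_pos a c x r).ne')).mono
      (fun r hr => lt_of_lt_of_le hx hr.1)
  · intro r _
    have := oP_pos a c x r
    positivity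

theorem oS_split {a c N : ℝ → ℝ} (ha : ContinuousOn a (Ioi 0)) (hc : ContinuousOn c (Ioi 0))
    (hap : ∀ r, 0 < r → 0 < a r) (hN : ContinuousOn N (Ioi 0)) {x A s r : ℝ} (hx : 0 < x) (hr : 0 < r) :
    oS a c N x A s r = A + s * oV a c x r + oS a c N x 0 0 r := by
  have hsub : uIcc x r ⊆ Ioi 0 := by
    intro y hy
    exact lt_of_lt_of_le (lt_min hx hr) hy.1
  unfold oS oV
  rw [← intervalIntegral.integral_const_mul, zero_add, add_assoc, ← intervalIntegral.integral_add]
  · congr 2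
    funext y
    unfold oS1; ring
  · apply ContinuousOn.intervalIntegrable
    exact (continuousOn_const.mul (continuousOn_const.div (oP_cont ha hc hap hx)
      (fun r _ => (oP_pos a c x r).ne'))).mono hsub
  · exact ((oS1_cont ha hc hap hN hx).mono hsub).intervalIntegrable

/-- parametric integral with variable endpoint -/
theorem aux_parcont_var {I : Set ℝ} {k : ℝ → ℝ → ℝ} {x : ℝ} (hx : 0 < x)
    (hk : ContinuousOn (fun p : ℝ × ℝ => k p.1 p.2) (I ×ˢ Ioi 0)) :
    ContinuousOn (fun p : ℝ × ℝ => ∫ y in x..p.2, k p.1 y) (I ×ˢ Ioi 0) := by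
  have h1 : ContinuousOn (fun p : ℝ × ℝ => ∫ θ in (0:ℝ)..1,
      (p.2 - x) * k p.1 (x + (p.2 - x) * θ)) (I ×ˢ Ioi 0) := by
    apply aux_parcont (I ×ˢ Ioi 0) 0 1 zero_le_one
      (fun p θ => (p.2 - x) * k p.1 (x + (p.2 - x) * θ))
    apply ContinuousOn.mul (by fun_prop)
    have : ContinuousOn (fun q : (ℝ × ℝ) × ℝ => ((q.1.1, x + (q.1.2 - x) * q.2) : ℝ × ℝ))
      ((I ×ˢ Ioi 0) ×ˢ Icc 0 1) := by fun_prop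
    refine hk.comp this ?_
    rintro ⟨⟨t, r⟩, θ⟩ ⟨⟨h1, h2⟩, h3⟩
    refine ⟨h1, ?_⟩
    simp only [mem_Ioi, mem_Icc] at *
    rcases eq_or_lt_of_le h3.2 with h | h
    · rw [h]; linarith
    · nlinarith [mul_nonneg h3.1 h2.le, mul_pos (sub_pos.2 h) hx]
  refine h1.congr ?_
  rintro ⟨t, r⟩ -
  simp only
  rw [intervalIntegral.integral_const_mul, intervalIntegral.mul_integral_comp_add_mul]
  simp


theorem second_test {ψ ψ1 : ℝ → ℝ} {y m : ℝ} (hmax : IsLocalMax ψ y)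
    (h1 : ∀ᶠ z in nhds y, HasDerivAt ψ (ψ1 z) z) (h2 : HasDerivAt ψ1 m y) : ψ1 y = 0 ∧ m ≤ 0 := by
  have h0 : ψ1 y = 0 := hmax.hasDerivAt_eq_zero h1.self_of_nhds
  refine ⟨h0, ?_⟩
  by_contra hm
  push Not at hm
  have e1 : deriv ψ =ᶠ[nhds y] ψ1 := h1.mono (fun z hz => hz.deriv)
  have hmin : IsLocalMin ψ y := by
    apply isLocalMin_of_deriv_deriv_pos
    · rw [e1.deriv_eq, h2.deriv]; exact hm
    · rw [e1.self_of_nhds, h0]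
    · exact h1.self_of_nhds.continuousAt
  have hconst : ψ =ᶠ[nhds y] fun _ => ψ y := by
    filter_upwards [hmax, hmin] with z hz1 hz2
    exact le_antisymm hz1 hz2
  have e2 : ψ1 =ᶠ[nhds y] fun _ => 0 := by
    filter_upwards [hconst.eventuallyEq_nhds, h1] with z hz hz1
    have := hz1.congr_of_eventuallyEq hz.symm
    exact this.unique (hasDerivAt_const z (ψ y))
  have := (e2.hasDerivAt_iff.1 h2).unique (hasDerivAt_const y 0)
  linarith

theorem slide_deriv {k : ℝ → ℝ} (hk : ContinuousOn k (Ioi 0)) {s h : ℝ} (hs : 0 < s) (hh : 0 ≤ h) :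
    HasDerivAt (fun s => ∫ σ in s..s+h, k σ) (k (s+h) - k s) s := by
  have hsh : 0 < s + h := by linarith
  have d1 := int_hasDeriv hk one_pos hs
  have d2 := (int_hasDeriv hk one_pos hsh).comp_add_const s h
  refine (d2.sub d1).congr_of_eventuallyEq ?_
  filter_upwards [Ioi_mem_nhds hs] with z hz
  have hz' : (0:ℝ) < z := hz
  have ii : ∀ x y : ℝ, 0 < x → 0 < y → IntervalIntegrable k volume x y := fun x y hx hy =>
    (hk.mono (fun w hw => lt_of_lt_of_le (lt_min hx hy) hw.1)).intervalIntegrable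
  have := intervalIntegral.integral_interval_sub_left (ii 1 (z+h) one_pos (by linarith)) (ii 1 z one_pos hz')
  simp only [Pi.sub_apply]
  exact this.symm

theorem riemann_unif {f : ℝ → ℝ → ℝ}
    (hf : ContinuousOn (fun p : ℝ × ℝ => f p.1 p.2) (Ioi 0 ×ˢ Ioi 0))
    {T1 T2 x1 x2 h η : ℝ} (hT : 0 < T1) (hx : 0 < x1) (hh : 0 < h) (hη : 0 < η) :
    ∃ n : ℕ, 0 < n ∧ ∀ s ∈ Icc T1 T2, ∀ y ∈ Icc x1 x2,
      |(∑ i ∈ Finset.range n, (h/n) * f (s + i * (h/n)) y) - ∫ σ in s..s+h, f σ y| ≤ η := by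
  have hcomp : IsCompact (Icc T1 (T2+h) ×ˢ Icc x1 x2) := isCompact_Icc.prod isCompact_Icc
  have hsub : Icc T1 (T2+h) ×ˢ Icc x1 x2 ⊆ Ioi (0:ℝ) ×ˢ Ioi (0:ℝ) := by
    rintro ⟨s, y⟩ ⟨h1, h2⟩
    exact ⟨lt_of_lt_of_le hT h1.1, lt_of_lt_of_le hx h2.1⟩
  have huc := hcomp.uniformContinuousOn_of_continuous (hf.mono hsub)
  rw [Metric.uniformContinuousOn_iff] at huc
  obtain ⟨ω, hω, huc⟩ := huc (η/h) (by positivity)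
  obtain ⟨n, hn⟩ := exists_nat_gt (h/ω)
  have hn0 : (0:ℝ) < n := lt_of_le_of_lt (by positivity) hn
  have hn1 : 0 < n := by exact_mod_cast hn0
  refine ⟨n, hn1, ?_⟩
  intro s hs y hy
  have hs0 : 0 < s := lt_of_lt_of_le hT hs.1
  have hy0 : 0 < y := lt_of_lt_of_le hx hy.1
  set τ := h/n with hτ
  have hτ0 : 0 < τ := by positivity
  have hτω : τ < ω := by
    rw [hτ, div_lt_iff₀ hn0]; rw [div_lt_iff₀ hω] at hn; linarith
  have hnτ : n * τ = h := by rw [hτ]; field_simp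
  have ck : ContinuousOn (fun σ => f σ y) (Ioi 0) := aux_slice_t hf hy0
  have ii : ∀ x y' : ℝ, 0 < x → 0 < y' → IntervalIntegrable (fun σ => f σ y) volume x y' := fun x y hx hy =>
    (ck.mono (fun w hw => lt_of_lt_of_le (lt_min hx hy) hw.1)).intervalIntegrable
  have hsum := intervalIntegral.sum_integral_adjacent_intervals (μ := volume) (f := fun σ => f σ y)
    (a := fun i : ℕ => s + i * τ) (n := n) (fun i _ => ii _ _ (by positivity) (by positivity))
  simp only [Nat.cast_zero, zero_mul, add_zero, hnτ] at hsum
  rw [← hsum, ← Finset.sum_sub_distrib]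
  have hterm : ∀ i ∈ Finset.range n, |τ * f (s + i * τ) y -
      ∫ σ in s + (i:ℝ) * τ..s + ((i+1:ℕ):ℝ) * τ, f σ y| ≤ (η/h) * τ := by
    intro i hi
    have hi' : (i:ℝ) + 1 ≤ n := by
      have := Finset.mem_range.1 hi
      exact_mod_cast this
    have e1 : τ * f (s + i * τ) y = ∫ σ in s + (i:ℝ) * τ..s + ((i+1:ℕ):ℝ) * τ, f (s + i*τ) y := by
      rw [intervalIntegral.integral_const, smul_eq_mul]; push_cast; ring
    rw [e1, ← intervalIntegral.integral_sub (by simp) (ii _ _ (by positivity) (by positivity))]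
    have hb := intervalIntegral.norm_integral_le_of_norm_le_const (a := s + (i:ℝ) * τ)
      (b := s + ((i+1:ℕ):ℝ) * τ) (f := fun σ => f (s + i*τ) y - f σ y) (C := η/h) ?_
    · have e2 : |s + ((i+1:ℕ):ℝ) * τ - (s + (i:ℝ) * τ)| = τ := by
        push_cast
        rw [show s + ((i:ℝ)+1) * τ - (s + (i:ℝ) * τ) = τ by ring, abs_of_pos hτ0]
      rw [e2] at hb
      exact hb
    · intro σ hσ
      have hle : s + (i:ℝ) * τ ≤ s + ((i+1:ℕ):ℝ) * τ := by push_cast; linarith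
      rw [uIoc_of_le hle] at hσ
      have h1 := hσ.1
      have h2 := hσ.2
      push_cast at h2
      have h3 : ((i:ℝ)+1) * τ ≤ n * τ := by gcongr
      have h4 : 0 ≤ (i:ℝ) * τ := by positivity
      have := huc (s + i*τ, y) ⟨⟨by linarith [hs.1], by linarith [hs.2]⟩, hy⟩ (σ, y)
        ⟨⟨by linarith [hs.1], by linarith [hs.2]⟩, hy⟩ (by
          rw [Prod.dist_eq, dist_self, Real.dist_eq]
          rw [max_eq_left (abs_nonneg _), abs_sub_comm, abs_of_pos (by linarith)]
          linarith)
      rw [Real.dist_eq] at this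
      exact this.le
  refine (Finset.abs_sum_le_sum_abs _ _).trans ((Finset.sum_le_sum hterm).trans ?_)
  rw [Finset.sum_const, Finset.card_range, nsmul_eq_mul]
  apply le_of_eq
  rw [show (n:ℝ) * (η/h * τ) = η/h * (n * τ) by ring, hnτ]
  field_simp

structure PSol (a c : ℝ → ℝ) (f f' f'' : ℝ → ℝ → ℝ) (B : ℝ) : Prop where
  cf : ContinuousOn (fun p : ℝ × ℝ => f p.1 p.2) (Ioi 0 ×ˢ Ioi 0)
  bf : ∀ t, 0 < t → ∀ r, 0 < r → |f t r| ≤ B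
  f_r : ∀ t, 0 < t → ∀ r, 0 < r → HasDerivAt (f t) (f' t r) r
  f_rr : ∀ t, 0 < t → ∀ r, 0 < r → HasDerivAt (f' t) (f'' t r) r
  f_t : ∀ t, 0 < t → ∀ r, 0 < r → HasDerivAt (fun τ => f τ r) (a r * f'' t r + c r * f' t r) t

theorem PSol.neg {a c : ℝ → ℝ} {f f' f'' : ℝ → ℝ → ℝ} {B : ℝ} (h : PSol a c f f' f'' B) :
    PSol a c (fun t r => - f t r) (fun t r => - f' t r) (fun t r => - f'' t r) B where
  cf := h.cf.neg
  bf := fun t ht r hr => by rw [abs_neg]; exact h.bf t ht r hr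
  f_r := fun t ht r hr => (h.f_r t ht r hr).fun_neg
  f_rr := fun t ht r hr => (h.f_rr t ht r hr).fun_neg
  f_t := fun t ht r hr => (h.f_t t ht r hr).fun_neg.congr_deriv (by ring)

theorem cmp_le {a c : ℝ → ℝ} {f f' f'' : ℝ → ℝ → ℝ} {B : ℝ} (ha : ContinuousOn a (Ioi 0))
    (hc : ContinuousOn c (Ioi 0)) (hap : ∀ r, 0 < r → 0 < a r) (hp : PSol a c f f' f'' B)
    {t h x1 x2 : ℝ} (ht : 0 < t) (hh : 0 < h) (hx1 : 0 < x1) (hx : x1 < x2)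
    {S S1 S2 : ℝ → ℝ} (hS : ∀ r, 0 < r → HasDerivAt S (S1 r) r)
    (hS1 : ∀ r, 0 < r → HasDerivAt S1 (S2 r) r)
    (hSe : ∀ r, 0 < r → a r * S2 r + c r * S1 r = f (t+h) r - f t r)
    (hb1 : ∫ s in t..t+h, f s x1 ≤ S x1) (hb2 : ∫ s in t..t+h, f s x2 ≤ S x2) :
    ∀ r ∈ Icc x1 x2, ∫ s in t..t+h, f s r ≤ S r := by
  intro y0 hy0
  by_contra hcon
  push Not at hcon
  have pos_of : ∀ y ∈ Icc x1 x2, 0 < y := fun y hy => lt_of_lt_of_le hx1 hy.1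
  let F : ℝ → ℝ → ℝ := fun s y => ∫ σ in s..s+h, f σ y
  let N : ℝ → ℝ → ℝ := fun s y => f (s+h) y - f s y
  have hFd : ∀ s, 0 < s → ∀ y, 0 < y → HasDerivAt (fun s => F s y) (N s y) s :=
    fun s hs y hy => slide_deriv (aux_slice_t hp.cf hy) hs hh.le
  have hB : 0 ≤ B := (abs_nonneg _).trans (hp.bf t ht x1 hx1)
  have hNb : ∀ s, 0 < s → ∀ y, 0 < y → |N s y| ≤ 2 * B := by
    intro s hs y hy
    refine (abs_sub _ _).trans ?_
    linarith [hp.bf s hs y hy, hp.bf (s+h) (by linarith) y hy]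
  have hFlip : ∀ s s', 0 < s → 0 < s' → ∀ y, 0 < y → |F s y - F s' y| ≤ 2 * B * |s - s'| := by
    intro s s' hs hs' y hy
    have := Convex.norm_image_sub_le_of_norm_hasDerivWithin_le (f := fun s => F s y)
      (f' := fun s => N s y) (C := 2*B) (s := Ioi 0) (x := s') (y := s)
      (fun z hz => (hFd z hz y hy).hasDerivWithinAt) (fun z hz => hNb z hz y hy) (convex_Ioi 0) hs' hs
    exact this
  set M0 := F t y0 - S y0 with hM0d
  have hM0 : 0 < M0 := sub_pos.2 hcon
  -- barrier
  have c1 : ContinuousOn (fun _ : ℝ => (1:ℝ)) (Ioi 0) := continuousOn_const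
  let W : ℝ → ℝ := oS a c (fun _ => 1) x1 0 0
  let W1 : ℝ → ℝ := oS1 a c (fun _ => 1) x1 0
  have hW : ∀ r, 0 < r → HasDerivAt W (W1 r) r := fun r hr => oS_deriv ha hc hap c1 hx1 hr
  have hW1 : ∀ r, 0 < r → HasDerivAt W1 ((1 - c r * W1 r) / a r) r :=
    fun r hr => oS1_deriv ha hc hap c1 hx1 hr
  have cW : ContinuousOn W (Icc x1 x2) := fun r hr =>
    (hW r (pos_of r hr)).continuousAt.continuousWithinAt
  obtain ⟨Mw, hMw⟩ := isCompact_Icc.exists_bound_of_continuousOn cW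
  have hMw0 : 0 ≤ Mw := (norm_nonneg _).trans (hMw x1 ⟨le_rfl, hx.le⟩)
  set μ := M0 / (8 * (Mw+1)) with hμd
  have hμ : 0 < μ := by positivity
  have hμW : ∀ y ∈ Icc x1 x2, |μ * W y| ≤ M0/8 := by
    intro y hy
    rw [abs_mul, abs_of_pos hμ]
    have h1 : |W y| ≤ Mw + 1 := (hMw y hy).trans (by linarith)
    calc μ * |W y| ≤ μ * (Mw+1) := by gcongr
      _ = M0/8 := by rw [hμd]; field_simp
  -- time window
  have cN : ContinuousOn (fun p : ℝ × ℝ => N p.1 p.2) (Ioi 0 ×ˢ Ioi 0) := by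
    refine ContinuousOn.sub ?_ hp.cf
    have : ContinuousOn (fun p : ℝ × ℝ => ((p.1 + h, p.2) : ℝ × ℝ)) (Ioi 0 ×ˢ Ioi 0) := by fun_prop
    refine hp.cf.comp this ?_
    rintro ⟨s, y⟩ ⟨h1, h2⟩
    exact ⟨add_pos h1 hh, h2⟩
  have hcomp : IsCompact (Icc (t/2) (t+1) ×ˢ Icc x1 x2) := isCompact_Icc.prod isCompact_Icc
  have huc := hcomp.uniformContinuousOn_of_continuous (cN.mono (by
    rintro ⟨s, y⟩ ⟨h1, h2⟩
    exact ⟨lt_of_lt_of_le (half_pos ht) h1.1, pos_of y h2⟩))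
  rw [Metric.uniformContinuousOn_iff] at huc
  obtain ⟨ω, hω, huc⟩ := huc (μ/4) (by positivity)
  obtain ⟨θ, hθ, hθ1, hθ2, hθ3, hθ4⟩ : ∃ θ : ℝ, 0 < θ ∧ 2*θ < ω ∧ 2*θ ≤ t/2 ∧ 2*θ ≤ 1 ∧
      2 * B * (2*θ) ≤ M0/8 := by
    refine ⟨min (ω/4) (min (t/4) (min (1/2) (M0/(32*(B+1))))), by positivity, ?_, ?_, ?_, ?_⟩
    · have := min_le_left (ω/4) (min (t/4) (min (1/2) (M0/(32*(B+1)))))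
      linarith
    · have := (min_le_right (ω/4) (min (t/4) (min (1/2) (M0/(32*(B+1)))))).trans (min_le_left _ _)
      linarith
    · have := (min_le_right (ω/4) (min (t/4) (min (1/2) (M0/(32*(B+1)))))).trans
        ((min_le_right _ _).trans (min_le_left _ _))
      linarith
    · have h1 := (min_le_right (ω/4) (min (t/4) (min (1/2) (M0/(32*(B+1)))))).trans
        ((min_le_right _ _).trans (min_le_right _ _))
      calc _ ≤ 2 * (B+1) * (2 * (M0/(32*(B+1)))) := by gcongr; linarith
        _ = M0/8 := by field_simp; norm_num
  have hosc : ∀ s ∈ Icc (t-2*θ) (t+2*θ), ∀ y ∈ Icc x1 x2, N t y - μ/4 ≤ N s y := by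
    intro s hs y hy
    have := huc (s, y) ⟨⟨by linarith [hs.1], by linarith [hs.2]⟩, hy⟩ (t, y)
      ⟨⟨by linarith, by linarith⟩, hy⟩ (by
        rw [Prod.dist_eq, dist_self, Real.dist_eq, max_eq_left (abs_nonneg _), abs_lt]
        constructor <;> linarith [hs.1, hs.2])
    rw [Real.dist_eq, abs_lt] at this
    linarith [this.1]
  set lam := θ^2 / (2 * B * (2*θ) + 2) with hlamd
  have hlam : 0 < lam := by positivity
  have hlam2 : θ^2 / lam = 2 * B * (2*θ) + 2 := by rw [hlamd]; field_simp
  set ρ := min θ (lam * μ/4) with hρd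
  have hρ : 0 < ρ := by positivity
  have hρθ : ρ ≤ θ := min_le_left _ _
  have hρl : ρ / lam ≤ μ/4 := by
    rw [div_le_iff₀ hlam]; exact (min_le_right _ _).trans (by linarith)
  set η := min (1/2) (min (M0/8) (ρ*μ/16)) with hηd
  have hη : 0 < η := by positivity
  have hη1 : η ≤ 1/2 := min_le_left _ _
  have hη2 : η ≤ M0/8 := (min_le_right _ _).trans (min_le_left _ _)
  have hη3 : η ≤ ρ*μ/16 := (min_le_right _ _).trans (min_le_right _ _)
  have hT1 : 0 < t - 2*θ := by linarith
  obtain ⟨n, hn, hR⟩ := riemann_unif hp.cf (T2 := t+2*θ) (x2 := x2) hT1 hx1 hh hη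
  let fn : ℝ → ℝ → ℝ := fun s y => ∑ i ∈ Finset.range n, (h/n) * f (s + i * (h/n)) y
  let fn1 : ℝ → ℝ → ℝ := fun s y => ∑ i ∈ Finset.range n, (h/n) * f' (s + i * (h/n)) y
  let fn2 : ℝ → ℝ → ℝ := fun s y => ∑ i ∈ Finset.range n, (h/n) * f'' (s + i * (h/n)) y
  have hsi : ∀ s : ℝ, 0 < s → ∀ i : ℕ, 0 < s + i * (h/n) := fun s hs i => by positivity
  have hfn1 : ∀ s, 0 < s → ∀ y, 0 < y → HasDerivAt (fn s) (fn1 s y) y := fun s hs y hy =>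
    HasDerivAt.fun_sum (fun i _ => (hp.f_r _ (hsi s hs i) y hy).const_mul _)
  have hfn2 : ∀ s, 0 < s → ∀ y, 0 < y → HasDerivAt (fn1 s) (fn2 s y) y := fun s hs y hy =>
    HasDerivAt.fun_sum (fun i _ => (hp.f_rr _ (hsi s hs i) y hy).const_mul _)
  have hfnt : ∀ s, 0 < s → ∀ y, 0 < y → HasDerivAt (fun s => fn s y)
      (a y * fn2 s y + c y * fn1 s y) s := by
    intro s hs y hy
    refine (HasDerivAt.fun_sum (fun i (_ : i ∈ Finset.range n) =>
      ((hp.f_t _ (hsi s hs i) y hy).comp_add_const s (i * (h/n))).const_mul (h/n))).congr_deriv ?_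
    simp only [fn2, fn1, Finset.mul_sum, ← Finset.sum_add_distrib]
    apply Finset.sum_congr rfl
    intro i _; ring
  have cfn : ContinuousOn (fun p : ℝ × ℝ => fn p.1 p.2) (Ioi 0 ×ˢ Ioi 0) := by
    apply continuousOn_finsetSum
    intro i _
    apply continuousOn_const.mul
    have : ContinuousOn (fun p : ℝ × ℝ => ((p.1 + i * (h/n), p.2) : ℝ × ℝ)) (Ioi 0 ×ˢ Ioi 0) := by
      fun_prop
    refine hp.cf.comp this ?_
    rintro ⟨s, y⟩ ⟨h1, h2⟩
    exact ⟨hsi s h1 i, h2⟩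
  let Ψ : ℝ × ℝ → ℝ := fun p => fn p.1 p.2 - S p.2 + μ * W p.2 - (p.1 - t)^2 / lam
  have hKsub : Icc (t-2*θ) (t+2*θ) ×ˢ Icc x1 x2 ⊆ Ioi (0:ℝ) ×ˢ Ioi (0:ℝ) := by
    rintro ⟨s, y⟩ ⟨h1, h2⟩
    exact ⟨lt_of_lt_of_le hT1 h1.1, pos_of y h2⟩
  have cΨ : ContinuousOn Ψ (Icc (t-2*θ) (t+2*θ) ×ˢ Icc x1 x2) := by
    have cS : ContinuousOn S (Icc x1 x2) := fun r hr =>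
      (hS r (pos_of r hr)).continuousAt.continuousWithinAt
    have m2 : MapsTo (Prod.snd : ℝ × ℝ → ℝ) (Icc (t-2*θ) (t+2*θ) ×ˢ Icc x1 x2) (Icc x1 x2) :=
      fun p hp => hp.2
    exact (((cfn.mono hKsub).sub (cS.comp continuousOn_snd m2)).add
      (continuousOn_const.mul (cW.comp continuousOn_snd m2))).sub (by fun_prop)
  have htm : t ∈ Icc (t-2*θ) (t+2*θ) := ⟨by linarith, by linarith⟩
  obtain ⟨⟨s, y⟩, ⟨hsK, hyK⟩, hmax⟩ := (isCompact_Icc.prod isCompact_Icc).exists_isMaxOn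
    ⟨(t, y0), ⟨htm, hy0⟩⟩ cΨ
  simp only at hsK hyK
  have hmax' : ∀ s' ∈ Icc (t-2*θ) (t+2*θ), ∀ y' ∈ Icc x1 x2, Ψ (s', y') ≤ Ψ (s, y) :=
    fun s' hs' y' hy' => hmax ⟨hs', hy'⟩
  have hs0 : 0 < s := lt_of_lt_of_le hT1 hsK.1
  have hy0' := pos_of y hyK
  have hst : |s - t| ≤ 2*θ := by rw [abs_le]; constructor <;> linarith [hsK.1, hsK.2]
  have hFst : F s y - F t y ≤ M0/8 ∧ F s y - F t y ≤ 2 * B * (2*θ) := by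
    have h1 := (le_abs_self _).trans (hFlip s t hs0 ht y hy0')
    have h2 : 2 * B * |s - t| ≤ 2 * B * (2*θ) := by gcongr
    constructor <;> linarith
  have hRs := abs_le.1 (hR s hsK y hyK)
  have hRt := abs_le.1 (hR t htm y hyK)
  have hRt0 := abs_le.1 (hR t htm y0 hy0)
  -- time location
  have hsθ : |s - t| ≤ θ := by
    by_contra hgt
    push Not at hgt
    have h1 := hmax' t htm y hyK
    simp only [Ψ, sub_self] at h1
    have h2 : θ^2/lam ≤ (s-t)^2/lam := by
      rw [← sq_abs (s-t)]; gcongr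
    have h3 : (0:ℝ)^2 / lam = 0 := by simp
    rw [h3] at h1
    have h4 := hFst.2
    simp only [F] at h4
    simp only [fn] at h1
    linarith [hRs.1, hRs.2, hRt.1, hRt.2]
  -- boundary exclusion
  have hval : M0 - M0/8 - M0/8 ≤ Ψ (s, y) := by
    have h1 := hmax' t htm y0 hy0
    refine le_trans ?_ h1
    simp only [Ψ, sub_self]
    have h3 : (0:ℝ)^2 / lam = 0 := by simp
    rw [h3]
    have := (abs_le.1 (hμW y0 hy0)).1
    simp only [fn]
    have h5 : M0 = (∫ σ in t..t+h, f σ y0) - S y0 := hM0d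
    linarith [hRt0.1, hRt0.2]
  have hupp : Ψ (s, y) ≤ F t y - S y + M0/8 + M0/8 + M0/8 := by
    simp only [Ψ, fn]
    have h1 := (abs_le.1 (hμW y hyK)).2
    have h2 : 0 ≤ (s-t)^2/lam := by positivity
    have h4 := hFst.1
    simp only [F] at h4 ⊢
    linarith [hRs.1, hRs.2]
  have hyI : y ∈ Ioo x1 x2 := by
    refine ⟨lt_of_le_of_ne hyK.1 ?_, lt_of_le_of_ne hyK.2 ?_⟩
    · rintro rfl
      have : F t x1 - S x1 ≤ 0 := sub_nonpos.2 hb1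
      linarith
    · rintro rfl
      have : F t y - S y ≤ 0 := sub_nonpos.2 hb2
      linarith
  -- derivative in time
  have hsI : s ∈ Ioo (t-2*θ) (t+2*θ) := by
    rw [abs_le] at hsθ
    constructor <;> linarith [hsθ.1, hsθ.2]
  have et : a y * fn2 s y + c y * fn1 s y = 2 * (s-t) / lam := by
    have hm : IsLocalMax (fun s' => Ψ (s', y)) s := by
      filter_upwards [Ioo_mem_nhds hsI.1 hsI.2] with s' hs'
      exact hmax' s' (Ioo_subset_Icc_self hs') y hyK
    have hd : HasDerivAt (fun s' => Ψ (s', y)) (a y * fn2 s y + c y * fn1 s y - 2 * (s-t)/lam) s := by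
      have d1 := (((hfnt s hs0 y hy0').sub_const (S y)).add_const (μ * W y)).fun_sub
        ((((hasDerivAt_id s).sub_const t).fun_pow 2).div_const lam)
      refine d1.congr_deriv ?_
      simp only [id]; push_cast; ring
    have := hm.hasDerivAt_eq_zero hd
    linarith
  have er := second_test (ψ := fun y' => Ψ (s, y')) (ψ1 := fun y' => fn1 s y' - S1 y' + μ * W1 y')
    (y := y) (m := fn2 s y - S2 y + μ * ((1 - c y * W1 y)/a y))
    (by
      filter_upwards [Ioo_mem_nhds hyI.1 hyI.2] with y' hy'
      exact hmax' s hsK y' (Ioo_subset_Icc_self hy'))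
    (by
      filter_upwards [Ioi_mem_nhds hy0'] with y' hy'
      exact (((hfn1 s hs0 y' hy').fun_sub (hS y' hy')).fun_add ((hW y' hy').const_mul μ)).sub_const ((s-t)^2/lam))
    (((hfn2 s hs0 y hy0').fun_sub (hS1 y hy0')).fun_add ((hW1 y hy0').const_mul μ))

  have hay := hap y hy0'
  have hkey : 2 * (s-t)/lam ≤ N t y - μ := by
    rw [← et]
    have h1 := hSe y hy0'
    have h2 : a y * (fn2 s y - S2 y + μ * ((1 - c y * W1 y)/a y)) ≤ 0 :=
      mul_nonpos_of_nonneg_of_nonpos hay.le er.2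
    have h3 : a y * (fn2 s y - S2 y + μ * ((1 - c y * W1 y)/a y)) =
      a y * fn2 s y - a y * S2 y + μ - c y * (μ * W1 y) := by field_simp; ring
    have h4 : c y * fn1 s y = c y * S1 y - c y * (μ * W1 y) := by
      have : fn1 s y = S1 y - μ * W1 y := by linarith [er.1]
      rw [this]; ring
    simp only [N]
    linarith
  -- lower bound
  have hsρ : s + ρ ∈ Icc (t-2*θ) (t+2*θ) := by
    rw [abs_le] at hsθ
    constructor <;> linarith [hsθ.1, hsθ.2]
  have hlow : ρ * (N t y - μ/4) ≤ F (s+ρ) y - F s y := by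
    have := Convex.mul_sub_le_image_sub_of_le_deriv (D := Icc s (s+ρ)) (convex_Icc _ _)
      (f := fun s => F s y) (C := N t y - μ/4)
      (fun z hz => (hFd z (lt_of_lt_of_le hs0 hz.1) y hy0').continuousAt.continuousWithinAt)
      (fun z hz => (hFd z (lt_of_lt_of_le hs0 (interior_subset hz).1) y hy0').differentiableAt.differentiableWithinAt)
      (fun z hz => by
        have hz' := interior_subset hz
        rw [(hFd z (lt_of_lt_of_le hs0 hz'.1) y hy0').deriv]
        exact hosc z ⟨hsK.1.trans hz'.1, hz'.2.trans hsρ.2⟩ y hyK)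
      s ⟨le_rfl, by linarith⟩ (s+ρ) ⟨by linarith, le_rfl⟩ (by linarith)
    simp only [add_sub_cancel_left] at this
    linarith
  have hup : F (s+ρ) y - F s y ≤ ρ * (2*(s-t)/lam) + ρ * (ρ/lam) + 2 * η := by
    have h1 := hmax' (s+ρ) hsρ y hyK
    have hRρ := abs_le.1 (hR (s+ρ) hsρ y hyK)
    simp only [Ψ, fn] at h1
    have e1 : (s+ρ-t)^2/lam = (s-t)^2/lam + ρ * (2*(s-t)/lam) + ρ * (ρ/lam) := by ring
    rw [e1] at h1
    simp only [F]
    linarith [hRs.1, hRs.2, hRρ.1, hRρ.2]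
  have h5 : ρ * (2*(s-t)/lam) ≤ ρ * (N t y - μ) := by gcongr
  have h6 : ρ * (ρ/lam) ≤ ρ * (μ/4) := by gcongr
  have h7 : 0 < ρ * μ := by positivity
  linarith


theorem avg_cont {k : ℝ → ℝ → ℝ} {h : ℝ} (hh : 0 ≤ h)
    (hk : ContinuousOn (fun p : ℝ × ℝ => k p.1 p.2) (Ioi 0 ×ˢ Ioi 0)) :
    ContinuousOn (fun p : ℝ × ℝ => ∫ s in p.1..p.1+h, k s p.2) (Ioi 0 ×ˢ Ioi 0) := by
  have h1 : ContinuousOn (fun p : ℝ × ℝ => ∫ θ in (0:ℝ)..h, k (p.1 + θ) p.2) (Ioi 0 ×ˢ Ioi 0) := by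
    apply aux_parcont (Ioi 0 ×ˢ Ioi 0) 0 h hh (fun p θ => k (p.1 + θ) p.2)
    have : ContinuousOn (fun q : (ℝ × ℝ) × ℝ => ((q.1.1 + q.2, q.1.2) : ℝ × ℝ))
      ((Ioi 0 ×ˢ Ioi 0) ×ˢ Icc 0 h) := by fun_prop
    refine hk.comp this ?_
    rintro ⟨⟨t, r⟩, θ⟩ ⟨⟨h1, h2⟩, h3⟩
    exact ⟨add_pos_of_pos_of_nonneg h1 h3.1, h2⟩
  refine h1.congr ?_
  rintro ⟨t, r⟩ -
  simp only
  rw [intervalIntegral.integral_comp_add_left (fun s => k s r)]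
  simp

theorem shift_cont {k : ℝ → ℝ → ℝ} {h : ℝ} (hh : 0 ≤ h)
    (hk : ContinuousOn (fun p : ℝ × ℝ => k p.1 p.2) (Ioi 0 ×ˢ Ioi 0)) :
    ContinuousOn (fun p : ℝ × ℝ => k (p.1 + h) p.2 - k p.1 p.2) (Ioi 0 ×ˢ Ioi 0) := by
  refine ContinuousOn.sub ?_ hk
  have : ContinuousOn (fun p : ℝ × ℝ => ((p.1 + h, p.2) : ℝ × ℝ)) (Ioi 0 ×ˢ Ioi 0) := by fun_prop
  refine hk.comp this ?_
  rintro ⟨s, y⟩ ⟨h1, h2⟩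
  exact ⟨add_pos_of_pos_of_nonneg h1 hh, h2⟩

theorem avg_int {k : ℝ → ℝ → ℝ} {h t r : ℝ} (hh : 0 ≤ h) (ht : 0 < t) (hr : 0 < r)
    (hk : ContinuousOn (fun p : ℝ × ℝ => k p.1 p.2) (Ioi 0 ×ˢ Ioi 0)) :
    IntervalIntegrable (fun s => k s r) volume t (t+h) := by
  apply ContinuousOn.intervalIntegrable_of_Icc (by linarith)
  exact (aux_slice_t hk hr).mono (fun s hs => lt_of_lt_of_le ht hs.1)

theorem avg_deriv_r {k k1 : ℝ → ℝ → ℝ} {h t r : ℝ} (hh : 0 ≤ h) (ht : 0 < t) (hr : 0 < r)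
    (hk : ContinuousOn (fun p : ℝ × ℝ => k p.1 p.2) (Ioi 0 ×ˢ Ioi 0))
    (hk1 : ContinuousOn (fun p : ℝ × ℝ => k1 p.1 p.2) (Ioi 0 ×ˢ Ioi 0))
    (hd : ∀ t, 0 < t → ∀ r, 0 < r → HasDerivAt (k t) (k1 t r) r) :
    HasDerivAt (fun r => ∫ s in t..t+h, k s r) (∫ s in t..t+h, k1 s r) r := by
  have hth : t ≤ t + h := by linarith
  obtain ⟨M, hM⟩ := (isCompact_Icc.prod isCompact_Icc).exists_bound_of_continuousOn
    (hk1.mono (t := Icc t (t+h) ×ˢ Icc (r/2) (2*r)) (by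
      rintro ⟨s, y⟩ ⟨h1, h2⟩
      exact ⟨lt_of_lt_of_le ht h1.1, lt_of_lt_of_le (half_pos hr) h2.1⟩))
  have hnh : Ioo (r/2) (2*r) ∈ nhds r := Ioo_mem_nhds (by linarith) (by linarith)
  have := intervalIntegral.hasDerivAt_integral_of_dominated_loc_of_deriv_le (μ := volume)
    (F := fun r s => k s r) (F' := fun r s => k1 s r) (a := t) (b := t+h) (x₀ := r)
    (s := Ioo (r/2) (2*r)) (bound := fun _ => M) hnh
    (by
      filter_upwards [Ioi_mem_nhds hr] with y hy
      exact (avg_int hh ht hy hk).aestronglyMeasurable_restrict_uIoc)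
    (avg_int hh ht hr hk)
    (avg_int hh ht hr hk1).aestronglyMeasurable_restrict_uIoc
    (by
      refine Eventually.of_forall (fun s hs y hy => ?_)
      rw [uIoc_of_le hth] at hs
      exact hM (s, y) ⟨⟨hs.1.le, hs.2⟩, Ioo_subset_Icc_self hy⟩)
    (by simp)
    (by
      refine Eventually.of_forall (fun s hs y hy => ?_)
      rw [uIoc_of_le hth] at hs
      exact hd s (ht.trans hs.1) y (lt_trans (half_pos hr) hy.1))
  exact this.2

theorem avg_bd {k : ℝ → ℝ → ℝ} {h t r B : ℝ} (hh : 0 ≤ h) (ht : 0 < t)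
    (hb : ∀ s, 0 < s → |k s r| ≤ B) : |∫ s in t..t+h, k s r| ≤ B * h := by
  have := intervalIntegral.norm_integral_le_of_norm_le_const (a := t) (b := t+h) (C := B)
    (f := fun s => k s r) (fun s hs => by
      rw [uIoc_of_le (by linarith)] at hs
      exact hb s (ht.trans hs.1))
  rw [add_sub_cancel_left, abs_of_nonneg hh] at this
  exact this

/-- The time average is a classical solution, with jointly continuous derivative. -/
theorem avg_smooth {a c : ℝ → ℝ} {f f' f'' : ℝ → ℝ → ℝ} {B : ℝ} (ha : ContinuousOn a (Ioi 0))
    (hc : ContinuousOn c (Ioi 0)) (hap : ∀ r, 0 < r → 0 < a r) (hp : PSol a c f f' f'' B)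
    {h : ℝ} (hh : 0 < h) : ∃ g1 : ℝ → ℝ → ℝ,
      ContinuousOn (fun p : ℝ × ℝ => g1 p.1 p.2) (Ioi 0 ×ˢ Ioi 0) ∧
      (∀ t, 0 < t → ∀ r, 0 < r → HasDerivAt (fun r => ∫ s in t..t+h, f s r) (g1 t r) r) ∧
      (∀ t, 0 < t → ∀ r, 0 < r → HasDerivAt (g1 t)
        ((f (t+h) r - f t r - c r * g1 t r) / a r) r) := by
  let F : ℝ → ℝ → ℝ := fun t r => ∫ s in t..t+h, f s r
  let N : ℝ → ℝ → ℝ := fun t r => f (t+h) r - f t r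
  have cF : ContinuousOn (fun p : ℝ × ℝ => F p.1 p.2) (Ioi 0 ×ˢ Ioi 0) := avg_cont hh.le hp.cf
  have cN : ContinuousOn (fun p : ℝ × ℝ => N p.1 p.2) (Ioi 0 ×ˢ Ioi 0) := shift_cont hh.le hp.cf
  let sl : ℝ → ℝ → ℝ → ℝ := fun x1 x2 t =>
    (F t x2 - F t x1 - oS a c (N t) x1 0 0 x2) / oV a c x1 x2
  have key : ∀ t, 0 < t → ∀ x1 x2, 0 < x1 → x1 < x2 → ∀ r ∈ Icc x1 x2,
      F t r = oS a c (N t) x1 (F t x1) (sl x1 x2 t) r := by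
    intro t ht x1 x2 hx1 hx
    have cNt : ContinuousOn (N t) (Ioi 0) := aux_slice_r cN ht
    have hV := oV_pos ha hc hap hx1 hx
    have e1 : oS a c (N t) x1 (F t x1) (sl x1 x2 t) x1 = F t x1 := by simp [oS]
    have e2 : oS a c (N t) x1 (F t x1) (sl x1 x2 t) x2 = F t x2 := by
      rw [oS_split ha hc hap cNt hx1 (hx1.trans hx)]
      simp only [sl]
      rw [div_mul_cancel₀ _ hV.ne']; ring
    have hS : ∀ r, 0 < r → HasDerivAt (oS a c (N t) x1 (F t x1) (sl x1 x2 t))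
        (oS1 a c (N t) x1 (sl x1 x2 t) r) r := fun r hr => oS_deriv ha hc hap cNt hx1 hr
    have hS1 := fun r (hr : 0 < r) => oS1_deriv ha hc hap cNt hx1 hr (s := sl x1 x2 t)
    intro r hr
    apply le_antisymm
    · refine cmp_le ha hc hap hp ht hh hx1 hx hS hS1 ?_ e1.symm.le e2.symm.le r hr
      intro r hr
      have := hap r hr
      field_simp
      simp only [N]; ring
    · have := cmp_le ha hc hap hp.neg ht hh hx1 hx (fun r hr => (hS r hr).fun_neg)
        (fun r hr => (hS1 r hr).fun_neg) ?_ ?_ ?_ r hr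
      · simp only [intervalIntegral.integral_neg] at this
        exact neg_le_neg_iff.1 this
      · intro r hr
        have := hap r hr
        field_simp
        simp only [N]; ring
      · rw [intervalIntegral.integral_neg, e1]
      · rw [intervalIntegral.integral_neg, e2]
  have keyd : ∀ t, 0 < t → ∀ x1 x2, 0 < x1 → ∀ r ∈ Ioo x1 x2,
      HasDerivAt (F t) (oS1 a c (N t) x1 (sl x1 x2 t) r) r := by
    intro t ht x1 x2 hx1 r hr
    have cNt : ContinuousOn (N t) (Ioi 0) := aux_slice_r cN ht
    refine (oS_deriv (A := F t x1) ha hc hap cNt hx1 (hx1.trans hr.1)).congr_of_eventuallyEq ?_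
    filter_upwards [Ioo_mem_nhds hr.1 hr.2] with y hy
    exact key t ht x1 x2 hx1 (hr.1.trans hr.2) y (Ioo_subset_Icc_self hy)
  have keyg : ∀ t, 0 < t → ∀ x1 x2, 0 < x1 → ∀ r ∈ Ioo x1 x2,
      deriv (F t) r = oS1 a c (N t) x1 (sl x1 x2 t) r :=
    fun t ht x1 x2 hx1 r hr => (keyd t ht x1 x2 hx1 r hr).deriv
  refine ⟨fun t r => deriv (F t) r, ?_, ?_, ?_⟩
  · rintro ⟨t0, r0⟩ ⟨ht0, hr0⟩
    simp only [mem_Ioi] at ht0 hr0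
    apply ContinuousAt.continuousWithinAt
    have hx1 : 0 < r0/2 := half_pos hr0
    have hmem : (t0, r0) ∈ Ioi (0:ℝ) ×ˢ Ioo (r0/2) (2*r0) := ⟨ht0, by linarith, by linarith⟩
    have hopen : IsOpen (Ioi (0:ℝ) ×ˢ Ioo (r0/2) (2*r0)) := isOpen_Ioi.prod isOpen_Ioo
    have hsub : Ioi (0:ℝ) ×ˢ Ioo (r0/2) (2*r0) ⊆ Ioi 0 ×ˢ Ioi 0 :=
      prod_mono le_rfl (fun y hy => hx1.trans hy.1)
    have cP := oP_cont ha hc hap hx1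
    have cint : ContinuousOn (fun p : ℝ × ℝ => ∫ y in (r0/2)..p.2,
        oP a c (r0/2) y / a y * N p.1 y) (Ioi 0 ×ˢ Ioi 0) := by
      refine aux_parcont_var hx1 (k := fun t y => oP a c (r0/2) y / a y * N t y) ?_
      exact ((cP.div ha (fun r hr => (hap r hr).ne')).comp continuousOn_snd
        (fun p hp => hp.2)).mul cN
    have cS1 : ∀ s : ℝ → ℝ, ContinuousOn s (Ioi 0) → ContinuousOn (fun p : ℝ × ℝ =>
        oS1 a c (N p.1) (r0/2) (s p.1) p.2) (Ioi 0 ×ˢ Ioi 0) := by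
      intro s hs
      unfold oS1
      refine ((hs.comp continuousOn_fst (fun p hp => hp.1)).add cint).div
        (cP.comp continuousOn_snd (fun p hp => hp.2)) (fun p _ => (oP_pos _ _ _ _).ne')
    have csl : ContinuousOn (sl (r0/2) (2*r0)) (Ioi 0) := by
      simp only [sl]
      apply ContinuousOn.div_const
      refine ((aux_slice_t cF (show (2*r0) ∈ Ioi (0:ℝ) from by simpa using hr0)).sub
        (aux_slice_t cF hx1)).sub ?_
      have h0 := aux_parcont_var hx1 (k := fun t y => oS1 a c (N t) (r0/2) 0 y)
        (cS1 (fun _ => 0) continuousOn_const)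
      have h1 := aux_slice_t (H := fun t r => ∫ y in (r0/2)..r, oS1 a c (N t) (r0/2) 0 y) h0
        (show (2*r0) ∈ Ioi (0:ℝ) from by simpa using hr0)
      exact continuousOn_const.add h1
    have h2 := ((cS1 _ csl).mono hsub).congr (g := fun p : ℝ × ℝ => deriv (F p.1) p.2)
      (fun p hp => keyg p.1 hp.1 _ _ hx1 p.2 hp.2)
    exact h2.continuousAt (hopen.mem_nhds hmem)
  · intro t ht r hr
    have hm : r ∈ Ioo (r/2) (2*r) := ⟨by linarith, by linarith⟩
    exact (keyd t ht _ _ (half_pos hr) r hm).congr_deriv (keyg t ht _ _ (half_pos hr) r hm).symm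
  · intro t ht r hr
    have hm : r ∈ Ioo (r/2) (2*r) := ⟨by linarith, by linarith⟩
    have cNt : ContinuousOn (N t) (Ioi 0) := aux_slice_r cN ht
    have h1 := oS1_deriv (s := sl (r/2) (2*r) t) ha hc hap cNt (half_pos hr) hr
    rw [← keyg t ht _ _ (half_pos hr) r hm] at h1
    refine h1.congr_of_eventuallyEq ?_
    filter_upwards [Ioo_mem_nhds hm.1 hm.2] with y hy
    exact keyg t ht _ _ (half_pos hr) y hy

structure PreSol (a c : ℝ → ℝ) (u g gr gt ut : ℝ → ℝ → ℝ) (B K : ℝ) : Prop where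
  u_t : ∀ t, 0 < t → ∀ r, 0 < r → HasDerivAt (fun τ => u τ r) (ut t r) t
  u_r : ∀ t, 0 < t → ∀ r, 0 < r → HasDerivAt (u t) (g t r) r
  g_r : ∀ t, 0 < t → ∀ r, 0 < r → HasDerivAt (g t) (gr t r) r
  g_t : ∀ t, 0 < t → ∀ r, 0 < r → HasDerivAt (fun τ => g τ r) (gt t r) t
  ut_r : ∀ t, 0 < t → ∀ r, 0 < r → HasDerivAt (ut t) (gt t r) r
  eqn : ∀ t, 0 < t → ∀ r, 0 < r → ut t r = a r * gr t r + c r * g t r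
  cu : ContinuousOn (fun p : ℝ × ℝ => u p.1 p.2) (Ioi 0 ×ˢ Ioi 0)
  cg : ContinuousOn (fun p : ℝ × ℝ => g p.1 p.2) (Ioi 0 ×ˢ Ioi 0)
  cgt : ContinuousOn (fun p : ℝ × ℝ => gt p.1 p.2) (Ioi 0 ×ˢ Ioi 0)
  cut : ContinuousOn (fun p : ℝ × ℝ => ut p.1 p.2) (Ioi 0 ×ˢ Ioi 0)
  bu : ∀ t, 0 < t → ∀ r, 0 < r → |u t r| ≤ B
  but : ∀ t, 0 < t → ∀ r, 0 < r → |ut t r| ≤ K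

noncomputable def dAvg (f : ℝ → ℝ → ℝ) (h t r : ℝ) : ℝ :=
  1 / h^2 * ∫ s in t..t+h, ∫ σ in s..s+h, f σ r

theorem avg_sol {a c : ℝ → ℝ} {f f' f'' : ℝ → ℝ → ℝ} {B : ℝ} (ha : ContinuousOn a (Ioi 0))
    (hc : ContinuousOn c (Ioi 0)) (hap : ∀ r, 0 < r → 0 < a r) (hp : PSol a c f f' f'' B)
    {h : ℝ} (hh : 0 < h) : ∃ g gr gt ut, PreSol a c (dAvg f h) g gr gt ut B (2*B/h) := by
  obtain ⟨g1, cg1, dF, dg1⟩ := avg_smooth ha hc hap hp hh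
  let F : ℝ → ℝ → ℝ := fun t r => ∫ s in t..t+h, f s r
  have cF : ContinuousOn (fun p : ℝ × ℝ => F p.1 p.2) (Ioi 0 ×ˢ Ioi 0) := avg_cont hh.le hp.cf
  have cN : ContinuousOn (fun p : ℝ × ℝ => f (p.1+h) p.2 - f p.1 p.2) (Ioi 0 ×ˢ Ioi 0) :=
    shift_cont hh.le hp.cf
  have h2 : (0:ℝ) < 1/h^2 := by positivity
  have m2 : MapsTo (Prod.snd : ℝ × ℝ → ℝ) (Ioi 0 ×ˢ Ioi 0) (Ioi 0) := fun p hp => hp.2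
  let G2 : ℝ → ℝ → ℝ := fun t r => (f (t+h) r - f t r - c r * g1 t r) / a r
  have cG2 : ContinuousOn (fun p : ℝ × ℝ => G2 p.1 p.2) (Ioi 0 ×ˢ Ioi 0) :=
    (cN.sub ((hc.comp continuousOn_snd m2).mul cg1)).div (ha.comp continuousOn_snd m2)
      (fun p hp => (hap _ hp.2).ne')
  have bF : ∀ t, 0 < t → ∀ r, 0 < r → |F t r| ≤ B * h := fun t ht r hr =>
    avg_bd hh.le ht (fun s hs => hp.bf s hs r hr)
  have Fd : ∀ s, 0 < s → ∀ r, 0 < r → HasDerivAt (fun s => F s r) (f (s+h) r - f s r) s :=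
    fun s hs r hr => slide_deriv (aux_slice_t hp.cf hr) hs hh.le
  refine ⟨fun t r => 1/h^2 * ∫ s in t..t+h, g1 s r, fun t r => 1/h^2 * ∫ s in t..t+h, G2 s r,
    fun t r => 1/h^2 * (g1 (t+h) r - g1 t r), fun t r => 1/h^2 * (F (t+h) r - F t r), ?_⟩
  constructor
  · intro t ht r hr
    exact (slide_deriv (aux_slice_t cF hr) ht hh.le).const_mul _
  · intro t ht r hr
    exact (avg_deriv_r hh.le ht hr cF cg1 dF).const_mul _
  · intro t ht r hr
    exact (avg_deriv_r hh.le ht hr cg1 cG2 dg1).const_mul _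
  · intro t ht r hr
    exact (slide_deriv (aux_slice_t cg1 hr) ht hh.le).const_mul _
  · intro t ht r hr
    exact ((dF (t+h) (by linarith) r hr).fun_sub (dF t ht r hr)).const_mul _
  · intro t ht r hr
    have hsub : ∀ s ∈ uIcc t (t+h), 0 < s := by
      intro s hs
      rw [uIcc_of_le (by linarith)] at hs
      exact lt_of_lt_of_le ht hs.1
    have e1 : ∫ s in t..t+h, (f (s+h) r - f s r) = F (t+h) r - F t r :=
      intervalIntegral.integral_eq_sub_of_hasDerivAt (fun s hs => Fd s (hsub s hs) r hr)
        (avg_int (k := fun s r => f (s+h) r - f s r) hh.le ht hr cN)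
    have e2 : ∫ s in t..t+h, (f (s+h) r - f s r) =
        a r * (∫ s in t..t+h, G2 s r) + c r * ∫ s in t..t+h, g1 s r := by
      rw [← intervalIntegral.integral_const_mul, ← intervalIntegral.integral_const_mul,
        ← intervalIntegral.integral_add ((avg_int hh.le ht hr cG2).const_mul _)
          ((avg_int hh.le ht hr cg1).const_mul _)]
      apply intervalIntegral.integral_congr
      intro s _
      have := hap r hr
      simp only [G2]
      field_simp
      ring
    rw [← e1, e2]; ring
  · exact continuousOn_const.mul (avg_cont hh.le cF)
  · exact continuousOn_const.mul (avg_cont hh.le cg1)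
  · exact continuousOn_const.mul (shift_cont hh.le cg1)
  · exact continuousOn_const.mul (shift_cont hh.le cF)
  · intro t ht r hr
    unfold dAvg
    rw [abs_mul, abs_of_pos h2]
    have := avg_bd (k := F) hh.le ht (fun s hs => bF s hs r hr)
    calc _ ≤ 1/h^2 * (B * h * h) := by gcongr
      _ = B := by field_simp
  · intro t ht r hr
    rw [abs_mul, abs_of_pos h2]
    have := bF t ht r hr
    have h3 := bF (t+h) (by linarith) r hr
    have h4 := abs_sub (F (t+h) r) (F t r)
    calc _ ≤ 1/h^2 * (2 * B * h) := by gcongr; linarith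
      _ = 2*B/h := by field_simp


theorem org_ub {a c : ℝ → ℝ} (ha : ContinuousOn a (Ioi 0)) (hc : ContinuousOn c (Ioi 0))
    (hap : ∀ r, 0 < r → 0 < a r) {α a0 E R : ℝ} (hα : 0 < α) (ha0 : 0 < a0) (hE : 0 ≤ E) (hR : 0 < R)
    (D : ℕ) (hlo : ∀ r, 0 < r → r ≤ R → a0 ≤ a r)
    (hcD : ∀ r, 0 < r → r ≤ R → |r * c r - D * a r| ≤ E * r^(2*α)) :
    ∃ m M : ℝ, 0 < m ∧ 0 < M ∧ ∀ r, 0 < r → r ≤ R → m * r^D ≤ oP a c R r ∧ oP a c R r ≤ M * r^D := by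
  let k : ℝ → ℝ := fun r => (∫ s in R..r, c s / a s) - D * Real.log r
  let e : ℝ := E / (2*α*a0)
  have he : 0 ≤ e := by positivity
  have hk : ∀ r, 0 < r → HasDerivAt k (c r / a r - D * r⁻¹) r := fun r hr =>
    (int_hasDeriv (hc.div ha (fun r hr => (hap r hr).ne')) hR hr).fun_sub
      ((Real.hasDerivAt_log hr.ne').const_mul _)
  have hrp : ∀ r, 0 < r → HasDerivAt (fun r : ℝ => e * r^(2*α)) (e * (2*α*r^(2*α-1))) r := fun r hr =>
    (Real.hasDerivAt_rpow_const (Or.inl hr.ne')).const_mul _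
  have hkb : ∀ r, 0 < r → r ≤ R → |c r / a r - D * r⁻¹| ≤ e * (2*α*r^(2*α-1)) := by
    intro r hr hrR
    have har := hap r hr
    have e1 : c r / a r - D * r⁻¹ = (r * c r - D * a r) / (r * a r) := by field_simp
    rw [e1, abs_div, abs_of_pos (mul_pos hr har), div_le_iff₀ (mul_pos hr har)]
    refine (hcD r hr hrR).trans ?_
    have e2 : r^(2*α) = r^(2*α-1) * r := by
      rw [Real.rpow_sub_one hr.ne']; field_simp
    have e3 : e * (2*α*r^(2*α-1)) * (r * a r) = E * r^(2*α) * (a r / a0) := by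
      simp only [e]; rw [e2]; field_simp
    rw [e3]
    have : 1 ≤ a r / a0 := by rw [le_div_iff₀ ha0]; linarith [hlo r hr hrR]
    exact le_mul_of_one_le_right (by positivity) this
  have mono1 : MonotoneOn (fun r => k r + e * r^(2*α)) (Ioc 0 R) := by
    apply monotoneOn_of_hasDerivWithinAt_nonneg (convex_Ioc 0 R)
      (f' := fun r => c r / a r - D * r⁻¹ + e * (2*α*r^(2*α-1)))
    · exact fun r hr => ((hk r hr.1).fun_add (hrp r hr.1)).continuousAt.continuousWithinAt
    · intro r hr
      exact ((hk r (interior_subset hr).1).fun_add (hrp r (interior_subset hr).1)).hasDerivWithinAt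
    · intro r hr
      have := abs_le.1 (hkb r (interior_subset hr).1 (interior_subset hr).2)
      linarith [this.1]
  have mono2 : AntitoneOn (fun r => k r - e * r^(2*α)) (Ioc 0 R) := by
    apply antitoneOn_of_hasDerivWithinAt_nonpos (convex_Ioc 0 R)
      (f' := fun r => c r / a r - D * r⁻¹ - e * (2*α*r^(2*α-1)))
    · exact fun r hr => ((hk r hr.1).fun_sub (hrp r hr.1)).continuousAt.continuousWithinAt
    · intro r hr
      exact ((hk r (interior_subset hr).1).fun_sub (hrp r (interior_subset hr).1)).hasDerivWithinAt
    · intro r hr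
      have := abs_le.1 (hkb r (interior_subset hr).1 (interior_subset hr).2)
      linarith [this.2]
  refine ⟨Real.exp (k R - e * R^(2*α)), Real.exp (k R + e * R^(2*α)), Real.exp_pos _, Real.exp_pos _, ?_⟩
  intro r hr hrR
  have e1 : oP a c R r = Real.exp (k r) * r^D := by
    unfold oP
    have : (r:ℝ)^D = Real.exp (D * Real.log r) := by
      rw [← Real.log_pow, Real.exp_log (by positivity)]
    rw [this, ← Real.exp_add]
    congr 1
    simp only [k]; ring
  rw [e1]
  have h1 := mono1 ⟨hr, hrR⟩ ⟨hR, le_rfl⟩ hrR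
  have h2 := mono2 ⟨hr, hrR⟩ ⟨hR, le_rfl⟩ hrR
  simp only at h1 h2
  have h3 : 0 ≤ e * r^(2*α) := by positivity
  have h4 : 0 ≤ e * R^(2*α) := by positivity
  constructor
  · gcongr; linarith
  · gcongr; linarith

theorem org_half {p g dpg u : ℝ → ℝ} {R m M C2 B : ℝ} (hm : 0 < m) (hM : 0 < M)
    (hC2 : 0 ≤ C2) (hR : 0 < R) (D : ℕ) (hD : 1 ≤ D)
    (hp : ∀ r, 0 < r → r ≤ R → m * r^D ≤ p r ∧ p r ≤ M * r^D)
    (hpg : ∀ r, 0 < r → HasDerivAt (fun r => p r * g r) (dpg r) r)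
    (hdpg : ∀ r, 0 < r → r ≤ R → dpg r ≤ C2 * ((D+1) * r^D))
    (hu : ∀ r, 0 < r → HasDerivAt u (g r) r) (hB : ∀ r, 0 < r → |u r| ≤ B) :
    ∀ r, 0 < r → r ≤ R → g r ≤ C2 / m * r := by
  have hZ : AntitoneOn (fun r => p r * g r - C2 * r^(D+1)) (Ioc 0 R) := by
    have hd : ∀ r, 0 < r → HasDerivAt (fun r => p r * g r - C2 * r^(D+1))
        (dpg r - C2 * ((D+1) * r^D)) r := fun r hr =>
      ((hpg r hr).fun_sub ((hasDerivAt_pow (D+1) r).const_mul C2)).congr_deriv (by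
        push_cast; simp)
    apply antitoneOn_of_hasDerivWithinAt_nonpos (convex_Ioc 0 R)
      (f' := fun r => dpg r - C2 * ((D+1) * r^D))
    · exact fun r hr => (hd r hr.1).continuousAt.continuousWithinAt
    · exact fun r hr => (hd r (interior_subset hr).1).hasDerivWithinAt
    · intro r hr
      linarith [hdpg r (interior_subset hr).1 (interior_subset hr).2]
  have hZ0 : ∀ r, 0 < r → r ≤ R → p r * g r - C2 * r^(D+1) ≤ 0 := by
    intro r1 hr1 hr1R
    by_contra hcon
    push Not at hcon
    set z := p r1 * g r1 - C2 * r1^(D+1) with hz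
    set w := z / (M * R^(D-1)) with hw
    have hw0 : 0 < w := by positivity
    have hglo : ∀ r, 0 < r → r ≤ r1 → w * r⁻¹ ≤ g r := by
      intro r hr hrr
      have h1 := hZ ⟨hr, hrr.trans hr1R⟩ ⟨hr1, hr1R⟩ hrr
      simp only at h1
      rw [← hz] at h1
      have h2 : 0 ≤ C2 * r^(D+1) := by positivity
      have h3 := hp r hr (hrr.trans hr1R)
      have hp0 : 0 < p r := lt_of_lt_of_le (by positivity) h3.1
      have h4 : z ≤ p r * g r := by linarith
      have hg0 : 0 < g r := by
        by_contra hn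
        push Not at hn
        have := mul_nonpos_of_nonneg_of_nonpos hp0.le hn
        linarith
      have h5 : p r ≤ M * R^(D-1) * r := by
        refine h3.2.trans ?_
        have : r^D = r^(D-1) * r := by rw [← pow_succ]; congr 1; omega
        rw [this, ← mul_assoc]
        have : r^(D-1) ≤ R^(D-1) := by gcongr; linarith
        gcongr
      have h6 : z ≤ M * R^(D-1) * r * g r := h4.trans (by gcongr)
      rw [hw, ← div_eq_mul_inv, div_div, div_le_iff₀ (by positivity)]
      linarith
    have hmono : MonotoneOn (fun r => u r - w * Real.log r) (Ioc 0 r1) := by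
      have hd : ∀ r, 0 < r → HasDerivAt (fun r => u r - w * Real.log r) (g r - w * r⁻¹) r :=
        fun r hr => (hu r hr).fun_sub ((Real.hasDerivAt_log hr.ne').const_mul w)
      apply monotoneOn_of_hasDerivWithinAt_nonneg (convex_Ioc 0 r1)
        (f' := fun r => g r - w * r⁻¹)
      · exact fun r hr => (hd r hr.1).continuousAt.continuousWithinAt
      · exact fun r hr => (hd r (interior_subset hr).1).hasDerivWithinAt
      · intro r hr
        linarith [hglo r (interior_subset hr).1 (interior_subset hr).2]
    have hB0 : 0 ≤ B := (abs_nonneg _).trans (hB r1 hr1)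
    set r := r1 * Real.exp (-((2*B+1)/w)) with hrd
    have hr0 : 0 < r := by positivity
    have hrr : r ≤ r1 := by
      rw [hrd]
      apply mul_le_of_le_one_right hr1.le
      rw [Real.exp_le_one_iff]
      have : 0 ≤ (2*B+1)/w := by positivity
      linarith
    have h1 := hmono ⟨hr0, hrr⟩ ⟨hr1, le_rfl⟩ hrr
    simp only at h1
    have h2 : Real.log r = Real.log r1 - (2*B+1)/w := by
      rw [hrd, Real.log_mul hr1.ne' (Real.exp_pos _).ne', Real.log_exp]; ring
    rw [h2, mul_sub, mul_div_cancel₀ _ hw0.ne'] at h1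
    have h3 := abs_le.1 (hB r hr0)
    have h4 := abs_le.1 (hB r1 hr1)
    linarith [h3.1, h4.2]
  intro r hr hrR
  have h1 := hZ0 r hr hrR
  have h3 := hp r hr hrR
  by_cases hg : g r ≤ 0
  · exact hg.trans (by positivity)
  · push Not at hg
    have h4 : m * r^D * g r ≤ C2 * r^(D+1) := by
      have : m * r^D * g r ≤ p r * g r := by gcongr; exact h3.1
      linarith
    have h5 : r^D * (m * g r) ≤ r^D * (C2 * r) := by
      calc _ = m * r^D * g r := by ring
        _ ≤ _ := h4
        _ = _ := by ring
    have h6 := le_of_mul_le_mul_left h5 (by positivity)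
    rw [div_mul_eq_mul_div, le_div_iff₀ hm]
    linarith

theorem org_lem {a c : ℝ → ℝ} (ha : ContinuousOn a (Ioi 0)) (hc : ContinuousOn c (Ioi 0))
    (hap : ∀ r, 0 < r → 0 < a r) {α a0 E R : ℝ} (hα : 0 < α) (ha0 : 0 < a0) (hE : 0 ≤ E) (hR : 0 < R)
    (D : ℕ) (hD : 1 ≤ D) (hlo : ∀ r, 0 < r → r ≤ R → a0 ≤ a r)
    (hcD : ∀ r, 0 < r → r ≤ R → |r * c r - D * a r| ≤ E * r^(2*α)) :
    ∃ K1 : ℝ, 0 < K1 ∧ ∀ u g gr : ℝ → ℝ, ∀ B M0 : ℝ, 0 ≤ M0 →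
      (∀ r, 0 < r → HasDerivAt u (g r) r) → (∀ r, 0 < r → HasDerivAt g (gr r) r) →
      (∀ r, 0 < r → |u r| ≤ B) → (∀ r, 0 < r → |a r * gr r + c r * g r| ≤ M0) →
      ∀ r, 0 < r → r ≤ R → |g r| ≤ K1 * M0 * r := by
  obtain ⟨m, M, hm, hM, hpb⟩ := org_ub ha hc hap hα ha0 hE hR D hlo hcD
  refine ⟨M / a0 / m, by positivity, ?_⟩
  intro u g gr B M0 hM0 hu hg hB hn
  have hd : ∀ r, 0 < r → HasDerivAt (fun r => oP a c R r * g r)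
      (oP a c R r / a r * (a r * gr r + c r * g r)) r := fun r hr =>
    ((oP_deriv ha hc hap hR hr).fun_mul (hg r hr)).congr_deriv (by
      have := hap r hr
      field_simp; ring)
  have hbd : ∀ r, 0 < r → r ≤ R → |oP a c R r / a r * (a r * gr r + c r * g r)| ≤
      M / a0 * M0 * ((D+1) * r^D) := by
    intro r hr hrR
    have h1 := oP_pos a c R r
    have h2 := hap r hr
    rw [abs_mul, abs_of_pos (by positivity)]
    have h3 : oP a c R r / a r ≤ M * r^D / a0 := by
      gcongr
      · exact (hpb r hr hrR).2
      · exact hlo r hr hrR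
    calc _ ≤ M * r^D / a0 * M0 := by
          gcongr
          exact hn r hr
      _ = M / a0 * M0 * (1 * r^D) := by ring
      _ ≤ _ := by gcongr; simp
  intro r hr hrR
  have e : M / a0 / m * M0 * r = M / a0 * M0 / m * r := by ring
  rw [e, abs_le]
  constructor
  · have := org_half (g := fun r => - g r) (u := fun r => - u r) hm hM (C2 := M/a0*M0) (by positivity) hR D hD hpb
      (fun r hr => ((hd r hr).fun_neg).congr_of_eventuallyEq (Eventually.of_forall (fun y => by simp)))
      (fun r hr hrR => by linarith [(abs_le.1 (hbd r hr hrR)).1])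
      (fun r hr => (hu r hr).fun_neg) (fun r hr => by rw [abs_neg]; exact hB r hr) r hr hrR
    linarith
  · exact org_half hm hM (C2 := M/a0*M0) (by positivity) hR D hD hpb hd
      (fun r hr hrR => (abs_le.1 (hbd r hr hrR)).2) hu hB r hr hrR


theorem est_h (α δ l c0 C0 : ℝ) (hα : α ∈ Ioo (0:ℝ) 1) (hδ : δ ∈ Ioo (0:ℝ) 1) (hl : 0 < l)
    (hl2 : 2*l ≤ 1) (hc0 : 0 < c0) (hC0 : 1 ≤ C0) (hγ : 0 < 2 - 2*α - δ) :
    ∃ C > 0, ∀ κ ∈ Ioo (0:ℝ) (1/2), ∀ (a a' c : ℝ → ℝ) (f f' f'' : ℝ → ℝ → ℝ) (B a0 E : ℝ) (D : ℕ),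
      0 < B → Coef α κ C0 c0 δ (2*l) a a' c → PSol a c f f' f'' B →
      0 < a0 → 0 ≤ E → 1 ≤ D → (∀ r, 0 < r → r ≤ 2*l → a0 ≤ a r) →
      (∀ r, 0 < r → r ≤ 2*l → |r * c r - D * a r| ≤ E * r^(2*α)) →
      ∀ h, 0 < h → ∀ σ0, 0 < σ0 → ∃ σ, 0 < σ ∧ σ < σ0 ∧ ∃ X : ℝ → ℝ, ContinuousOn X (Ioi 0) ∧
        (∀ s, 0 < s → 0 ≤ X s) ∧
        (∀ τ, 0 < τ → ∫ s in τ..τ+1, X s ≤ C * B) ∧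
        (∀ s, 0 < s → ∀ r, σ < r → r < l →
          |dAvg f h s r - dAvg f h s σ| ≤ r^(2-2*α-δ) * X s) := by
  obtain ⟨C, hC, hcore⟩ := aux_core hα hδ hl hl2 hc0 hC0
  refine ⟨2*C, by positivity, ?_⟩
  intro κ hκ a a' c f f' f'' B a0 E D hB hco hp ha0 hE hD hlo hcD h hh σ0 hσ0
  have ha : ContinuousOn a (Ioi 0) := fun r hr => (hco.a_r r hr).continuousAt.continuousWithinAt
  obtain ⟨g, gr, gt, ut, hs⟩ := avg_sol ha hco.cc hco.a_pos hp hh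
  obtain ⟨K1, hK1, horg⟩ := org_lem ha hco.cc hco.a_pos hα.1 ha0 hE (by linarith : 0 < 2*l) D hD hlo hcD
  set M0 := 2*B/h with hM0
  have hM0p : 0 < M0 := by positivity
  set K := M0 + K1 * M0 with hK
  have hKp : 0 < K := by positivity
  have hbg : ∀ t, 0 < t → ∀ r, 0 < r → r ≤ 2*l → |g t r| ≤ K * r := by
    intro t ht r hr hrl
    have := horg (dAvg f h t) (g t) (gr t) B M0 hM0p.le (hs.u_r t ht) (hs.g_r t ht) (hs.bu t ht)
      (fun r hr => by rw [← hs.eqn t ht r hr]; exact hs.but t ht r hr) r hr hrl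
    refine this.trans ?_
    gcongr
    linarith
  -- choose σ
  obtain ⟨σ, hσ, hσσ, hσl, hσK⟩ : ∃ σ : ℝ, 0 < σ ∧ σ < σ0 ∧ σ < l ∧ K * σ^δ ≤ B := by
    have ht : Tendsto (fun σ : ℝ => K * σ^δ) (nhdsWithin 0 (Ioi 0)) (nhds (K * 0)) := by
      apply Tendsto.const_mul
      have := (Real.continuousAt_rpow_const 0 δ (Or.inr hδ.1.le)).tendsto
      rw [Real.zero_rpow hδ.1.ne'] at this
      exact this.mono_left nhdsWithin_le_nhds
    rw [mul_zero] at ht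
    have e1 := ht.eventually (Iic_mem_nhds hB)
    have e2 : ∀ᶠ σ in nhdsWithin (0:ℝ) (Ioi 0), σ < σ0 :=
      nhdsWithin_le_nhds (Iio_mem_nhds hσ0)
    have e3 : ∀ᶠ σ in nhdsWithin (0:ℝ) (Ioi 0), σ < l :=
      nhdsWithin_le_nhds (Iio_mem_nhds hl)
    obtain ⟨σ, h1, h2, h3, h4⟩ := (e1.and (e2.and (e3.and self_mem_nhdsWithin))).exists
    exact ⟨σ, h4, h2, h3, h1⟩
  have hsub : Icc σ l ⊆ Ioi 0 := fun r hr => lt_of_lt_of_le hσ hr.1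
  have cI : ContinuousOn (fun p : ℝ × ℝ => p.2^(-(2-2*α-δ)) * |g p.1 p.2|) (Ioi 0 ×ˢ Icc σ l) := by
    refine ContinuousOn.mul ?_ (hs.cg.mono (prod_mono le_rfl hsub)).abs
    refine ContinuousOn.rpow_const continuousOn_snd ?_
    rintro ⟨t, r⟩ ⟨-, hr⟩
    exact Or.inl (hsub hr).ne'
  refine ⟨σ, hσ, hσσ, fun s => ∫ r in σ..l, r^(-(2-2*α-δ)) * |g s r|, ?_, ?_, ?_, ?_⟩
  · exact aux_parcont (Ioi 0) σ l hσl.le (fun s r => r^(-(2-2*α-δ)) * |g s r|) cI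
  · intro s hs0
    apply intervalIntegral.integral_nonneg hσl.le
    intro r hr
    have : 0 < r := hsub hr
    positivity
  · intro τ hτ
    have hsm : SmoothSol a c (fun t r => dAvg f h (t+τ) r) (fun t r => g (t+τ) r)
        (fun t r => gr (t+τ) r) (fun t r => gt (t+τ) r) (fun t r => ut (t+τ) r) B K (2*l) := by
      have hpos : ∀ t : ℝ, 0 ≤ t → 0 < t + τ := fun t ht => by linarith
      have hsc : ∀ k : ℝ → ℝ → ℝ, ContinuousOn (fun p : ℝ × ℝ => k p.1 p.2) (Ioi 0 ×ˢ Ioi 0) →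
          ContinuousOn (fun p : ℝ × ℝ => k (p.1+τ) p.2) (Ici 0 ×ˢ Ioi 0) := by
        intro k hk
        have : ContinuousOn (fun p : ℝ × ℝ => ((p.1 + τ, p.2) : ℝ × ℝ)) (Ici 0 ×ˢ Ioi 0) := by fun_prop
        refine hk.comp this ?_
        rintro ⟨s, y⟩ ⟨h1, h2⟩
        exact ⟨hpos s h1, h2⟩
      constructor
      · exact fun t ht r hr => (hs.u_t (t+τ) (hpos t ht) r hr).comp_add_const t τ
      · exact fun t ht r hr => hs.u_r (t+τ) (hpos t ht) r hr
      · exact fun t ht r hr => hs.g_r (t+τ) (hpos t ht) r hr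
      · exact fun t ht r hr => (hs.g_t (t+τ) (hpos t ht) r hr).comp_add_const t τ
      · exact fun t ht r hr => hs.ut_r (t+τ) (hpos t ht) r hr
      · exact fun t ht r hr => hs.eqn (t+τ) (hpos t ht) r hr
      · exact hsc _ hs.cu
      · exact hsc _ hs.cg
      · exact hsc _ hs.cgt
      · exact hsc _ hs.cut
      · exact fun t ht r hr => hs.bu (t+τ) (hpos t ht) r hr
      · exact fun t ht r hr => (hs.but (t+τ) (hpos t ht) r hr).trans (by
          rw [hK]; nlinarith [mul_pos hK1 hM0p])
      · exact fun t ht r hr hrR => hbg (t+τ) (hpos t ht) r hr hrR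
    have := hcore κ hκ a a' c _ _ _ _ _ B K hB hKp.le hco hsm σ hσ hσl
    have e : ∫ s in τ..τ+1, ∫ r in σ..l, r^(-(2-2*α-δ)) * |g s r| =
        ∫ t in (0:ℝ)..1, ∫ r in σ..l, r^(-(2-2*α-δ)) * |g (t+τ) r| := by
      rw [intervalIntegral.integral_comp_add_right
        (fun s => ∫ r in σ..l, r^(-(2-2*α-δ)) * |g s r|)]
      simp [add_comm]
    rw [e]
    refine this.trans ?_
    have : C * (B + K * σ^δ) ≤ C * (B + B) := by gcongr
    linarith
  · intro s hs0 r hr hrl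
    have hr0 : 0 < r := hσ.trans hr
    have cgs : ContinuousOn (g s) (Ioi 0) := aux_slice_r hs.cg hs0
    have hIcc : ∀ y ∈ uIcc σ r, 0 < y := by
      intro y hy
      rw [uIcc_of_le hr.le] at hy
      exact lt_of_lt_of_le hσ hy.1
    have cgi : IntervalIntegrable (g s) volume σ r := (cgs.mono hIcc).intervalIntegrable
    have e1 := intervalIntegral.integral_eq_sub_of_hasDerivAt
      (fun y hy => hs.u_r s hs0 y (hIcc y hy)) cgi
    rw [← e1]
    have cw : ContinuousOn (fun y => y^(-(2-2*α-δ)) * |g s y|) (Icc σ l) :=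
      aux_slice_r (H := fun s y => y^(-(2-2*α-δ)) * |g s y|) cI hs0
    have i1 : IntervalIntegrable (fun y => y^(-(2-2*α-δ)) * |g s y|) volume σ r :=
      (cw.mono (Icc_subset_Icc_right hrl.le)).intervalIntegrable_of_Icc hr.le
    have i2 : IntervalIntegrable (fun y => y^(-(2-2*α-δ)) * |g s y|) volume r l :=
      (cw.mono (Icc_subset_Icc_left hr.le)).intervalIntegrable_of_Icc hrl.le
    have h1 : |∫ y in σ..r, g s y| ≤ ∫ y in σ..r, |g s y| :=
      intervalIntegral.abs_integral_le_integral_abs hr.le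
    have h2 : ∫ y in σ..r, |g s y| ≤ ∫ y in σ..r, r^(2-2*α-δ) * (y^(-(2-2*α-δ)) * |g s y|) := by
      apply intervalIntegral.integral_mono_on hr.le cgi.abs (i1.const_mul _)
      intro y hy
      have hy0 : 0 < y := lt_of_lt_of_le hσ hy.1
      rw [← mul_assoc]
      apply le_mul_of_one_le_left (abs_nonneg _)
      rw [Real.rpow_neg hy0.le, ← div_eq_mul_inv, le_div_iff₀ (by positivity), one_mul]
      exact Real.rpow_le_rpow hy0.le hy.2 hγ.le
    rw [intervalIntegral.integral_const_mul] at h2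
    have h3 : ∫ y in σ..r, y^(-(2-2*α-δ)) * |g s y| ≤ ∫ y in σ..l, y^(-(2-2*α-δ)) * |g s y| := by
      rw [← intervalIntegral.integral_add_adjacent_intervals i1 i2]
      have : 0 ≤ ∫ y in r..l, y^(-(2-2*α-δ)) * |g s y| := by
        apply intervalIntegral.integral_nonneg hrl.le
        intro y hy
        have : 0 < y := lt_of_lt_of_le hr0 hy.1
        positivity
      linarith
    refine h1.trans (h2.trans ?_)
    gcongr

theorem dAvg_close {f : ℝ → ℝ → ℝ} {h t r v e : ℝ} (hh : 0 < h) (ht : 0 < t)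
    (hf : ContinuousOn (fun s => f s r) (Ioi 0))
    (hc : ∀ s ∈ Icc t (t+2*h), |f s r - v| ≤ e) : |dAvg f h t r - v| ≤ e := by
  have i0 : ∀ s, t ≤ s → IntervalIntegrable (fun s => f s r) volume s (s+h) := fun s hs =>
    (hf.mono (fun y hy => lt_of_lt_of_le (ht.trans_le hs) hy.1)).intervalIntegrable_of_Icc (by linarith)
  have h1 : ∀ s ∈ Icc t (t+h), |(∫ σ in s..s+h, f σ r) - h * v| ≤ e * h := by
    intro s hs
    have e1 : (∫ σ in s..s+h, f σ r) - h * v = ∫ σ in s..s+h, (f σ r - v) := by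
      rw [intervalIntegral.integral_sub (i0 s hs.1) (by simp)]
      simp
    rw [e1]
    have := intervalIntegral.norm_integral_le_of_norm_le_const (a := s) (b := s+h) (C := e)
      (f := fun σ => f σ r - v) (fun σ hσ => by
        rw [uIoc_of_le (by linarith)] at hσ
        exact hc σ ⟨hs.1.trans hσ.1.le, by linarith [hs.2, hσ.2]⟩)
    rw [add_sub_cancel_left, abs_of_pos hh] at this
    exact this
  have cF : ContinuousOn (fun s => ∫ σ in s..s+h, f σ r) (Ioi 0) := fun s hs =>
    (slide_deriv hf hs hh.le).continuousAt.continuousWithinAt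
  have e1 : dAvg f h t r - v = 1/h^2 * ∫ s in t..t+h, ((∫ σ in s..s+h, f σ r) - h * v) := by
    unfold dAvg
    rw [intervalIntegral.integral_sub ((cF.mono (fun y hy => lt_of_lt_of_le ht hy.1)).intervalIntegrable_of_Icc (by linarith)) (by simp)]
    simp
    field_simp
  rw [e1, abs_mul, abs_of_pos (by positivity)]
  have := intervalIntegral.norm_integral_le_of_norm_le_const (a := t) (b := t+h) (C := e*h)
      (f := fun s => (∫ σ in s..s+h, f σ r) - h * v) (fun σ hσ => by
        rw [uIoc_of_le (by linarith)] at hσ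
        exact h1 σ ⟨hσ.1.le, hσ.2⟩)
  rw [add_sub_cancel_left, abs_of_pos hh, Real.norm_eq_abs] at this
  calc _ ≤ 1/h^2 * (e * h * h) := by gcongr
    _ = e := by field_simp

theorem dAvg_tendsto {f : ℝ → ℝ → ℝ} (hf : ContinuousOn (fun p : ℝ × ℝ => f p.1 p.2) (Ioi 0 ×ˢ Ici 0))
    {s r0 : ℝ} (hs : 0 < s) (hr0 : 0 ≤ r0) {rn : ℕ → ℝ} (hrn : ∀ n, 0 ≤ rn n)
    (hlim : Tendsto rn atTop (nhds r0)) :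
    Tendsto (fun n : ℕ => dAvg f (1/((n:ℝ)+1)) (s + 1/((n:ℝ)+1)) (rn n)) atTop (nhds (f s r0)) := by
  rw [Metric.tendsto_atTop]
  intro e he
  have h1 := Metric.continuousWithinAt_iff.1 (hf (s, r0) ⟨hs, hr0⟩) (e/2) (by positivity)
  obtain ⟨δ, hδ, h1⟩ := h1
  obtain ⟨n1, hn1⟩ := (Metric.tendsto_atTop.1 hlim) δ hδ
  have ht : Tendsto (fun n : ℕ => 1/((n:ℝ)+1)) atTop (nhds 0) := tendsto_one_div_add_atTop_nhds_zero_nat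
  obtain ⟨n2, hn2⟩ := (Metric.tendsto_atTop.1 ht) (δ/3) (by positivity)
  refine ⟨max n1 n2, fun n hn => ?_⟩
  have a1 := hn1 n ((le_max_left _ _).trans hn)
  have a2 := hn2 n ((le_max_right _ _).trans hn)
  have hpos : (0:ℝ) < 1/((n:ℝ)+1) := by positivity
  rw [Real.dist_eq, sub_zero, abs_of_pos hpos] at a2
  rw [Real.dist_eq]
  refine lt_of_le_of_lt (dAvg_close hpos (by positivity) (aux_slice_t hf (hrn n)) (e := e/2) ?_) (by linarith)
  intro σ hσ
  have := h1 (x := (σ, rn n)) ⟨lt_of_lt_of_le (by positivity) hσ.1, hrn n⟩ (by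
    rw [Prod.dist_eq, max_lt_iff]
    refine ⟨?_, a1⟩
    rw [Real.dist_eq, abs_lt]
    constructor <;> linarith [hσ.1, hσ.2])
  rw [Real.dist_eq] at this
  exact this.le


theorem lint_unit {φ : ℝ → ℝ≥0∞} {A : ℝ≥0∞} (N : ℕ)
    (h : ∀ j : ℕ, ∫⁻ s in Ioc (j:ℝ) (j+1), φ s ≤ A) : ∫⁻ s in Ioc (0:ℝ) N, φ s ≤ N * A := by
  induction N with
  | zero => simp
  | succ n ih =>
    have : Ioc (0:ℝ) ((n+1:ℕ):ℝ) = Ioc 0 (n:ℝ) ∪ Ioc (n:ℝ) (n+1) := by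
      rw [Ioc_union_Ioc_eq_Ioc (by positivity) (by linarith)]
      push_cast; rfl
    rw [this]
    refine (lintegral_union_le _ _ _).trans ?_
    push_cast
    rw [add_mul, one_mul]
    exact add_le_add ih (h n)

theorem fatou_est {f : ℝ → ℝ → ℝ} (hf : ContinuousOn (fun p : ℝ × ℝ => f p.1 p.2) (Ioi 0 ×ˢ Ici 0))
    {γ l A : ℝ} (hA : 0 ≤ A)
    (hX : ∀ h, 0 < h → ∀ σ0, 0 < σ0 → ∃ σ, 0 < σ ∧ σ < σ0 ∧ ∃ X : ℝ → ℝ, ContinuousOn X (Ioi 0) ∧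
        (∀ s, 0 < s → 0 ≤ X s) ∧
        (∀ τ, 0 < τ → ∫ s in τ..τ+1, X s ≤ A) ∧
        (∀ s, 0 < s → ∀ r, σ < r → r < l → |dAvg f h s r - dAvg f h s σ| ≤ r^γ * X s))
    {t : ℝ} (ht : 0 < t) :
    ∫⁻ s in Ioc (0:ℝ) t, (⨆ r ∈ Ioo (0:ℝ) l, ENNReal.ofReal (|f s r - f s 0| / r ^ γ)) ≤
      ENNReal.ofReal ((1+t) * A) := by
  have hn : ∀ n : ℕ, (0:ℝ) < 1/((n:ℝ)+1) := fun n => by positivity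
  choose σ hσ hσ1 X cX X0 iX bX using fun n : ℕ => hX (1/((n:ℝ)+1)) (hn n) (1/((n:ℝ)+1)) (hn n)
  have hσlim : Tendsto σ atTop (nhds 0) :=
    squeeze_zero (fun n => (hσ n).le) (fun n => (hσ1 n).le) tendsto_one_div_add_atTop_nhds_zero_nat
  let Y : ℕ → ℝ → ℝ≥0∞ := fun n s => ENNReal.ofReal (X n (s + 1/((n:ℝ)+1)))
  have hpt : ∀ s ∈ Ioc (0:ℝ) t, (⨆ r ∈ Ioo (0:ℝ) l, ENNReal.ofReal (|f s r - f s 0| / r ^ γ)) ≤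
      liminf (fun n => Y n s) atTop := by
    intro s hs
    refine iSup₂_le (fun r hr => ?_)
    have hrγ : 0 < r^γ := Real.rpow_pos_of_pos hr.1 _
    have l1 := dAvg_tendsto hf hs.1 hr.1.le (rn := fun _ => r) (fun _ => hr.1.le) tendsto_const_nhds
    have l2 := dAvg_tendsto hf hs.1 le_rfl (rn := σ) (fun n => (hσ n).le) hσlim
    have l3 := ENNReal.tendsto_ofReal (((l1.sub l2).abs).div_const (r^γ))
    rw [← l3.liminf_eq]
    refine liminf_le_liminf ?_
    filter_upwards [hσlim.eventually (Iio_mem_nhds hr.1)] with n hnr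
    apply ENNReal.ofReal_le_ofReal
    rw [div_le_iff₀ hrγ, mul_comm]
    exact bX n _ (add_pos hs.1 (hn n)) r hnr hr.2
  have hY : ∀ n, ∫⁻ s in Ioc (0:ℝ) t, Y n s ≤ ENNReal.ofReal ((1+t) * A) := by
    intro n
    have hcY : ContinuousOn (fun s => X n (s + 1/((n:ℝ)+1))) (Ici 0) := by
      have : ContinuousOn (fun s : ℝ => s + 1/((n:ℝ)+1)) (Ici 0) := by fun_prop
      exact (cX n).comp this (fun s (hs : 0 ≤ s) => add_pos_of_nonneg_of_pos hs (hn n))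
    have hunit : ∀ j : ℕ, ∫⁻ s in Ioc (j:ℝ) (j+1), Y n s ≤ ENNReal.ofReal A := by
      intro j
      have hj : (0:ℝ) ≤ j := by positivity
      have hint : IntervalIntegrable (fun s => X n (s + 1/((n:ℝ)+1))) volume j (j+1) :=
        (hcY.mono (fun s hs => hj.trans hs.1)).intervalIntegrable_of_Icc (by linarith)
      rw [intervalIntegrable_iff_integrableOn_Ioc_of_le (by linarith)] at hint
      rw [← ofReal_integral_eq_lintegral_ofReal hint]
      · apply ENNReal.ofReal_le_ofReal
        rw [← intervalIntegral.integral_of_le (by linarith),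
          intervalIntegral.integral_comp_add_right (fun s => X n s)]
        have := iX n ((j:ℝ) + 1/((n:ℝ)+1)) (add_pos_of_nonneg_of_pos hj (hn n))
        convert this using 2; ring
      · filter_upwards [ae_restrict_mem measurableSet_Ioc] with s hs
        exact X0 n _ (add_pos (lt_of_le_of_lt hj hs.1) (hn n))
    calc _ ≤ ∫⁻ s in Ioc (0:ℝ) (⌈t⌉₊:ℝ), Y n s :=
          lintegral_mono_set (Ioc_subset_Ioc_right (Nat.le_ceil t))
      _ ≤ ⌈t⌉₊ * ENNReal.ofReal A := lint_unit _ hunit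
      _ = ENNReal.ofReal (⌈t⌉₊ * A) := by
          rw [ENNReal.ofReal_mul (by positivity)]; simp
      _ ≤ _ := by
          apply ENNReal.ofReal_le_ofReal
          have := (Nat.ceil_lt_add_one ht.le).le
          gcongr
          linarith
  have hmeas : ∀ n, AEMeasurable (Y n) (volume.restrict (Ioc 0 t)) := by
    intro n
    have hcY : ContinuousOn (fun s => X n (s + 1/((n:ℝ)+1))) (Ioc 0 t) := by
      have : ContinuousOn (fun s : ℝ => s + 1/((n:ℝ)+1)) (Ioc 0 t) := by fun_prop
      exact (cX n).comp this (fun s hs => add_pos hs.1 (hn n))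
    exact (hcY.aemeasurable measurableSet_Ioc).ennreal_ofReal
  calc _ ≤ ∫⁻ s in Ioc (0:ℝ) t, liminf (fun n => Y n s) atTop :=
        setLIntegral_mono' measurableSet_Ioc hpt
    _ ≤ liminf (fun n => ∫⁻ s in Ioc (0:ℝ) t, Y n s) atTop := lintegral_liminf_le' hmeas
    _ ≤ liminf (fun _ : ℕ => ENNReal.ofReal ((1+t) * A)) atTop :=
        liminf_le_liminf (Eventually.of_forall hY)
    _ = _ := by simp

theorem pow_split {B p : ℝ} (hB : 0 < B) (hp : p ∈ Ioo (0:ℝ) 1) (Y : ℝ≥0∞) :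
    Y ^ p ≤ ENNReal.ofReal (B^p) + ENNReal.ofReal (B^(p-1)) * Y := by
  by_cases hY : Y = ⊤
  · rw [hY, ENNReal.mul_top (by simpa using Real.rpow_pos_of_pos hB _)]
    simp
  rw [← ENNReal.ofReal_toReal hY, ENNReal.ofReal_rpow_of_nonneg ENNReal.toReal_nonneg hp.1.le]
  set y := Y.toReal
  have hy : 0 ≤ y := ENNReal.toReal_nonneg
  rw [← ENNReal.ofReal_mul (by positivity), ← ENNReal.ofReal_add (by positivity) (by positivity)]
  apply ENNReal.ofReal_le_ofReal
  rcases le_total y B with h | h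
  · have : y^p ≤ B^p := Real.rpow_le_rpow hy h hp.1.le
    have h2 : 0 ≤ B^(p-1) * y := by positivity
    linarith
  · have hy0 : 0 < y := hB.trans_le h
    have h1 : y^(p-1) ≤ B^(p-1) :=
      Real.rpow_le_rpow_of_nonpos hB h (by linarith [hp.2])
    have h2 : y^p = y^(p-1) * y := by rw [Real.rpow_sub_one hy0.ne']; field_simp
    have h3 : y^(p-1) * y ≤ B^(p-1) * y := by gcongr
    have h4 : 0 ≤ B^p := by positivity
    linarith

theorem pow_est {S : ℝ → ℝ≥0∞} {B p C t : ℝ} (hB : 0 < B) (hp : p ∈ Ioo (0:ℝ) 1) (hC : 0 ≤ C)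
    (ht : 0 < t) (hS : ∫⁻ s in Ioc (0:ℝ) t, S s ≤ ENNReal.ofReal ((1+t) * (C * B))) :
    ∫⁻ s in Ioc (0:ℝ) t, (S s)^p ≤ ENNReal.ofReal ((1+C) * (1+t) * B^p) := by
  calc _ ≤ ∫⁻ s in Ioc (0:ℝ) t, (ENNReal.ofReal (B^p) + ENNReal.ofReal (B^(p-1)) * S s) :=
        lintegral_mono (fun s => pow_split hB hp (S s))
    _ = ENNReal.ofReal (B^p) * ENNReal.ofReal t + ENNReal.ofReal (B^(p-1)) * ∫⁻ s in Ioc (0:ℝ) t, S s := by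
        rw [lintegral_add_left measurable_const, lintegral_const_mul' _ _ ENNReal.ofReal_ne_top]
        simp
    _ ≤ ENNReal.ofReal (B^p) * ENNReal.ofReal t +
        ENNReal.ofReal (B^(p-1)) * ENNReal.ofReal ((1+t) * (C * B)) := by gcongr
    _ = ENNReal.ofReal (B^p * t + B^(p-1) * ((1+t) * (C*B))) := by
        rw [ENNReal.ofReal_add (by positivity) (by positivity), ENNReal.ofReal_mul (by positivity : 0 ≤ B^p),
          ENNReal.ofReal_mul (by positivity : 0 ≤ B^(p-1))]
    _ ≤ _ := by
        apply ENNReal.ofReal_le_ofReal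
        have h2 : B^p = B^(p-1) * B := by rw [Real.rpow_sub_one hB.ne']; field_simp
        have h3 : 0 ≤ B^p := by positivity
        have h4 : B^(p-1) * ((1+t) * (C*B)) = (1+t) * C * B^p := by rw [h2]; ring
        rw [h4]
        nlinarith

theorem coef_ex (D : ℕ) (hD : 1 ≤ D) (α β : ℝ) (hα : α ∈ Ioo (0:ℝ) 1)
    (bL bN : ℝ → ℝ)
    (hbLpos : ∀ r, 0 < r → 0 < bL r)
    (hbLdiff : ∀ r, 0 < r → DifferentiableAt ℝ bL r)
    (hbNdiff : ∀ r, 0 < r → DifferentiableAt ℝ bN r)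
    (hbLlim : Tendsto (fun r : ℝ => bL r / r ^ (2*α)) (nhdsWithin 0 (Ioi 0)) (nhds 1))
    (hbNlim : Tendsto (fun r : ℝ => bN r / r ^ (2*α)) (nhdsWithin 0 (Ioi 0)) (nhds β))
    (hbLdlim : Tendsto (fun r : ℝ => deriv bL r / r ^ (2*α - 1)) (nhdsWithin 0 (Ioi 0))
      (nhds (2*α)))
    (δ : ℝ) (hδ : δ ∈ Ioo (0:ℝ) 1) (hδ2 : δ < D * β + 1 - 2*α) :
    ∃ l c0 C0 E : ℝ, 0 < l ∧ 2*l ≤ 1 ∧ 0 < c0 ∧ 1 ≤ C0 ∧ 0 ≤ E ∧ ∀ κ ∈ Ioo (0:ℝ) (1/2),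
      Coef α κ C0 c0 δ (2*l) (fun r => (1-κ) * bL r + 2*κ) (fun r => (1-κ) * deriv bL r)
        (fun r => ((1-κ) * bN r + 2*κ) * (D / r)) ∧
      (∀ r, 0 < r → r ≤ 2*l → 2*κ ≤ (1-κ) * bL r + 2*κ) ∧
      (∀ r, 0 < r → r ≤ 2*l → |r * (((1-κ) * bN r + 2*κ) * (D / r)) - D * ((1-κ) * bL r + 2*κ)| ≤
        E * r^(2*α)) := by
  set c1 := (D * β + 1 - 2*α - δ)/2 with hc1
  have hc1p : 0 < c1 := by rw [hc1]; linarith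
  have hD1 : (1:ℝ) ≤ D := by exact_mod_cast hD
  have ev : ∀ᶠ r in nhdsWithin (0:ℝ) (Ioi 0), 1/2 ≤ bL r / r^(2*α) ∧ bL r / r^(2*α) ≤ 2 ∧
      |bN r / r^(2*α)| ≤ |β| + 1 ∧ |deriv bL r / r^(2*α-1)| ≤ 3 ∧
      (δ-1) * (bL r / r^(2*α)) + deriv bL r / r^(2*α-1) - D * (bN r / r^(2*α)) ≤ -c1 := by
    have t5 := ((hbLlim.const_mul (δ-1)).add hbLdlim).sub (hbNlim.const_mul (D:ℝ))
    have e1 := hbLlim.eventually (Ici_mem_nhds (by norm_num : (1/2:ℝ) < 1))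
    have e2 := hbLlim.eventually (Iic_mem_nhds (by norm_num : (1:ℝ) < 2))
    have e3 := hbNlim.abs.eventually (Iic_mem_nhds (by linarith : |β| < |β|+1))
    have e4 := hbLdlim.abs.eventually (Iic_mem_nhds (by
      rw [abs_of_pos (by linarith [hα.1])]; linarith [hα.2] : |2*α| < 3))
    have e5 := t5.eventually (Iic_mem_nhds (by rw [hc1]; linarith : (δ-1)*1 + 2*α - D*β < -c1))
    filter_upwards [e1, e2, e3, e4, e5] with r h1 h2 h3 h4 h5
    exact ⟨h1, h2, h3, h4, h5⟩
  rw [eventually_nhdsWithin_iff] at ev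
  obtain ⟨ρ, hρ, hev⟩ := Metric.eventually_nhds_iff.1 ev
  set l := min (ρ/4) (1/2) with hl
  have hlp : 0 < l := by positivity
  have hl1 : l ≤ ρ/4 := min_le_left _ _
  have hl2 : l ≤ 1/2 := min_le_right _ _
  have main : ∀ r, 0 < r → r ≤ 2*l → 1/2 * r^(2*α) ≤ bL r ∧ bL r ≤ 2 * r^(2*α) ∧
      |bN r| ≤ (|β|+1) * r^(2*α) ∧ |r * deriv bL r| ≤ 3 * r^(2*α) ∧
      (δ-1) * bL r + r * deriv bL r - D * bN r ≤ -c1 * r^(2*α) := by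
    intro r hr hrl
    obtain ⟨h1, h2, h3, h4, h5⟩ := hev (y := r) (by
      rw [Real.dist_eq, sub_zero, abs_of_pos hr]; linarith) hr
    have hP : 0 < r^(2*α) := by positivity
    have e2 : r^(2*α-1) = r^(2*α) / r := Real.rpow_sub_one hr.ne' _
    have e3 : deriv bL r / r^(2*α-1) = (r * deriv bL r) / r^(2*α) := by
      rw [e2]; field_simp
    rw [e3] at h4 h5
    rw [abs_div, abs_of_pos hP, div_le_iff₀ hP] at h3 h4
    rw [le_div_iff₀ hP] at h1
    rw [div_le_iff₀ hP] at h2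
    refine ⟨h1, h2, h3, h4, ?_⟩
    have e4 : (δ-1) * (bL r / r^(2*α)) + (r * deriv bL r) / r^(2*α) - D * (bN r / r^(2*α)) =
        ((δ-1) * bL r + r * deriv bL r - D * bN r) / r^(2*α) := by ring
    rw [e4, div_le_iff₀ hP] at h5
    exact h5
  refine ⟨l, min (c1/2) 1, 4 + D * (|β|+3), D * (|β|+3), hlp, by linarith, by positivity, ?_,
    by positivity, ?_⟩
  · have : 0 ≤ D * (|β|+3) := by positivity
    linarith
  intro κ hκ
  have hκ0 := hκ.1
  have hκ1 := hκ.2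
  have hk2 : 1/2 ≤ 1 - κ := by linarith
  have hk3 : 1 - κ ≤ 1 := by linarith
  have hk4 : 0 ≤ 1 - κ := by linarith
  have hDb : 0 ≤ D * (|β|+3) := by positivity
  have ecr : ∀ r, 0 < r → r * (((1-κ) * bN r + 2*κ) * (D / r)) = D * ((1-κ) * bN r + 2*κ) := by
    intro r hr; field_simp
  refine ⟨⟨?_, ?_, ?_, ?_, ?_, ?_, ?_, ?_⟩, ?_, ?_⟩
  · intro r hr
    exact ((hbLdiff r hr).hasDerivAt.const_mul _).add_const _
  · intro r hr
    have := mul_nonneg hk4 (hbLpos r hr).le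
    linarith
  · have : ContinuousOn bN (Ioi 0) := fun r hr => (hbNdiff r hr).continuousAt.continuousWithinAt
    refine ((continuousOn_const.mul this).add continuousOn_const).mul
      (continuousOn_const.div continuousOn_id (fun r hr => ne_of_gt hr))
  · intro r hr hrl
    obtain ⟨h1, h2, h3, h4, h5⟩ := main r hr hrl
    have hP : 0 < r^(2*α) := by positivity
    have a1 : 1/2 * bL r ≤ (1-κ) * bL r := by
      have := (hbLpos r hr).le
      gcongr
    have a2 : 0 ≤ (D * (|β|+3)) * ((1-κ) * bL r + 2*κ) := by
      apply mul_nonneg hDb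
      linarith
    linarith
  · intro r hr hrl
    obtain ⟨h1, h2, h3, h4, h5⟩ := main r hr hrl
    have hP : 0 < r^(2*α) := by positivity
    have a1 : (1-κ) * bL r ≤ 1 * bL r := by
      have := (hbLpos r hr).le
      gcongr
    have a2 : 0 ≤ (D * (|β|+3)) * (r^(2*α) + κ) := by positivity
    linarith
  · intro r hr hrl
    obtain ⟨h1, h2, h3, h4, h5⟩ := main r hr hrl
    have hP : 0 < r^(2*α) := by positivity
    have e : r * ((1-κ) * deriv bL r) = (1-κ) * (r * deriv bL r) := by ring
    rw [e, abs_mul, abs_of_nonneg hk4]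
    have a1 : (1-κ) * |r * deriv bL r| ≤ 1 * |r * deriv bL r| := by gcongr
    have a2 : 0 ≤ (D * (|β|+3)) * (r^(2*α) + κ) := by positivity
    linarith
  · intro r hr hrl
    obtain ⟨h1, h2, h3, h4, h5⟩ := main r hr hrl
    have hP : 0 < r^(2*α) := by positivity
    rw [ecr r hr, abs_mul, abs_of_nonneg (by linarith : (0:ℝ) ≤ D)]
    have a1 : |(1-κ) * bN r + 2*κ| ≤ 1 * ((|β|+1) * r^(2*α)) + 2*κ := by
      refine (abs_add_le _ _).trans ?_
      rw [abs_mul, abs_of_nonneg hk4, abs_of_nonneg (by linarith : 0 ≤ 2*κ)]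
      gcongr
    have a3 : 1 * ((|β|+1) * r^(2*α)) + 2*κ ≤ (|β|+3) * (r^(2*α) + κ) := by
      have := abs_nonneg β
      have := mul_nonneg this hκ0.le
      nlinarith
    calc D * |(1-κ) * bN r + 2*κ| ≤ D * ((|β|+3) * (r^(2*α) + κ)) := by
          gcongr; exact a1.trans a3
      _ ≤ _ := by
        have : 0 ≤ 4 * (r^(2*α) + κ) := by positivity
        linarith
  · intro r hr hrl
    obtain ⟨h1, h2, h3, h4, h5⟩ := main r hr hrl
    have hP : 0 < r^(2*α) := by positivity
    rw [ecr r hr]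
    have e : (δ-1) * ((1-κ) * bL r + 2*κ) + r * ((1-κ) * deriv bL r) - D * ((1-κ) * bN r + 2*κ) =
      (1-κ) * ((δ-1) * bL r + r * deriv bL r - D * bN r) + 2*κ*(δ-1-D) := by ring
    rw [e]
    have a1 : (1-κ) * ((δ-1) * bL r + r * deriv bL r - D * bN r) ≤ (1-κ) * (-c1 * r^(2*α)) := by
      gcongr
    have a2 : 1/2 * (c1 * r^(2*α)) ≤ (1-κ) * (c1 * r^(2*α)) := by gcongr
    have a3 : 2*κ*(δ-1-D) ≤ 2*κ*(-1) := by
      gcongr; linarith [hδ.2]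
    have m1 : min (c1/2) 1 * r^(2*α) ≤ c1/2 * r^(2*α) := by gcongr; exact min_le_left _ _
    have m2 : min (c1/2) 1 * κ ≤ 1 * κ := by gcongr; exact min_le_right _ _
    linarith
  · intro r hr hrl
    have := mul_nonneg hk4 (hbLpos r hr).le
    linarith
  · intro r hr hrl
    obtain ⟨h1, h2, h3, h4, h5⟩ := main r hr hrl
    have hP : 0 < r^(2*α) := by positivity
    rw [ecr r hr]
    have e : D * ((1-κ) * bN r + 2*κ) - D * ((1-κ) * bL r + 2*κ) = D * ((1-κ) * (bN r - bL r)) := by ring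
    rw [e, abs_mul, abs_mul, abs_of_nonneg hk4, abs_of_nonneg (by linarith : (0:ℝ) ≤ D), mul_assoc]
    have a1 : |bN r - bL r| ≤ (|β|+3) * r^(2*α) := by
      refine (abs_sub _ _).trans ?_
      rw [abs_of_pos (hbLpos r hr)]
      linarith
    calc D * ((1-κ) * |bN r - bL r|) ≤ D * (1 * |bN r - bL r|) := by gcongr
      _ ≤ _ := by rw [one_mul]; gcongr


/-- Uniform-in-diffusivity regularity estimate for radial solutions of the degenerate parabolic
PDE satisfied by two-point self-correlation functions: under the structural assumptions on
`b_L, b_N` (behaving like `r^{2α}` resp. `β r^{2α}` at the origin, with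
`β > (2α−1)/(d−1)`), for every `δ ∈ (0, δ_*)` and `ε̄ > 0` there are `ε ∈ (0,ε̄)`, `l > 0`
and `C > 0` such that every bounded solution `f` of
`∂_t f = (1−κ) b_L ∂_r² f + (1−κ) ((d−1)/r) b_N ∂_r f + 2κ(∂_r² f + ((d−1)/r) ∂_r f)`
with Neumann condition `∂_r f(t,0) = 0` satisfies
`∫₀^t (sup_{0<r<l} |f(s,r)−f(s,0)|/r^{2−2α−δ})^{1−ε} ds ≤ C (1+t) (sup|f|)^{1−ε}`. -/
theorem degenerate_parabolic_regularity (d : ℕ) (hd : 2 ≤ d) (α β : ℝ)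
    (hα : α ∈ Ioo (0:ℝ) 1) (hβ : (2*α - 1) / ((d:ℝ) - 1) < β)
    (bL bN : ℝ → ℝ)
    (hbLpos : ∀ r, 0 < r → 0 < bL r)
    (hbdd : ∃ K : ℝ, ∀ r, 0 < r → bL r ≤ K ∧ |bN r| ≤ K)
    (hbLdiff : ∀ r, 0 < r → DifferentiableAt ℝ bL r)
    (hbNdiff : ∀ r, 0 < r → DifferentiableAt ℝ bN r)
    (hbLlim : Tendsto (fun r : ℝ => bL r / r ^ (2*α)) (nhdsWithin 0 (Ioi 0)) (nhds 1))
    (hbNlim : Tendsto (fun r : ℝ => bN r / r ^ (2*α)) (nhdsWithin 0 (Ioi 0)) (nhds β))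
    (hbLdlim : Tendsto (fun r : ℝ => deriv bL r / r ^ (2*α - 1)) (nhdsWithin 0 (Ioi 0))
      (nhds (2*α)))
    (hbNdlim : Tendsto (fun r : ℝ => deriv bN r / r ^ (2*α - 1)) (nhdsWithin 0 (Ioi 0))
      (nhds (2*α*β)))
    (δ : ℝ) (hδ : δ ∈ Ioo (0:ℝ) (min (1 - α) (((d:ℝ) - 1) * β + 1 - 2*α)))
    (εbar : ℝ) (hεbar : 0 < εbar) :
    ∃ ε ∈ Ioo (0:ℝ) εbar, ∃ l : ℝ, 0 < l ∧ ∃ C : ℝ, 0 < C ∧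
      ∀ κ ∈ Ioo (0:ℝ) (1/2),
      ∀ f f' f'' : ℝ → ℝ → ℝ, ∀ B : ℝ,
        (∀ s, 0 < s → ∀ r, 0 ≤ r → |f s r| ≤ B) →
        ContinuousOn (fun p : ℝ × ℝ => f p.1 p.2) (Ioi 0 ×ˢ Ici 0) →
        (∀ t, 0 < t → ∀ r ∈ Ici (0:ℝ), HasDerivWithinAt (f t) (f' t r) (Ici 0) r) →
        (∀ t, 0 < t → ∀ r ∈ Ici (0:ℝ), HasDerivWithinAt (f' t) (f'' t r) (Ici 0) r) →
        (∀ t, 0 < t → ContinuousOn (f'' t) (Ici 0)) →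
        (∀ t, 0 < t → f' t 0 = 0) →
        (∀ t, 0 < t → ∀ r, 0 < r →
          HasDerivAt (fun τ => f τ r)
            ((1 - κ) * bL r * f'' t r + (1 - κ) * (((d:ℝ) - 1) / r) * bN r * f' t r
              + 2 * κ * (f'' t r + (((d:ℝ) - 1) / r) * f' t r)) t) →
        ∀ t, 0 < t →
          (∫⁻ s in Ioc (0:ℝ) t,
              (⨆ r ∈ Ioo (0:ℝ) l,
                  ENNReal.ofReal (|f s r - f s 0| / r ^ (2 - 2*α - δ))) ^ (1 - ε)) ≤
            ENNReal.ofReal (C * (1 + t) * B ^ (1 - ε)) := by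
  have hδ1 : δ < 1 - α := lt_of_lt_of_le hδ.2 (min_le_left _ _)
  have hδ2 : δ < ((d:ℝ) - 1) * β + 1 - 2*α := lt_of_lt_of_le hδ.2 (min_le_right _ _)
  have hδ01 : δ ∈ Ioo (0:ℝ) 1 := ⟨hδ.1, by linarith [hα.1]⟩
  have hγ : 0 < 2 - 2*α - δ := by linarith [hα.2]
  have hcast : (((d-1 : ℕ)) : ℝ) = (d:ℝ) - 1 := by
    rw [Nat.cast_sub (by omega)]; simp
  obtain ⟨l, c0, C0, E, hl, hl2, hc0, hC0, hE, hco⟩ := coef_ex (d-1) (by omega) α β hα bL bN hbLpos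
    hbLdiff hbNdiff hbLlim hbNlim hbLdlim δ hδ01 (by rw [hcast]; exact hδ2)
  obtain ⟨C, hC, hest⟩ := est_h α δ l c0 C0 hα hδ01 hl hl2 hc0 hC0 hγ
  have hεp : 0 < min εbar 1 / 2 := by positivity
  have hε1 : min εbar 1 / 2 < εbar := by
    have := min_le_left εbar 1
    linarith
  have hε2 : min εbar 1 / 2 < 1 := by
    have := min_le_right εbar 1
    linarith
  refine ⟨min εbar 1 / 2, ⟨hεp, hε1⟩, l, hl, 1 + C, by positivity, ?_⟩
  intro κ hκ f f' f'' B hbf hcf hf1 hf2 hf2c hf0 heq t ht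
  have hB0 : 0 ≤ B := (abs_nonneg _).trans (hbf 1 one_pos 0 le_rfl)
  rcases hB0.eq_or_lt with hB | hB
  · have hz : ∀ s, 0 < s → ∀ r, 0 ≤ r → f s r = 0 := fun s hs r hr => by
      have := hbf s hs r hr
      rw [← hB] at this
      exact abs_nonpos_iff.1 this
    have : ∫⁻ s in Ioc (0:ℝ) t, (⨆ r ∈ Ioo (0:ℝ) l,
        ENNReal.ofReal (|f s r - f s 0| / r ^ (2 - 2*α - δ))) ^ (1 - min εbar 1 / 2) ≤
        ∫⁻ s in Ioc (0:ℝ) t, 0 := by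
      apply setLIntegral_mono' measurableSet_Ioc
      intro s hs
      have h0 : (⨆ r ∈ Ioo (0:ℝ) l, ENNReal.ofReal (|f s r - f s 0| / r ^ (2 - 2*α - δ))) ≤ 0 := by
        refine iSup₂_le (fun r hr => ?_)
        rw [hz s hs.1 r hr.1.le, hz s hs.1 0 le_rfl]
        simp
      rw [le_antisymm h0 bot_le, ENNReal.zero_rpow_of_pos (by linarith)]
    refine this.trans ?_
    simp
  · obtain ⟨hcoef, hlo, hcD⟩ := hco κ hκ
    have hps : PSol (fun r => (1-κ) * bL r + 2*κ)
        (fun r => ((1-κ) * bN r + 2*κ) * (((d-1 : ℕ) : ℝ) / r)) f f' f'' B := by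
      constructor
      · exact hcf.mono (prod_mono le_rfl Ioi_subset_Ici_self)
      · exact fun s hs r hr => hbf s hs r hr.le
      · exact fun s hs r hr => (hf1 s hs r hr.le).hasDerivAt (Ici_mem_nhds hr)
      · exact fun s hs r hr => (hf2 s hs r hr.le).hasDerivAt (Ici_mem_nhds hr)
      · intro s hs r hr
        refine (heq s hs r hr).congr_deriv ?_
        rw [hcast]; ring
    have hX := hest κ hκ _ _ _ f f' f'' B (2*κ) E (d-1) hB hcoef hps (by linarith [hκ.1]) hE (by omega)
      hlo hcD
    exact pow_est hB ⟨by linarith, by linarith⟩ hC.le ht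
      (fatou_est hcf (by positivity) hX ht)
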